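/- arXiv:2104.01354 — 3 statements merged into one kernel-verified Lean document; each statement's English description precedes it below -/
import Mathlib

section
/- Let α ≤ β ≤ −1 be negative integers, let M = (M_i)_{i≥0} be real parameters with M_i ∉ {0,1}, and let F be a finite set of positive integers with {−β, …, −α−β−1} ⊆ F. If Ω_{M,F}^{α,β}(x) ≠ 0 for every x ∈ [−1,1], then α, β, M and F are admissible. -/
open Finset MeasureTheory

noncomputable section ExceptionalHahnJacobi

/-- Pochhammer symbol `(z)_m = z (z+1) ⋯ (z+m-1)`. -/
def poch (z : ℝ) (m : ℕ) : ℝ := ∏ i ∈ Finset.range m, (z + (i : ℝ))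

/-- Pochhammer symbol with integer exponent; `(z)_{-k} = 1 / ((z-1)(z-2)⋯(z-k))`. -/
def pochZ (z : ℝ) (m : ℤ) : ℝ :=
  if 0 ≤ m then poch z m.toNat else 1 / poch (z - ((-m).toNat : ℝ)) (-m).toNat

/-- Generalized binomial coefficient `C(z, k) = z(z-1)⋯(z-k+1)/k!`. -/
def genBinom (z : ℝ) (k : ℕ) : ℝ := (∏ i ∈ Finset.range k, (z - (i : ℝ))) / (k.factorial : ℝ)

/-- `λ^{a,b}(x) = x (x + a + b + 1)`. -/
def lam (a b x : ℝ) : ℝ := x * (x + a + b + 1)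

/-- Hahn polynomial `h_n^{a,b,N}(x)`. -/
def hahn (a b N : ℝ) (n : ℕ) (x : ℝ) : ℝ :=
  ∑ j ∈ Finset.range (n + 1),
    poch (-(n : ℝ)) j * poch (a + b + (n : ℝ) + 1) j * poch (-N + (j : ℝ)) (n - j) *
      poch (a + (j : ℝ) + 1) (n - j) * poch (-x) j / (j.factorial : ℝ)

/-- Dual Hahn polynomial `R_n^{a,b,N}(x)`. -/
def dualHahn (a b N : ℝ) (n : ℕ) (x : ℝ) : ℝ :=
  ∑ j ∈ Finset.range (n + 1),
    poch (-(n : ℝ)) j * poch (-N + (j : ℝ)) (n - j) * poch (a + (j : ℝ) + 1) (n - j) /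
        ((n.factorial : ℝ) * (-1 : ℝ) ^ j * (j.factorial : ℝ)) *
      ∏ i ∈ Finset.range j, (x - (i : ℝ) * (a + b + 1 + (i : ℝ)))

/-- Dual Hahn polynomial with integer degree; zero for negative degree. -/
def dualHahnZ (a b N : ℝ) (m : ℤ) (x : ℝ) : ℝ :=
  if 0 ≤ m then dualHahn a b N m.toNat x else 0

/-- Jacobi polynomial `P_n^{a,b}(x)`. -/
def jacobiP (a b : ℝ) (n : ℕ) (x : ℝ) : ℝ :=
  (2 : ℝ)⁻¹ ^ n * ∑ j ∈ Finset.range (n + 1),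
    genBinom ((n : ℝ) + a) j * genBinom ((n : ℝ) + b) (n - j) * (x - 1) ^ (n - j) * (x + 1) ^ j

/-- The function `φ_u^{α,β,N}(s,x)`, a normalized terminating ₃F₂. -/
def phiH (α β : ℤ) (N : ℝ) (u : ℕ) (s x : ℝ) : ℝ :=
  poch ((α : ℝ) + 1) (max u (-α - β - (u : ℤ) - 1).toNat) *
    poch (-N) (max u (-α - β - (u : ℤ) - 1).toNat) *
    ∑ j ∈ Finset.range (u + 1),
      poch (-(u : ℝ)) j * poch ((u : ℝ) - s + (α : ℝ) + (β : ℝ) + 1) j * poch (-x) j /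
        (poch ((α : ℝ) - s + 1) j * poch (-N) j * (j.factorial : ℝ))

/-- The polynomials `Ĥ_n^{α,β,N;M}(x)`. -/
def Hhat (α β : ℤ) (N : ℝ) (M : ℕ → ℝ) (n : ℕ) (x : ℝ) : ℝ :=
  if ⌈((-α - β : ℤ) : ℚ) / 2⌉ ≤ (n : ℤ) ∧ (n : ℤ) ≤ -α - 1 then
    deriv (fun s => phiH α β N n s x) 0 -
      deriv (fun s => phiH α β N (-α - β - (n : ℤ) - 1).toNat s x) 0
  else if -α ≤ (n : ℤ) ∧ (n : ℤ) ≤ -α - β - 1 then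
    (-1 : ℝ) ^ ((β : ℤ) + (n : ℤ)) * ((β + (n : ℤ)).toNat.factorial : ℝ) *
      (((-α - β - (n : ℤ) - 1).toNat.factorial : ℝ) * poch (-x) (-α).toNat *
          hahn (-(α : ℝ)) (β : ℝ) ((α : ℝ) + N) ((α + (n : ℤ)).toNat) (x + (α : ℝ)) +
        (((α + (n : ℤ)).toNat.factorial : ℝ)) *
            poch (-N - (α : ℝ) - (β : ℝ) - (n : ℝ) - 1) (2 * (n : ℤ) + α + β + 1).toNat /
            (M ((α + (n : ℤ)).toNat) - 1) *
          hahn (α : ℝ) (β : ℝ) N ((-α - β - (n : ℤ) - 1).toNat) x)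
  else hahn (α : ℝ) (β : ℝ) N n x

/-- The function `φ_u^{α,β}(s,x)`, a normalized terminating ₂F₁. -/
def phiJ (α β : ℤ) (u : ℕ) (s x : ℝ) : ℝ :=
  poch ((α : ℝ) + 1) (max u (-α - β - (u : ℤ) - 1).toNat) /
      ((max u.factorial (-α - β - (u : ℤ) - 1).toNat.factorial : ℕ) : ℝ) *
    ∑ j ∈ Finset.range (u + 1),
      poch (-(u : ℝ)) j * poch ((u : ℝ) - s + (α : ℝ) + (β : ℝ) + 1) j /
          (poch ((α : ℝ) - s + 1) j * (j.factorial : ℝ)) * ((1 - x) / 2) ^ j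

/-- The polynomials `P̂_n^{α,β;M}(x)`. -/
def Phat (α β : ℤ) (M : ℕ → ℝ) (n : ℕ) (x : ℝ) : ℝ :=
  if ⌈((-α - β : ℤ) : ℚ) / 2⌉ ≤ (n : ℤ) ∧ (n : ℤ) ≤ -α - 1 then
    deriv (fun s => phiJ α β n s x) 0 -
      deriv (fun s => phiJ α β (-α - β - (n : ℤ) - 1).toNat s x) 0
  else if -α ≤ (n : ℤ) ∧ (n : ℤ) ≤ -α - β - 1 then
    (-1 : ℝ) ^ ((β : ℤ) + (n : ℤ)) *
      ((((n : ℤ) + α).toNat.factorial : ℝ) * (((n : ℤ) + β).toNat.factorial : ℝ) *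
        ((-α - β - (n : ℤ) - 1).toNat.factorial : ℝ)) / (n.factorial : ℝ) *
      ((M ((α + (n : ℤ)).toNat) - 1)⁻¹ * jacobiP (α : ℝ) (β : ℝ) ((-α - β - (n : ℤ) - 1).toNat) x +
        ((1 - x) / 2) ^ (-α).toNat * jacobiP (-(α : ℝ)) (β : ℝ) ((α + (n : ℤ)).toNat) x)
  else jacobiP (α : ℝ) (β : ℝ) n x

/-- `u_F = Σ_{f ∈ F} f - C(n_F + 1, 2)`. -/
def uF (F : Finset ℕ) : ℕ := (∑ f ∈ F, f) - (F.card + 1).choose 2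

/-- `n ∈ σ_F = {u_F, u_F + 1, …} \ {u_F + f : f ∈ F}`. -/
def inSigma (F : Finset ℕ) (n : ℕ) : Prop := uF F ≤ n ∧ n - uF F ∉ F

/-- The `i`-th element of `F` in increasing order. -/
def elemOf (F : Finset ℕ) (i : Fin F.card) : ℕ := ((F.orderIsoOfFin rfl i : {x // x ∈ F}) : ℕ)

/-- The `i`-th element of a finite set of integers, in increasing order. -/
def elemOfZ (S : Finset ℤ) (i : Fin S.card) : ℤ := ((S.orderIsoOfFin rfl i : {x // x ∈ S}) : ℤ)

/-- Exceptional Hahn polynomial `h_n^{α,β,N;M,F}(x)`. -/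
def exHahn (α β : ℤ) (N : ℝ) (M : ℕ → ℝ) (F : Finset ℕ) (n : ℕ) (x : ℝ) : ℝ :=
  Matrix.det (Matrix.of fun i j : Fin (F.card + 1) =>
    Fin.cases (Hhat α β N M (n - uF F) (x + ((j : ℕ) : ℝ)))
      (fun k => Hhat α β N M (elemOf F k) (x + ((j : ℕ) : ℝ))) i)

/-- The polynomial `Ω_{M,F}^{α,β,N}(x)`. -/
def OmegaH (α β : ℤ) (N : ℝ) (M : ℕ → ℝ) (F : Finset ℕ) (x : ℝ) : ℝ :=
  Matrix.det (Matrix.of fun i j : Fin F.card =>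
    Hhat α β N M (elemOf F i) (x + ((j : ℕ) : ℝ)))

/-- The polynomial `Λ_{M,F}^{α,β,N}(x)` (columns `j ∈ {1,…,n_F+1}`, `j ≠ n_F`). -/
def LambdaH (α β : ℤ) (N : ℝ) (M : ℕ → ℝ) (F : Finset ℕ) (x : ℝ) : ℝ :=
  Matrix.det (Matrix.of fun i j : Fin F.card =>
    Hhat α β N M (elemOf F i)
      (x + ((if (j : ℕ) = F.card - 1 then F.card else (j : ℕ) : ℕ) : ℝ)))

/-- Exceptional Jacobi polynomial `P_n^{α,β;M,F}(x)`. -/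
def exJacobi (α β : ℤ) (M : ℕ → ℝ) (F : Finset ℕ) (n : ℕ) (x : ℝ) : ℝ :=
  Matrix.det (Matrix.of fun i j : Fin (F.card + 1) =>
    Fin.cases (iteratedDeriv (j : ℕ) (Phat α β M (n - uF F)) x)
      (fun k => iteratedDeriv (j : ℕ) (Phat α β M (elemOf F k)) x) i)

/-- The polynomial `Ω_{M,F}^{α,β}(x)`. -/
def OmegaJ (α β : ℤ) (M : ℕ → ℝ) (F : Finset ℕ) (x : ℝ) : ℝ :=
  Matrix.det (Matrix.of fun i j : Fin F.card =>
    iteratedDeriv (j : ℕ) (Phat α β M (elemOf F i)) x)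

/-- `F_ext = F \ {-β, …, -α-β-1}`. -/
def Fext (α β : ℤ) (F : Finset ℕ) : Finset ℕ :=
  F.filter fun f : ℕ => ((f : ℤ) < -β ∨ -α - β ≤ (f : ℤ))

/-- Admissibility of the data `α, β, M, F`. -/
def IsAdmissible (α β : ℤ) (M : ℕ → ℝ) (F : Finset ℕ) : Prop :=
  (∀ i : ℕ, (i : ℤ) ≤ -β - 1 → (∀ f ∈ F, (i : ℤ) ≠ -β - (f : ℤ) - 1) →
      Real.sign (M i) =
        Real.sign (∏ f ∈ Fext α β F, (((i : ℝ) - (f : ℝ) - (α : ℝ)) * ((i : ℝ) + (f : ℝ) + (β : ℝ) + 1)))) ∧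
  (∀ x : ℤ, 0 ≤ x → (∃ f ∈ F, x ≤ (f : ℤ) + α + β) →
      0 ≤ ∏ f ∈ F.filter (fun f : ℕ => -α - β ≤ (f : ℤ)), (x - (f : ℤ) - α - β))

/-- `U_{F-} = {f + α + β : f ∈ F, 1 ≤ f ≤ -β-1}`. -/
def UFm (α β : ℤ) (F : Finset ℕ) : Finset ℤ :=
  (F.filter fun f : ℕ => (1 ≤ f ∧ (f : ℤ) ≤ -β - 1)).image fun f : ℕ => (f : ℤ) + α + β

/-- `U_{F+} = {f + α + β : f ∈ F, f ≥ -α-β}`. -/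
def UFp (α β : ℤ) (F : Finset ℕ) : Finset ℤ :=
  (F.filter fun f : ℕ => -α - β ≤ (f : ℤ)).image fun f : ℕ => (f : ℤ) + α + β

/-- `U_F = U_{F-} ∪ U_{F+}`. -/
def UF (α β : ℤ) (F : Finset ℕ) : Finset ℤ := UFm α β F ∪ UFp α β F

/-- The weight of the measure `ω_{α,β,N}^{M,F}` at the point `x`. -/
def wH (α β : ℤ) (N : ℕ) (M : ℕ → ℝ) (F : Finset ℕ) (x : ℕ) : ℝ :=
  genBinom ((α : ℝ) + (F.card : ℝ) + (x : ℝ)) x *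
      genBinom ((β : ℝ) + (N : ℝ) - (x : ℝ)) (N - F.card - x) /
    (OmegaH α β (N : ℝ) M F (x : ℝ) * OmegaH α β (N : ℝ) M F ((x : ℝ) + 1))

/-- The weight `ω_{α,β;M,F}(x)` on `[-1,1]`. -/
def wJ (α β : ℤ) (M : ℕ → ℝ) (F : Finset ℕ) (x : ℝ) : ℝ :=
  (1 - x) ^ (α + (F.card : ℤ)) * (1 + x) ^ (β + (F.card : ℤ)) / (OmegaJ α β M F x) ^ 2

/-- The measure on `[-1,1]` with density `ω_{α,β;M,F}`. -/
def jacobiMeasure (α β : ℤ) (M : ℕ → ℝ) (F : Finset ℕ) : Measure ℝ :=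
  (volume.restrict (Set.Icc (-1 : ℝ) 1)).withDensity fun x => ENNReal.ofReal (wJ α β M F x)

/-- Mass of the dual Hahn measure `ρ_{b,a,N̂}` at `λ^{a,b}(x)`. -/
def rhoMass (a b Nh : ℤ) (x : ℕ) : ℝ :=
  (2 * (x : ℝ) + (a : ℝ) + (b : ℝ) + 1) * poch ((b : ℝ) + 1) x * poch (-(Nh : ℝ)) x *
      (Nh.toNat.factorial : ℝ) /
    ((-1 : ℝ) ^ x * poch ((x : ℝ) + (a : ℝ) + (b : ℝ) + 1) (Nh + 1).toNat *
      poch ((a : ℝ) + 1) x * (x.factorial : ℝ))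

/-- Mass of the measure `ν_{a,b,N̂}^{M}` at `λ^{a,b}(s)`. -/
def nuMass (a b Nh : ℤ) (M : ℕ → ℝ) (s : ℤ) : ℝ :=
  if -b ≤ s ∧ s ≤ -1 then
    (2 * (s : ℝ) + (a : ℝ) + (b : ℝ) + 1) * poch ((Nh : ℝ) + 1 - (s : ℝ)) (s + b).toNat /
        poch ((Nh : ℝ) + (b : ℝ) + 1) (s + a + 1).toNat * M ((s + b).toNat)
  else if 0 ≤ s ∧ s ≤ Nh then
    poch ((Nh : ℝ) + 1) b.toNat ^ 2 / poch ((b : ℝ) + 1) (a - b).toNat * rhoMass a b Nh s.toNat /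
      ∏ i ∈ Finset.range b.toNat, (((s : ℝ) + (a : ℝ) + (i : ℝ) + 1) * ((s : ℝ) + (b : ℝ) - (i : ℝ)))
  else 0

/-- `ζ_v` (defined for any integer `v` via `pochZ`). -/
def zetaH (α β : ℤ) (N : ℝ) (v : ℤ) : ℝ :=
  pochZ (-N - (α : ℝ) - (β : ℝ)) v * poch ((v : ℝ) + 1) (-α).toNat *
    ((v - α - β).toNat.factorial : ℝ)

/-- `θ_v^M`. -/
def thetaM (β : ℤ) (M : ℕ → ℝ) (v : ℕ) : ℝ :=
  if (v : ℤ) ≤ -β - 1 then 1 - M ((-β - 1 - (v : ℤ)).toNat) else 1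

/-- `τ_v = ∏_{u ∈ U_F} (λ^{a,b}(v+α+β) - λ^{a,b}(u))` with `a = -α`, `b = -β`. -/
def tauH (α β : ℤ) (F : Finset ℕ) (v : ℕ) : ℝ :=
  ∏ u ∈ UF α β F,
    (lam ((-α : ℤ) : ℝ) ((-β : ℤ) : ℝ) ((v : ℝ) + (α : ℝ) + (β : ℝ)) -
      lam ((-α : ℤ) : ℝ) ((-β : ℤ) : ℝ) ((u : ℤ) : ℝ))

/-- `ξ_n`. -/
def xiH (α β : ℤ) (N : ℝ) (F : Finset ℕ) (n : ℕ) : ℝ :=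
  pochZ (N - (n : ℝ) + 1) ((n : ℤ) + α + β) ^ (α + (F.card : ℤ) + 1) *
    ∏ j ∈ Finset.range (F.card + 1), poch (N - (n : ℝ) - (j : ℝ) + 1) j

/-- `κ_M`. -/
def kappaM (α β : ℤ) (N : ℝ) (M : ℕ → ℝ) (F : Finset ℕ) : ℝ :=
  (∏ u ∈ UFm α β F, (1 - M ((-u + α - 1).toNat))) * ∏ u ∈ UF α β F, zetaH α β N u

/-- Entry `(i,j)` (0-based) of the determinant defining `q_n^{a,b,N̂;M,U_F}`. -/
def qEntry (α β : ℤ) (N : ℝ) (M : ℕ → ℝ) (F : Finset ℕ) (n : ℕ) (x : ℝ) (i j : ℕ) : ℝ :=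
  if i = 0 then
    (-1 : ℝ) ^ j * dualHahnZ (((-α).toNat : ℝ)) (((-β).toNat : ℝ)) (N + (α : ℝ) + (β : ℝ))
      ((n : ℤ) - (-α).toNat + j) x
  else if h1 : i - 1 < (UFm α β F).card then
    (-1 : ℝ) ^ j * dualHahnZ (((-α).toNat : ℝ)) (((-β).toNat : ℝ)) (N + (α : ℝ) + (β : ℝ))
      ((n : ℤ) - (-α).toNat + j)
      (lam (((-α).toNat : ℝ)) (((-β).toNat : ℝ)) ((elemOfZ (UFm α β F) ⟨i - 1, h1⟩ : ℤ) : ℝ))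
  else if i - 1 - (UFm α β F).card < (-α).toNat then
    poch (((-α).toNat : ℝ) + ((-β).toNat : ℝ) + (N + (α : ℝ) + (β : ℝ)) - (n : ℝ) - (j : ℝ) + 1) j *
      Hhat α β (-2 - (N + (α : ℝ) + (β : ℝ))) M ((-β).toNat + (i - 1 - (UFm α β F).card))
        (-(n : ℝ) + ((-α).toNat : ℝ) - (j : ℝ) - 1)
  else if h3 : i - 1 - (UFm α β F).card - (-α).toNat < (UFp α β F).card then
    (-1 : ℝ) ^ j * dualHahnZ (((-α).toNat : ℝ)) (((-β).toNat : ℝ)) (N + (α : ℝ) + (β : ℝ))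
      ((n : ℤ) - (-α).toNat + j)
      (lam (((-α).toNat : ℝ)) (((-β).toNat : ℝ))
        ((elemOfZ (UFp α β F) ⟨i - 1 - (UFm α β F).card - (-α).toNat, h3⟩ : ℤ) : ℝ))
  else 0

/-- The Krall dual Hahn orthogonal polynomial `q_n^{a,b,N̂;M,U_F}(x)`. -/
def qKrall (α β : ℤ) (N : ℝ) (M : ℕ → ℝ) (F : Finset ℕ) (n : ℕ) (x : ℝ) : ℝ :=
  Matrix.det (Matrix.of fun i j : Fin (1 + (UFm α β F).card + (-α).toNat + (UFp α β F).card) =>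
      qEntry α β N M F n x (i : ℕ) (j : ℕ)) /
    ((-1 : ℝ) ^ ((n + (-α).toNat + (-β).toNat) * ((UF α β F).card + 1) +
        ((-α).toNat + (-β).toNat).choose 2 + ((-β).toNat).choose 2 + (-α).toNat) *
      ∏ u ∈ UF α β F, (x - lam (((-α).toNat : ℝ)) (((-β).toNat : ℝ)) ((u : ℤ) : ℝ)))

/-- Row used in the renormalized determinant `P̄`: for `-α ≤ g ≤ -α-β-1` it is
`(M_{α+g} - 1) · P̂_g` written without the division by `M_{α+g} - 1`. -/
def PhatBarRow (α β : ℤ) (M : ℕ → ℝ) (g : ℕ) (x : ℝ) : ℝ :=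
  if -α ≤ (g : ℤ) ∧ (g : ℤ) ≤ -α - β - 1 then
    (-1 : ℝ) ^ ((β : ℤ) + (g : ℤ)) *
      ((((g : ℤ) + α).toNat.factorial : ℝ) * (((g : ℤ) + β).toNat.factorial : ℝ) *
        ((-α - β - (g : ℤ) - 1).toNat.factorial : ℝ)) / (g.factorial : ℝ) *
      (jacobiP (α : ℝ) (β : ℝ) ((-α - β - (g : ℤ) - 1).toNat) x +
        (M ((α + (g : ℤ)).toNat) - 1) * ((1 - x) / 2) ^ (-α).toNat *
          jacobiP (-(α : ℝ)) (β : ℝ) ((α + (g : ℤ)).toNat) x)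
  else Phat α β M g x

/-- The renormalized exceptional Jacobi polynomial
`P̄_n^{α,β;M,F} = (∏_{i=0}^{-β-1} (M_i - 1)) · P_n^{α,β;M,F}`
(written so that the factors `M_i - 1` are distributed into the corresponding rows of the
determinant; this agrees with the product formula whenever all `M_i ≠ 1`). -/
def Pbar (α β : ℤ) (M : ℕ → ℝ) (F : Finset ℕ) (n : ℕ) (x : ℝ) : ℝ :=
  (∏ i ∈ (Finset.range (-β).toNat).filter
      (fun i : ℕ => (((i : ℤ) - α).toNat ∉ F ∧ ((i : ℤ) - α).toNat ≠ n - uF F)), (M i - 1)) *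
    Matrix.det (Matrix.of fun r j : Fin (F.card + 1) =>
      Fin.cases (iteratedDeriv (j : ℕ) (PhatBarRow α β M (n - uF F)) x)
        (fun k => iteratedDeriv (j : ℕ) (PhatBarRow α β M (elemOf F k)) x) r)

end ExceptionalHahnJacobi

open Finset MeasureTheory

namespace EHJ
open Polynomial
noncomputable section

/-- Wronskian determinant with respect to a map `d`. -/
def Wr {R : Type*} [CommRing R] (d : R → R) {n : ℕ} (u : Fin n → R) : R :=
  Matrix.det (Matrix.of fun i j : Fin n => d^[(j : ℕ)] (u i))

section Abstract
variable {K : Type*} [Field K] [Algebra ℝ K] (δ : Derivation ℝ K K)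

lemma dmul (x y : K) : δ (x * y) = x * δ y + y * δ x := by
  rw [Derivation.leibniz, smul_eq_mul, smul_eq_mul]

lemma rsmul (r : ℝ) (x : K) : r • x = algebraMap ℝ K r * x := Algebra.smul_def r x

lemma ddiv (x y : K) (hy : y ≠ 0) : δ (x / y) = (y * δ x - x * δ y) / y ^ 2 := by
  have h : δ (x / y * y) = δ x := by rw [div_mul_cancel₀ _ hy]
  rw [dmul] at h
  field_simp at h ⊢
  linear_combination h

lemma iter_mul (c : K) (j : ℕ) :
    ∃ r : ℕ → K, ∀ y, δ^[j] (c * y) = ∑ l ∈ range (j + 1), r l * δ^[l] y := by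
  induction j with
  | zero => exact ⟨fun _ => c, fun y => by simp⟩
  | succ j ih =>
    obtain ⟨r, hr⟩ := ih
    refine ⟨fun l => (if l < j + 1 then δ (r l) else 0) + (if l = 0 then 0 else r (l - 1)), fun y => ?_⟩
    rw [Function.iterate_succ_apply', hr, map_sum]
    simp only [Derivation.leibniz, add_mul, sum_add_distrib]
    rw [add_comm]
    congr 1
    · rw [sum_range_succ _ (j + 1)]
      simp only [lt_irrefl, if_false, zero_mul, add_zero]
      refine sum_congr rfl fun l hl => ?_
      rw [if_pos (mem_range.1 hl), smul_eq_mul, mul_comm]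
    · rw [sum_range_succ' _ (j + 1)]
      simp [Function.iterate_succ_apply']

lemma iter_zero (j : ℕ) : δ^[j] (0 : K) = 0 := by
  induction j with
  | zero => rfl
  | succ j ih => rw [Function.iterate_succ_apply', ih, map_zero]

/-- The first order operator. -/
def Lop (c y : K) : K := δ y - c * y

lemma iter_sub (j : ℕ) (x y : K) : δ^[j] (x - y) = δ^[j] x - δ^[j] y := by
  induction j with
  | zero => rfl
  | succ j ih => simp only [Function.iterate_succ_apply', ih, map_sub]

lemma Wr_step {n : ℕ} (u : Fin (n + 1) → K) (c : K) (hc : Lop δ c (u 0) = 0) :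
    Wr δ u = u 0 * Wr δ (fun i : Fin n => Lop δ c (u i.succ)) := by
  choose r hr using iter_mul δ c
  let U : ℕ → ℕ → K := fun l j => match j with
    | 0 => if l = 0 then 1 else 0
    | j + 1 => (if l = j + 1 then 1 else 0) - (if l < j + 1 then r j l else 0)
  let UM : Matrix (Fin (n + 1)) (Fin (n + 1)) K := Matrix.of fun l j => U l j
  let B : Matrix (Fin (n + 1)) (Fin (n + 1)) K :=
    Matrix.of fun i j => Fin.cases (u i) (fun j' : Fin n => δ^[(j' : ℕ)] (Lop δ c (u i))) j
  have hdU : UM.det = 1 := by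
    rw [Matrix.det_of_isUpperTriangular]
    · refine prod_eq_one fun i _ => ?_
      simp only [UM, Matrix.of_apply]
      rcases i with ⟨i, hi⟩
      cases i <;> simp [U]
    · intro i j hij
      simp only [id] at hij
      simp only [UM, Matrix.of_apply]
      rcases i with ⟨i, hi⟩
      rcases j with ⟨j, hj⟩
      have : j < i := hij
      cases j with
      | zero => simp [U]; omega
      | succ j => simp only [U]; rw [if_neg (by omega), if_neg (by omega)]; simp
  have hB : B = (Matrix.of fun i j : Fin (n + 1) => δ^[(j : ℕ)] (u i)) * UM := by
    ext i j
    rw [Matrix.mul_apply]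
    simp only [UM, Matrix.of_apply]
    rw [Fin.sum_univ_eq_sum_range (fun l => δ^[l] (u i) * U l j)]
    refine Fin.cases ?_ (fun j => ?_) j
    · simp [B, U]
    · simp only [B, U, Matrix.of_apply, Fin.cases_succ, Fin.val_succ, mul_sub, sum_sub_distrib]
      rw [Lop, iter_sub, hr]
      congr 1
      · simp only [mul_ite, mul_one, mul_zero]
        rw [sum_ite_eq' (range (n + 1)) ((j : ℕ) + 1), if_pos (by simp), Function.iterate_succ_apply]
      · simp only [mul_ite, mul_zero]
        rw [← sum_filter]
        have : filter (fun x => x < (j : ℕ) + 1) (range (n + 1)) = range (j + 1) := by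
          ext x; simp; omega
        rw [this]
        exact sum_congr rfl fun l _ => mul_comm _ _
  have h1 : Wr δ u = B.det := by rw [hB, Matrix.det_mul, hdU, mul_one]; rfl
  rw [h1, Matrix.det_succ_row_zero, Fin.sum_univ_succ]
  rw [sum_eq_zero]
  · simp only [B, Wr]
    simp
    left
    congr 1
  · intro j _
    simp [B, hc, iter_zero]

lemma Wr_zero_of {n : ℕ} (u : Fin (n + 1) → K) (h : u 0 = 0) : Wr δ u = 0 := by
  apply Matrix.det_eq_zero_of_row_eq_zero 0
  intro j
  simp [h, iter_zero]

lemma Lop_self {x : K} (hx : x ≠ 0) : Lop δ (δ x / x) x = 0 := by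
  simp [Lop, hx]

lemma Wr_step' {n : ℕ} (u : Fin (n + 1) → K) (h : u 0 ≠ 0) :
    Wr δ u = u 0 * Wr δ (fun i : Fin n => Lop δ (δ (u 0) / u 0) (u i.succ)) :=
  Wr_step δ u _ (Lop_self δ h)

lemma snoc_tail {n : ℕ} (u : Fin (n + 1) → K) (y : K) (f : K → K) :
    (fun i : Fin (n + 1) => f ((Fin.snoc u y : Fin (n + 2) → K) i.succ)) =
      (Fin.snoc (fun i : Fin n => f (u i.succ)) (f y) : Fin (n + 1) → K) := by
  ext i
  refine Fin.lastCases ?_ (fun i => ?_) i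
  · rw [Fin.succ_last, Fin.snoc_last, Fin.snoc_last]
  · rw [Fin.succ_castSucc, Fin.snoc_castSucc, Fin.snoc_castSucc]

lemma Wr_snoc_step {n : ℕ} (u : Fin (n + 1) → K) (y : K) (h : u 0 ≠ 0) :
    Wr δ (Fin.snoc u y : Fin (n + 2) → K) = u 0 * Wr δ (Fin.snoc
      (fun i : Fin n => Lop δ (δ (u 0) / u 0) (u i.succ)) (Lop δ (δ (u 0) / u 0) y) : Fin (n + 1) → K) := by
  have h0 : (Fin.snoc u y : Fin (n + 2) → K) 0 = u 0 := by
    rw [← Fin.castSucc_zero, Fin.snoc_castSucc]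
  rw [Wr_step' δ _ (by rw [h0]; exact h), h0, snoc_tail]

lemma Wr_ne_of_snoc : ∀ {n : ℕ} (u : Fin n → K) (y : K),
    Wr δ (Fin.snoc u y : Fin (n + 1) → K) ≠ 0 → Wr δ u ≠ 0
  | 0, u, y, _ => by simp [Wr]
  | n + 1, u, y, h => by
    have h0 : (Fin.snoc u y : Fin (n + 2) → K) 0 = u 0 := by
      rw [← Fin.castSucc_zero, Fin.snoc_castSucc]
    have hu : u 0 ≠ 0 := fun h1 => h (Wr_zero_of δ _ (h0.trans h1))
    rw [Wr_snoc_step δ u y hu] at h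
    rw [Wr_step' δ u hu]
    exact mul_ne_zero hu (Wr_ne_of_snoc _ _ (right_ne_zero_of_mul h))

/-- Differential operators. -/
inductive IsDO : (K → K) → Prop
  | mul (r : K) : IsDO (fun y => r * y)
  | der : IsDO (fun y => δ y)
  | add {R S : K → K} : IsDO R → IsDO S → IsDO (fun y => R y + S y)
  | comp {R S : K → K} : IsDO R → IsDO S → IsDO (fun y => R (S y))

lemma IsDO_Lop (c : K) : IsDO δ (Lop δ c) := by
  have := (IsDO.der (δ := δ)).add (IsDO.mul (δ := δ) (-c))
  convert this using 2
  simp [Lop, sub_eq_add_neg]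

/-- Second order operator. -/
def Dop (p g V y : K) : K := p * δ (δ y) + g * δ y + V * y

/-- `Lop` as a linear map. -/
def LopL (c : K) : K →ₗ[ℝ] K where
  toFun := Lop δ c
  map_add' x y := by simp [Lop]; ring
  map_smul' r x := by simp [Lop, smul_sub]

lemma factor {p g V x : K} {m : ℝ} (hx : x ≠ 0) (h : Dop δ p g V x = m • x) (y : K) :
    p * δ (Lop δ (δ x / x) y) + (g + (δ x / x) * p) * Lop δ (δ x / x) y
      = Dop δ p g V y - m • y := by
  have hV : V = m • 1 - (p * δ (δ x) + g * δ x) / x := by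
    rw [Dop, rsmul] at h
    rw [rsmul]
    field_simp
    linear_combination h
  subst hV
  simp only [Lop, Dop, rsmul, map_sub, dmul, ddiv δ _ _ hx]
  field_simp
  ring

/-- New potential. -/
def Vnew (p g c : K) (m : ℝ) : K := algebraMap ℝ K m + (δ (g + c * p) - c * (g + c * p))

lemma intertwine {p g V x : K} {m : ℝ} (hx : x ≠ 0) (h : Dop δ p g V x = m • x) (y : K) :
    Lop δ (δ x / x) (Dop δ p g V y) =
      Dop δ p (g + δ p) (Vnew δ p g (δ x / x) m) (Lop δ (δ x / x) y) := by
  have h1 := factor δ hx h y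
  have h2 : Dop δ p g V y = (p * δ (Lop δ (δ x / x) y) + (g + (δ x / x) * p) * Lop δ (δ x / x) y) + m • y := by
    rw [h1]; ring
  rw [h2]
  generalize hc : δ x / x = c
  generalize hL : Lop δ c y = L
  have hL' : δ y = L + c * y := by rw [← hL, Lop]; ring
  simp only [Lop, Dop, Vnew, rsmul, map_add, dmul, Derivation.map_algebraMap, hL']
  ring

theorem chain (p : K) : ∀ (n : ℕ) (u : Fin n → K) (μ : Fin n → ℝ) (g V w : K),
    δ (p * w) = g * w →
    (∀ i, Dop δ p g V (u i) = μ i • u i ∨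
      ∃ j < i, ∃ d : ℝ, Dop δ p g V (u i) = μ i • u i + d • u j) →
    Wr δ u ≠ 0 →
    ∃ (T : K →ₗ[ℝ] K) (V' : K),
      (∀ y, T (Dop δ p g V y) = Dop δ p (g + n * δ p) V' (T y)) ∧
      (∀ y, Wr δ (Fin.snoc u y : Fin (n + 1) → K) = Wr δ u * T y) ∧
      (∀ z m, Dop δ p g V z = m • z → ∃ R : K → K, IsDO δ R ∧
        ∀ y, p ^ n * w * T y * T z = (∏ i, (μ i - m)) • (w * y * z) + δ (R y)) ∧
      (∀ y z (m : ℝ), Dop δ p g V y = m • y → Dop δ p g V z = m • z →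
        p * (p ^ n * w) * (T y * δ (T z) - δ (T y) * T z) =
          (∏ i, (μ i - m)) • (p * w * (y * δ z - δ y * z)))
  | 0, u, μ, g, V, w, hw, hu, hW => by
    refine ⟨LinearMap.id, V, fun y => by simp, fun y => ?_, fun z m hz => ⟨fun y => 0 * y, IsDO.mul 0, fun y => by simp⟩,
      fun y z m _ _ => by simp⟩
    simp [Wr, Fin.snoc]
  | n + 1, u, μ, g, V, w, hw, hu, hW => by
    have hx : u 0 ≠ 0 := fun h1 => hW (Wr_zero_of δ _ h1)
    have h0 : Dop δ p g V (u 0) = μ 0 • u 0 := by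
      rcases hu 0 with h | ⟨j, hj, _⟩
      · exact h
      · exact absurd hj (by simp)
    have hstep := Wr_step' δ u hx
    have hsn := fun y => Wr_snoc_step δ u y hx
    have hint := intertwine δ hx h0
    have hfac := factor δ hx h0
    have hLx := Lop_self δ hx
    have hlin : ∀ (r : ℝ) y, Lop δ (δ (u 0) / u 0) (r • y) = r • Lop δ (δ (u 0) / u 0) y :=
      fun r y => (LopL δ _).map_smul r y
    have hladd : ∀ y z, Lop δ (δ (u 0) / u 0) (y + z) = Lop δ (δ (u 0) / u 0) y + Lop δ (δ (u 0) / u 0) z :=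
      fun y z => (LopL δ _).map_add y z
    set c := δ (u 0) / u 0 with hc
    obtain ⟨T, V', ha, hb, hcc, hd⟩ := chain p n (fun i => Lop δ c (u i.succ)) (fun i => μ i.succ)
      (g + δ p) (Vnew δ p g c (μ 0)) (p * w)
      (by rw [Derivation.leibniz, hw, smul_eq_mul, smul_eq_mul]; ring)
      (by
        intro i
        rcases hu i.succ with h | ⟨j, hj, d, h⟩
        · left; rw [← hint, h, hlin]
        · revert hj h
          refine Fin.cases (fun _ h => ?_) (fun j hj h => ?_) j
          · left; rw [← hint, h, hladd, hlin, hlin, hLx]; simp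
          · right
            exact ⟨j, by simpa using hj, d, by rw [← hint, h, hladd, hlin, hlin]⟩)
      (by rw [hstep] at hW; exact right_ne_zero_of_mul hW)
    refine ⟨T.comp (LopL δ c), V', ?_, ?_, ?_, ?_⟩
    · intro y
      change T (Lop δ c _) = Dop δ p _ V' (T (Lop δ c y))
      rw [hint, ha]
      congr 1
      push_cast; ring
    · intro y
      rw [hsn, hb, hstep]
      change _ = _ * T (Lop δ c y)
      ring
    · intro z m hz
      have hz' : Dop δ p (g + δ p) (Vnew δ p g c (μ 0)) (Lop δ c z) = m • Lop δ c z := by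
        rw [← hint, hz, hlin]
      obtain ⟨R, hR, hRe⟩ := hcc _ m hz'
      refine ⟨fun y => R (Lop δ c y) + ((∏ i : Fin n, (μ i.succ - m)) • (p * w * Lop δ c z)) * y,
        (hR.comp (IsDO_Lop δ c)).add (IsDO.mul _), fun y => ?_⟩
      have e1 := hRe (Lop δ c y)
      have e2 := hfac z
      rw [hz] at e2
      change p ^ (n + 1) * w * T (Lop δ c y) * T (Lop δ c z) = _
      rw [Fin.prod_univ_succ]
      have e3 : p ^ (n + 1) * w * T (Lop δ c y) * T (Lop δ c z) =
        p ^ n * (p * w) * T (Lop δ c y) * T (Lop δ c z) := by ring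
      rw [e3, e1]
      beta_reduce
      generalize T (Lop δ c y) = Y
      generalize (∏ i : Fin n, (μ i.succ - m)) = P
      generalize hLz : Lop δ c z = Lz at *
      have hLy : Lop δ c y = δ y - c * y := rfl
      generalize Lop δ c y = Ly at *
      have hy : δ y = Ly + c * y := by rw [hLy]; ring
      have hw' : δ p * w + p * δ w = g * w := by
        rw [← hw, Derivation.leibniz, smul_eq_mul, smul_eq_mul]; ring
      simp only [rsmul, map_add, map_sub, map_mul, dmul, Derivation.map_algebraMap, hy] at e2 ⊢
      linear_combination (-(algebraMap ℝ K P) * Lz * y) * hw' - (algebraMap ℝ K P) * w * y * e2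
    · intro y z m hy hz
      have hy' : Dop δ p (g + δ p) (Vnew δ p g c (μ 0)) (Lop δ c y) = m • Lop δ c y := by
        rw [← hint, hy, hlin]
      have hz' : Dop δ p (g + δ p) (Vnew δ p g c (μ 0)) (Lop δ c z) = m • Lop δ c z := by
        rw [← hint, hz, hlin]
      have e := hd _ _ m hy' hz'
      have ey := hfac y
      have ez := hfac z
      rw [hy] at ey
      rw [hz] at ez
      change p * (p ^ (n + 1) * w) * (T (Lop δ c y) * δ (T (Lop δ c z)) - δ (T (Lop δ c y)) * T (Lop δ c z)) = _
      rw [Fin.prod_univ_succ, mul_comm (μ 0 - m), mul_smul]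
      have e3 : p * (p ^ (n + 1) * w) * (T (Lop δ c y) * δ (T (Lop δ c z)) - δ (T (Lop δ c y)) * T (Lop δ c z))
        = p * (p ^ n * (p * w)) * (T (Lop δ c y) * δ (T (Lop δ c z)) - δ (T (Lop δ c y)) * T (Lop δ c z)) := by ring
      rw [e3, e]
      congr 1
      have hLy : Lop δ c y = δ y - c * y := rfl
      have hLz : Lop δ c z = δ z - c * z := rfl
      generalize Lop δ c y = Ly at *
      generalize Lop δ c z = Lz at *
      have hy2 : δ y = Ly + c * y := by rw [hLy]; ring
      have hz2 : δ z = Lz + c * z := by rw [hLz]; ring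
      simp only [rsmul, map_sub, hy2, hz2] at ey ez ⊢
      linear_combination p * w * Ly * ez - p * w * Lz * ey

end Abstract
end
end EHJ

open Finset MeasureTheory

namespace EHJ
open Polynomial
noncomputable section

/-- Rational functions. -/
abbrev KK := FractionRing ℝ[X]

/-- Embedding. -/
abbrev ι : ℝ[X] →+* KK := algebraMap ℝ[X] KK

lemma ι_inj {p q : ℝ[X]} : ι p = ι q ↔ p = q :=
  (IsFractionRing.injective ℝ[X] KK).eq_iff

lemma ι_eq_zero {p : ℝ[X]} : ι p = 0 ↔ p = 0 := by
  rw [← map_zero ι, ι_inj]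

lemma ι_C (r : ℝ) : ι (C r) = algebraMap ℝ KK r := by
  rw [IsScalarTower.algebraMap_apply ℝ ℝ[X] KK]; rfl

/-- lift to dual numbers. -/
def psi : ℝ[X] →ₐ[ℝ] TrivSqZeroExt KK KK :=
  aeval (TrivSqZeroExt.inl (ι X) + TrivSqZeroExt.inr 1)

lemma psi_eq (q : ℝ[X]) : psi q = TrivSqZeroExt.inl (ι q) + TrivSqZeroExt.inr (ι (derivative q)) := by
  induction q using Polynomial.induction_on' with
  | add p q hp hq =>
    rw [map_add, hp, hq]
    ext
    · simp
    · simp only [TrivSqZeroExt.snd_add, TrivSqZeroExt.snd_inl, TrivSqZeroExt.snd_inr, map_add, zero_add]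
  | monomial n a =>
    have hX : psi X = TrivSqZeroExt.inl (ι X) + TrivSqZeroExt.inr 1 := by simp [psi]
    rw [← C_mul_X_pow_eq_monomial, map_mul, map_pow, hX]
    have hC : psi (C a) = TrivSqZeroExt.inl (ι (C a)) := by
      rw [ι_C]; simp only [psi, aeval_C]; rfl
    rw [hC]
    ext
    · simp
    · rw [derivative_C_mul, derivative_X_pow]
      simp only [TrivSqZeroExt.snd_add, TrivSqZeroExt.snd_inl, TrivSqZeroExt.snd_inr, map_mul, zero_add,
        TrivSqZeroExt.snd_mul, TrivSqZeroExt.snd_pow, TrivSqZeroExt.fst_add, TrivSqZeroExt.fst_inl,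
        TrivSqZeroExt.fst_inr, add_zero, smul_zero, smul_eq_mul, mul_one, map_pow, map_natCast, nsmul_eq_mul]
      simp

lemma psi_unit (y : nonZeroDivisors ℝ[X]) : IsUnit ((psi : ℝ[X] →+* TrivSqZeroExt KK KK) y) := by
  rw [TrivSqZeroExt.isUnit_iff_isUnit_fst]
  have : ((psi : ℝ[X] →+* TrivSqZeroExt KK KK) (y : ℝ[X])).fst = ι y := by
    simp [psi_eq]
  rw [this]
  exact IsLocalization.map_units KK y

/-- Lift of psi. -/
def Psi : KK →+* TrivSqZeroExt KK KK :=
  IsLocalization.lift (M := nonZeroDivisors ℝ[X]) (g := (psi : ℝ[X] →+* TrivSqZeroExt KK KK)) psi_unit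

lemma Psi_ι (q : ℝ[X]) : Psi (ι q) = psi q := by
  rw [Psi, ι, IsLocalization.lift_eq]; rfl

lemma Psi_fst (f : KK) : (Psi f).fst = f := by
  have h : ((TrivSqZeroExt.fstHom ℝ KK KK : _ →+* KK).comp Psi) = RingHom.id KK := by
    apply IsLocalization.ringHom_ext (nonZeroDivisors ℝ[X])
    apply RingHom.ext
    intro q
    change (Psi (ι q)).fst = ι q
    rw [Psi_ι, psi_eq]
    simp
  exact congrArg (fun g : KK →+* KK => g f) h

/-- The derivation of rational functions. -/
def δ : Derivation ℝ KK KK where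
  toFun f := (Psi f).snd
  map_add' f g := by simp
  map_smul' r f := by
    rw [Algebra.smul_def, map_mul, ← ι_C, Psi_ι, psi_eq]
    simp [ι_C, Algebra.smul_def]
  map_one_eq_zero' := by simp
  leibniz' f g := by
    simp [Psi_fst, mul_comm]

lemma δ_ι (q : ℝ[X]) : δ (ι q) = ι (derivative q) := by
  change (Psi (ι q)).snd = _
  rw [Psi_ι, psi_eq]; simp only [TrivSqZeroExt.snd_add, TrivSqZeroExt.snd_inl, TrivSqZeroExt.snd_inr, zero_add]

lemma δ_iter_ι (j : ℕ) (q : ℝ[X]) : δ^[j] (ι q) = ι (derivative^[j] q) := by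
  induction j with
  | zero => rfl
  | succ j ih => rw [Function.iterate_succ_apply', ih, δ_ι, Function.iterate_succ_apply']

lemma Wr_ι {n : ℕ} (u : Fin n → ℝ[X]) :
    Wr δ (fun i => ι (u i)) = ι (Wr (derivative : ℝ[X] → ℝ[X]) u) := by
  simp only [Wr]
  rw [RingHom.map_det]
  congr 1
  ext i j
  simp [δ_iter_ι]

/-- order of vanishing at a point at least `m`. -/
def Val (x0 : ℝ) (m : ℕ) (f : KK) : Prop :=
  ∃ e s : ℝ[X], e.eval x0 ≠ 0 ∧ ι e * f = ι ((X - C x0) ^ m * s)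

lemma Val.mono {x0 : ℝ} {m k : ℕ} {f : KK} (h : Val x0 (m + k) f) : Val x0 m f := by
  obtain ⟨e, s, he, h⟩ := h
  exact ⟨e, (X - C x0) ^ k * s, he, by rw [h, pow_add, mul_assoc]⟩

lemma Val.mono' {x0 : ℝ} {m l : ℕ} {f : KK} (h : Val x0 l f) (hl : m ≤ l) : Val x0 m f := by
  obtain ⟨k, rfl⟩ := Nat.exists_eq_add_of_le hl
  exact h.mono

lemma Val.add {x0 : ℝ} {m : ℕ} {f g : KK} (hf : Val x0 m f) (hg : Val x0 m g) : Val x0 m (f + g) := by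
  obtain ⟨e, s, he, h⟩ := hf
  obtain ⟨e', s', he', h'⟩ := hg
  refine ⟨e * e', e' * s + e * s', by simp [he, he'], ?_⟩
  simp only [map_mul, map_add, map_pow] at *
  linear_combination ι e' * h + ι e * h'

lemma Val.mul {x0 : ℝ} {m l : ℕ} {f g : KK} (hf : Val x0 m f) (hg : Val x0 l g) : Val x0 (m + l) (f * g) := by
  obtain ⟨e, s, he, h⟩ := hf
  obtain ⟨e', s', he', h'⟩ := hg
  refine ⟨e * e', s * s', by simp [he, he'], ?_⟩
  rw [map_mul, mul_mul_mul_comm, h, h', ← map_mul]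
  congr 1
  ring

lemma Val.poly {x0 : ℝ} {m : ℕ} {q : ℝ[X]} (h : (X - C x0) ^ m ∣ q) : Val x0 m (ι q) := by
  obtain ⟨s, rfl⟩ := h
  exact ⟨1, s, by simp, by simp⟩

lemma Val.poly0 {x0 : ℝ} (q : ℝ[X]) : Val x0 0 (ι q) := Val.poly (by simp)

lemma Val.const {x0 : ℝ} (r : ℝ) : Val x0 0 (algebraMap ℝ KK r) := by
  rw [← ι_C]; exact Val.poly0 _

lemma Val.smul {x0 : ℝ} {m : ℕ} (r : ℝ) {f : KK} (hf : Val x0 m f) : Val x0 m (r • f) := by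
  rw [rsmul]
  simpa using (Val.const (x0 := x0) r).mul hf

lemma Val.neg {x0 : ℝ} {m : ℕ} {f : KK} (hf : Val x0 m f) : Val x0 m (-f) := by
  simpa using hf.smul (-1)

lemma Val.sub {x0 : ℝ} {m : ℕ} {f g : KK} (hf : Val x0 m f) (hg : Val x0 m g) : Val x0 m (f - g) := by
  rw [sub_eq_add_neg]; exact hf.add hg.neg

lemma Val.der {x0 : ℝ} {m : ℕ} {f : KK} (hf : Val x0 (m + 1) f) : Val x0 m (δ f) := by
  obtain ⟨e, s, he, h⟩ := hf
  refine ⟨e * e, e * (((m : ℝ[X]) + 1) * s + (X - C x0) * derivative s) - derivative e * (X - C x0) * s, by simp [he], ?_⟩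
  have h2 := congrArg δ h
  rw [dmul, δ_ι, δ_ι] at h2
  have h3 : derivative ((X - C x0) ^ (m + 1) * s) = (X - C x0) ^ m * (((m : ℝ[X]) + 1) * s + (X - C x0) * derivative s) := by
    simp [derivative_mul, derivative_pow]
    ring
  rw [h3] at h2
  simp only [map_mul, map_add, map_sub, map_pow] at *
  linear_combination ι e * h2 - ι (derivative e) * h

lemma Val.exists_mul (x0 : ℝ) (r : KK) : ∃ k, ∀ m f, Val x0 (m + k) f → Val x0 m (r * f) := by
  obtain ⟨n, d, hd, rfl⟩ := IsFractionRing.div_surjective (A := ℝ[X]) r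
  have hd0 : d ≠ 0 := nonZeroDivisors.ne_zero hd
  obtain ⟨d', hd', hnd⟩ := exists_eq_pow_rootMultiplicity_mul_and_not_dvd d hd0 x0
  refine ⟨d.rootMultiplicity x0, fun m f hf => ?_⟩
  set k := d.rootMultiplicity x0
  obtain ⟨e, s, he, h⟩ := hf
  refine ⟨d' * e, n * s, ?_, ?_⟩
  · rw [eval_mul]
    refine mul_ne_zero (fun h0 => hnd ?_) he
    exact dvd_iff_isRoot.2 h0
  · have hι : ι d ≠ 0 := by rwa [Ne, ι_eq_zero]
    have hd2 : ι d = ι (X - C x0) ^ k * ι d' := by rw [← map_pow, ← map_mul, ← hd']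
    rw [map_mul]
    have h1 : ι (X - C x0) ^ k ≠ 0 := fun h0 => hι (by rw [hd2, h0, zero_mul])
    have h2 : ι d' ≠ 0 := fun h0 => hι (by rw [hd2, h0, mul_zero])
    change _ * (ι n / ι d * f) = _
    rw [hd2]
    field_simp
    rw [map_mul, map_pow, pow_add] at h
    simp only [map_mul, map_pow]
    linear_combination ι n * h

lemma Val.isDO {R : KK → KK} (hR : IsDO δ R) (x0 : ℝ) :
    ∃ k, ∀ m f, Val x0 (m + k) f → Val x0 m (R f) := by
  induction hR with
  | mul r => exact Val.exists_mul x0 r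
  | der => exact ⟨1, fun m f h => h.der⟩
  | add _ _ h1 h2 =>
    obtain ⟨k, hk⟩ := h1
    obtain ⟨l, hl⟩ := h2
    refine ⟨k + l, fun m f h => (hk m f (h.mono' (by omega))).add (hl m f (h.mono' (by omega)))⟩
  | comp _ _ h1 h2 =>
    obtain ⟨k, hk⟩ := h1
    obtain ⟨l, hl⟩ := h2
    exact ⟨k + l, fun m f h => hk _ _ (hl _ _ (by rwa [add_assoc]))⟩

lemma regular {n d : ℝ[X]} (hd : d ≠ 0) (hcop : IsCoprime n d) {x0 : ℝ}
    (h : Val x0 0 (δ (ι n / ι d))) : d.eval x0 ≠ 0 := by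
  intro h0
  have hι : ι d ≠ 0 := by rwa [Ne, ι_eq_zero]
  obtain ⟨e, s, he, h⟩ := h
  rw [ddiv _ _ _ hι, δ_ι, δ_ι] at h
  have h1 : e * (d * derivative n - n * derivative d) = s * d ^ 2 := by
    rw [← ι_inj]
    field_simp at h
    simp only [map_mul, map_sub, map_pow, pow_zero, map_one] at *
    linear_combination h
  have hdvd : d ∣ (e * n) * derivative d := ⟨e * derivative n - s * d, by linear_combination -h1⟩
  obtain ⟨d', hd', hnd⟩ := exists_eq_pow_rootMultiplicity_mul_and_not_dvd d hd x0
  set k := d.rootMultiplicity x0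
  have hk : 0 < k := (rootMultiplicity_pos hd).2 h0
  have hcop2 : IsCoprime (X - C x0) (e * n) := by
    refine (Irreducible.coprime_iff_not_dvd (irreducible_X_sub_C x0)).2 ?_
    rw [dvd_iff_isRoot, IsRoot, eval_mul, mul_eq_zero]
    rintro (h2 | h2)
    · exact he h2
    · obtain ⟨A, B, hAB⟩ := hcop
      have := congrArg (eval x0) hAB
      simp [h2, h0] at this
  have h3 : (X - C x0) ^ k ∣ derivative d := by
    refine (IsCoprime.pow_left (m := k) hcop2).dvd_of_dvd_mul_left ?_
    exact dvd_trans ⟨d', hd'⟩ hdvd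
  clear_value k
  obtain ⟨l, rfl⟩ : ∃ l, k = l + 1 := ⟨k - 1, by omega⟩
  have h4 : derivative d = (X - C x0) ^ l * (((l : ℝ[X]) + 1) * d' + (X - C x0) * derivative d') := by
    rw [hd']
    simp [derivative_mul, derivative_pow]
    ring
  rw [h4, pow_succ] at h3
  have h5 := (mul_dvd_mul_iff_left (pow_ne_zero l (X_sub_C_ne_zero x0))).1 h3
  have h6 : (X - C x0) ∣ ((l : ℝ[X]) + 1) * d' := (dvd_add_left (dvd_mul_right _ _)).1 h5
  rw [dvd_iff_isRoot] at h6 hnd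
  have h7 : ((l : ℝ) + 1) * eval x0 d' = 0 := by simpa [IsRoot] using h6
  exact hnd ((mul_eq_zero.1 h7).resolve_left (by positivity))

lemma mono_ratio {N d : ℝ[X]} (hd : ∀ x ∈ Set.Icc (-1 : ℝ) 1, d.eval x ≠ 0)
    (h : ∀ x ∈ Set.Ioo (-1 : ℝ) 1, 0 ≤ eval x (d * derivative N - derivative d * N)) :
    MonotoneOn (fun x => N.eval x / d.eval x) (Set.Icc (-1 : ℝ) 1) := by
  refine monotoneOn_of_deriv_nonneg (convex_Icc _ _) ?_ ?_ ?_
  · exact N.continuous.continuousOn.div d.continuous.continuousOn hd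
  · rw [interior_Icc]
    intro x hx
    exact ((N.differentiableAt).div d.differentiableAt (hd x (Set.Ioo_subset_Icc_self hx))).differentiableWithinAt
  · rw [interior_Icc]
    intro x hx
    have hx' := hd x (Set.Ioo_subset_Icc_self hx)
    rw [((N.hasDerivAt x).fun_div (d.hasDerivAt x) hx').deriv]
    refine div_nonneg ?_ (sq_nonneg _)
    have := h x hx
    simp only [eval_sub, eval_mul] at this
    linarith

lemma mono_zero {f : KK} {c d : ℝ[X]} (hd : ∀ x ∈ Set.Icc (-1 : ℝ) 1, d.eval x ≠ 0)
    (hc : ∀ x ∈ Set.Icc (-1 : ℝ) 1, 0 ≤ c.eval x) (hf : ι (d ^ 2) * δ f = ι c)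
    (h1 : Val 1 1 f) (h2 : Val (-1) 1 f) : c = 0 := by
  obtain ⟨n, D, hcop, hfe⟩ := IsFractionRing.exists_reduced_fraction (A := ℝ[X]) f
  have hcop' : IsCoprime n D := hcop.isCoprime
  have hD : (D : ℝ[X]) ≠ 0 := nonZeroDivisors.ne_zero D.2
  have hιD : ι (D : ℝ[X]) ≠ 0 := by rwa [Ne, ι_eq_zero]
  have hfe' : f = ι n / ι (D : ℝ[X]) := by rw [← hfe, IsFractionRing.mk'_eq_div]
  generalize (D : ℝ[X]) = D at *
  subst hfe'
  have hDx : ∀ x ∈ Set.Icc (-1 : ℝ) 1, D.eval x ≠ 0 := fun x hx =>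
    regular hD hcop' ⟨d ^ 2, c, by simpa using hd x hx, by rw [hf]; simp⟩
  have hv : ∀ x0, x0 ∈ Set.Icc (-1 : ℝ) 1 → Val x0 1 (ι n / ι D) → n.eval x0 = 0 := by
    rintro x0 hx0 ⟨e, s, he, h⟩
    have : e * n = D * ((X - C x0) * s) := by
      rw [← ι_inj, map_mul, map_mul]
      field_simp at h
      rw [h, pow_one]; 
    have := congrArg (eval x0) this
    simpa [he] using this
  have hn1 := hv 1 (by simp) h1
  have hn2 := hv (-1) (by simp) h2
  have heq : d ^ 2 * (D * derivative n - derivative D * n) = c * D ^ 2 := by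
    rw [ddiv _ _ _ hιD, δ_ι, δ_ι] at hf
    field_simp at hf
    rw [← ι_inj]
    simp only [map_mul, map_sub, map_pow] at *
    linear_combination hf
  have hm := mono_ratio (N := n) hDx (fun x hx => by
    have hx' := Set.Ioo_subset_Icc_self hx
    have h3 := congrArg (eval x) heq
    have h4 : 0 < eval x d ^ 2 := by have := hd x hx'; positivity
    rw [eval_mul, eval_mul, eval_pow, eval_pow] at h3
    have h5 : 0 ≤ eval x c * eval x D ^ 2 := mul_nonneg (hc x hx') (sq_nonneg _)
    rw [← h3] at h5
    exact nonneg_of_mul_nonneg_right h5 h4)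
  have hn : n = 0 := by
    apply Polynomial.eq_zero_of_infinite_isRoot
    refine Set.Infinite.mono ?_ (Set.Icc_infinite (show (-1 : ℝ) < 1 by norm_num))
    intro x hx
    have e1 := hm hx (by simp) hx.2
    have e2 := hm (by simp) hx hx.1
    simp only [hn1, hn2, zero_div] at e1 e2
    have := le_antisymm e1 e2
    rw [div_eq_zero_iff] at this
    exact this.resolve_right (hDx x hx)
  rw [hn] at heq
  simp at heq
  exact heq.resolve_right hD

end
end EHJ

open Finset MeasureTheory

namespace EHJ
open Polynomial
noncomputable section

/-- Jacobi operator on polynomials. -/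
def Dp (A B : ℝ) (y : ℝ[X]) : ℝ[X] :=
  (1 - X ^ 2) * derivative (derivative y) + (C (B - A) - C (A + B + 2) * X) * derivative y

lemma Dp_add (A B : ℝ) (y z : ℝ[X]) : Dp A B (y + z) = Dp A B y + Dp A B z := by
  simp only [Dp, map_add]; ring

lemma Dp_sub (A B : ℝ) (y z : ℝ[X]) : Dp A B (y - z) = Dp A B y - Dp A B z := by
  simp only [Dp, map_sub]; ring

lemma Dp_C_mul (A B c : ℝ) (y : ℝ[X]) : Dp A B (C c * y) = C c * Dp A B y := by
  simp only [Dp, derivative_C_mul]; ring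

lemma Dp_sum (A B : ℝ) {σ : Type*} (s : Finset σ) (y : σ → ℝ[X]) :
    Dp A B (∑ i ∈ s, y i) = ∑ i ∈ s, Dp A B (y i) := by
  simp only [Dp, map_sum, mul_sum, sum_add_distrib]

lemma der_s (m : ℕ) (c : ℝ) : (X - C c) * derivative ((X - C c) ^ m) = C (m : ℝ) * (X - C c) ^ m := by
  cases m with
  | zero => simp
  | succ m => simp [derivative_pow]; ring

lemma der_s2 (m : ℕ) (c : ℝ) : (X - C c) * derivative (derivative ((X - C c) ^ m)) =
    C ((m : ℝ) - 1) * derivative ((X - C c) ^ m) := by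
  have := congrArg derivative (der_s m c)
  simp only [derivative_mul, derivative_sub, derivative_X, derivative_C, sub_zero, one_mul, zero_mul, zero_add] at this
  rw [C_sub, C_1]
  linear_combination this

lemma Dp_st (A B : ℝ) (m l : ℕ) :
    (X - C 1) * (X - C (-1)) * Dp A B ((X - C 1) ^ m * (X - C (-1)) ^ l) =
      -((X - C 1) ^ m * (X - C (-1)) ^ l *
        (C (m * (m + A)) * (X - C (-1)) ^ 2 + C (l * (l + B)) * (X - C 1) ^ 2 +
          C (2 * m * l + (A + 1) * l + (B + 1) * m) * ((X - C 1) * (X - C (-1))))) := by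
  have e1 := der_s m 1
  have e2 := der_s2 m 1
  have f1 := der_s l (-1)
  have f2 := der_s2 l (-1)
  simp only [Dp, derivative_mul, derivative_add]
  generalize derivative (derivative ((X - C (1 : ℝ)) ^ m)) = S2 at *
  generalize derivative ((X - C (1 : ℝ)) ^ m) = S1 at *
  generalize (X - C (1 : ℝ)) ^ m = S0 at *
  generalize derivative (derivative ((X - C (-1 : ℝ)) ^ l)) = T2 at *
  generalize derivative ((X - C (-1 : ℝ)) ^ l) = T1 at *
  generalize (X - C (-1 : ℝ)) ^ l = T0 at *
  simp only [C_add, C_sub, C_mul, C_neg, C_1] at *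
  have h2 : (C 2 : ℝ[X]) = 2 := rfl
  rw [h2]
  generalize hm : (C (m : ℝ) : ℝ[X]) = m' at *
  generalize hl : (C (l : ℝ) : ℝ[X]) = l' at *
  generalize (C A : ℝ[X]) = A at *
  generalize (C B : ℝ[X]) = B at *
  have E2 : (X - 1) ^ 2 * S2 = m' * (m' - 1) * S0 := by
    linear_combination (X - 1) * e2 + (m' - 1) * e1
  have F2 : (X + 1) ^ 2 * T2 = l' * (l' - 1) * T0 := by
    linear_combination (X + 1) * f2 + (l' - 1) * f1
  have EF : (X - 1) * (X + 1) * (S1 * T1) = m' * l' * S0 * T0 := by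
    linear_combination (X + 1) * T1 * e1 + m' * S0 * f1
  have E1 : (X - 1) * (X + 1) * ((B - A - (A + B + 2) * X) * (S1 * T0)) = 
    (X + 1) * (B - A - (A + B + 2) * X) * (m' * S0 * T0) := by
    linear_combination (X + 1) * (B - A - (A + B + 2) * X) * T0 * e1
  have F1 : (X - 1) * (X + 1) * ((B - A - (A + B + 2) * X) * (S0 * T1)) = 
    (X - 1) * (B - A - (A + B + 2) * X) * (l' * S0 * T0) := by
    linear_combination (X - 1) * (B - A - (A + B + 2) * X) * S0 * f1
  linear_combination (-(X + 1) ^ 2 * T0) * E2 + (-(X - 1) ^ 2 * S0) * F2 - 2 * (X - 1) * (X + 1) * EF + E1 + F1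

/-- Jacobi polynomial. -/
def jac (A B : ℝ) (n : ℕ) : ℝ[X] :=
  C ((2 : ℝ)⁻¹ ^ n) * ∑ j ∈ range (n + 1),
    C (genBinom ((n : ℝ) + A) j * genBinom ((n : ℝ) + B) (n - j)) *
      ((X - C 1) ^ (n - j) * (X - C (-1)) ^ j)

lemma eval_jac (A B : ℝ) (n : ℕ) (x : ℝ) : (jac A B n).eval x = jacobiP A B n x := by
  simp only [jac, jacobiP, eval_mul, eval_C, eval_finsetSum, eval_pow, eval_sub, eval_X]
  congr 1
  refine sum_congr rfl fun j _ => ?_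
  ring

lemma genBinom_succ (z : ℝ) (k : ℕ) : genBinom z (k + 1) * (k + 1) = genBinom z k * (z - k) := by
  simp only [genBinom, prod_range_succ, Nat.factorial_succ]
  have : ((k.factorial : ℕ) : ℝ) ≠ 0 := by positivity
  push_cast
  field_simp

lemma genBinom_zero (z : ℝ) : genBinom z 0 = 1 := by simp [genBinom]

lemma jac_ode (A B : ℝ) (n : ℕ) :
    Dp A B (jac A B n) = -(C (n * (n + A + B + 1)) * jac A B n) := by
  have hst : (X - C 1) * (X - C (-1)) ≠ (0 : ℝ[X]) := mul_ne_zero (X_sub_C_ne_zero _) (X_sub_C_ne_zero _)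
  apply mul_left_cancel₀ hst
  set K : ℕ → ℝ := fun j => genBinom ((n : ℝ) + A) j * genBinom ((n : ℝ) + B) (n - j) with hK
  rw [show jac A B n = C ((2 : ℝ)⁻¹ ^ n) * ∑ j ∈ range (n + 1), C (K j) * ((X - C 1) ^ (n - j) * (X - C (-1)) ^ j) from rfl]
  rw [Dp_C_mul, Dp_sum]
  have hrec : ∀ j < n, K j * (((n - j : ℕ) : ℝ) * ((n - j : ℕ) + A)) = K (j + 1) * (((j + 1 : ℕ) : ℝ) * ((j + 1 : ℕ) + B)) := by
    intro j hj
    obtain ⟨m, rfl⟩ : ∃ m, n = j + 1 + m := ⟨n - j - 1, by omega⟩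
    have h1 : j + 1 + m - j = m + 1 := by omega
    have h2 : j + 1 + m - (j + 1) = m := by omega
    simp only [hK, h1, h2]
    have e1 := genBinom_succ (((j + 1 + m : ℕ) : ℝ) + A) j
    have e2 := genBinom_succ (((j + 1 + m : ℕ) : ℝ) + B) m
    push_cast at *
    linear_combination (genBinom ((j : ℝ) + 1 + m + A) j * ((m : ℝ) + 1 + A)) * e2 - genBinom ((j : ℝ) + 1 + m + B) m * (j + 1 + B) * e1
  set s : ℝ[X] := X - C 1 with hs
  set t : ℝ[X] := X - C (-1) with ht
  have hS : ∑ j ∈ range (n + 1), C (K j * (((n - j : ℕ) : ℝ) * ((n - j : ℕ) + A))) * (s ^ (n - j) * t ^ j) * t =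
      ∑ j ∈ range (n + 1), C (K j * ((j : ℝ) * (j + B))) * (s ^ (n - j) * t ^ j) * s := by
    rw [sum_range_succ, sum_range_succ' (fun j => C (K j * ((j : ℝ) * (j + B))) * (s ^ (n - j) * t ^ j) * s)]
    simp only [Nat.sub_self, Nat.cast_zero, zero_mul, mul_zero, C_0, add_zero]
    refine sum_congr rfl fun j hj => ?_
    rw [hrec j (mem_range.1 hj)]
    obtain ⟨m, hm⟩ : ∃ m, n = j + 1 + m := ⟨n - j - 1, by have := mem_range.1 hj; omega⟩
    have h1 : n - j = m + 1 := by omega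
    have h2 : n - (j + 1) = m := by omega
    rw [h1, h2]
    ring
  have hsum : s * t * ∑ j ∈ range (n + 1), Dp A B (C (K j) * (s ^ (n - j) * t ^ j)) =
      -(∑ j ∈ range (n + 1), C (K j * (((n - j : ℕ) : ℝ) * ((n - j : ℕ) + A))) * (s ^ (n - j) * t ^ j) * t) * t
      -(∑ j ∈ range (n + 1), C (K j * ((j : ℝ) * (j + B))) * (s ^ (n - j) * t ^ j) * s) * s
      - ∑ j ∈ range (n + 1), C (K j * (2 * (n - j : ℕ) * j + (A + 1) * j + (B + 1) * (n - j : ℕ))) * (s ^ (n - j) * t ^ j) * (s * t) := by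
    rw [mul_sum, ← sub_eq_zero, ← sum_neg_distrib, sum_mul, sum_mul, ← sum_sub_distrib, ← sum_sub_distrib, ← sum_sub_distrib]
    refine sum_eq_zero fun j _ => ?_
    have := Dp_st A B (n - j) j
    rw [Dp_C_mul]
    simp only [C_mul] at *
    linear_combination C (K j) * this
  rw [show ∀ x y : ℝ[X], s * t * (x * y) = x * (s * t * y) from fun x y => by ring, hsum]
  rw [hS]
  have hS' : (∑ j ∈ range (n + 1), C (K j * ((j : ℝ) * (j + B))) * (s ^ (n - j) * t ^ j) * s) * s =
      (∑ j ∈ range (n + 1), C (K j * (((n - j : ℕ) : ℝ) * ((n - j : ℕ) + A))) * (s ^ (n - j) * t ^ j) * t) * s := by rw [hS]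
  rw [hS']
  rw [neg_mul, sum_mul, sum_mul]
  rw [show ∀ x y z : ℝ[X], s * t * -(x * (y * z)) = y * -(x * z * (s * t)) from fun x y z => by ring]
  congr 1
  rw [mul_sum, sum_mul, ← sum_neg_distrib, ← sum_neg_distrib, ← sum_sub_distrib, ← sum_sub_distrib]
  refine sum_congr rfl fun j hj => ?_
  obtain ⟨m, rfl⟩ : ∃ m, n = j + m := ⟨n - j, by have := mem_range.1 hj; omega⟩
  have h1 : j + m - j = m := by omega
  rw [h1]
  simp only [C_mul, C_add, C_1]
  push_cast
  have h2 : (C 2 : ℝ[X]) = 2 := rfl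
  rw [h2]
  simp only [C_add]
  ring

lemma Dp_shift (B : ℝ) (a : ℕ) (z : ℝ[X]) :
    Dp (-a) B ((1 - X) ^ a * z) = (1 - X) ^ a * (Dp a B z - C (a * (1 + B)) * z) := by
  have e1 : (1 - X) * derivative ((1 - X) ^ a) = -(C (a : ℝ) * (1 - X : ℝ[X]) ^ a) := by
    cases a with
    | zero => simp
    | succ m => simp [derivative_pow]; ring
  have e2 := congrArg derivative e1
  simp only [Dp, derivative_mul, derivative_add, derivative_neg, derivative_sub, derivative_one, derivative_X, derivative_C] at *
  generalize derivative (derivative ((1 - X : ℝ[X]) ^ a)) = S2 at *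
  generalize derivative ((1 - X : ℝ[X]) ^ a) = S1 at *
  generalize (1 - X : ℝ[X]) ^ a = S0 at *
  have h2 : (C 2 : ℝ[X]) = 2 := rfl
  simp only [C_add, C_sub, C_mul, C_neg, C_1, h2] at *
  linear_combination (1 + X) * z * e2 + ((C B + 1) * z + 2 * (1 + X) * derivative z) * e1 

lemma taylor_coeff (A B ε γ : ℝ) (h : (ε = 1 ∧ γ = A) ∨ (ε = -1 ∧ γ = B)) (y : ℝ[X]) (j : ℕ) :
    (taylor ε (Dp A B y)).coeff j = -2 * ε * (j + 1) * (j + 1 + γ) * (taylor ε y).coeff (j + 1)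
      - j * (j + A + B + 1) * (taylor ε y).coeff j := by
  have hd : ∀ q : ℝ[X], taylor ε (derivative q) = derivative (taylor ε q) := by
    intro q
    simp [taylor_apply, derivative_comp]
  have hε : ε ^ 2 = 1 := by rcases h with ⟨h, _⟩ | ⟨h, _⟩ <;> rw [h] <;> norm_num
  have hg : B - A - (A + B + 2) * ε = -2 * ε * (1 + γ) := by
    rcases h with ⟨h, h'⟩ | ⟨h, h'⟩ <;> rw [h, h'] <;> ring
  have h1 : taylor ε (Dp A B y) = C (-2 * ε) * (X * derivative (derivative (taylor ε y)))
      - X * (X * derivative (derivative (taylor ε y))) + C (-2 * ε * (1 + γ)) * derivative (taylor ε y)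
      - C (A + B + 2) * (X * derivative (taylor ε y)) := by
    have hX : taylor ε (1 - X ^ 2 : ℝ[X]) = C (-2 * ε) * X - X * X := by
      have : (C ε : ℝ[X]) ^ 2 = 1 := by rw [← C_pow, hε, C_1]
      simp [taylor_apply]
      have h2 : (C 2 : ℝ[X]) = 2 := rfl
      rw [h2]
      linear_combination -this
    have hX2 : taylor ε (C (B - A) - C (A + B + 2) * X : ℝ[X]) = C (-2 * ε * (1 + γ)) - C (A + B + 2) * X := by
      rw [← hg]
      simp [taylor_apply]
      ring
    rw [Dp, map_add, taylor_mul, taylor_mul, hX, hX2, hd, hd]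
    ring
  rw [h1]
  generalize taylor ε y = Y
  rcases j with _ | _ | j
  · simp [coeff_derivative]
  · simp only [coeff_add, coeff_sub, coeff_C_mul, coeff_X_mul, coeff_derivative, coeff_X_mul_zero]
    push_cast
    ring
  · simp only [coeff_add, coeff_sub, coeff_C_mul, coeff_X_mul, coeff_derivative]
    push_cast
    ring

lemma dvd_iff_taylor (ε : ℝ) (k : ℕ) (y : ℝ[X]) :
    (X - C ε) ^ k ∣ y ↔ ∀ j < k, (taylor ε y).coeff j = 0 := by
  rw [X_sub_C_pow_dvd_iff, X_pow_dvd_iff, taylor_apply]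

end
end EHJ

open Finset MeasureTheory

namespace EHJ
open Polynomial
noncomputable section

/-- eigenvalue -/
def ln (a b n : ℕ) : ℝ := (n : ℝ) * (n - a - b + 1)

lemma ln_sub (a b v f : ℕ) : ln a b v - ln a b f = ((v : ℝ) - f) * (v + f - a - b + 1) := by
  simp only [ln]; ring

/-- q -/
def jacq (a b n : ℕ) : ℝ[X] := jac (-(a : ℝ)) (-(b : ℝ)) n

/-- the operator -/
def DD (a b : ℕ) (y : ℝ[X]) : ℝ[X] := Dp (-(a : ℝ)) (-(b : ℝ)) y

/-- second solution -/
def gg (a b i : ℕ) : ℝ[X] := C ((2 : ℝ)⁻¹ ^ a) * ((1 - X) ^ a * jac (a : ℝ) (-(b : ℝ)) i)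

lemma DD_jacq (a b n : ℕ) : DD a b (jacq a b n) = -(C (ln a b n) * jacq a b n) := by
  rw [DD, jacq, jac_ode]
  have : (n : ℝ) * (n + -(a : ℝ) + -(b : ℝ) + 1) = ln a b n := by simp only [ln]; ring
  rw [this]

lemma DD_gg (a b i : ℕ) : DD a b (gg a b i) = -(C (((a : ℝ) + i) * (i - b + 1)) * gg a b i) := by
  rw [DD, gg, Dp_C_mul, Dp_shift, jac_ode]
  have h : (C ((a : ℝ) * (1 + -(b : ℝ))) : ℝ[X]) = C (((a : ℝ) + i) * (i - b + 1)) - C ((i : ℝ) * (i + a + -b + 1)) := by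
    rw [← C_sub]; congr 1; ring
  rw [h]
  ring

lemma DD_gg' {a b v : ℕ} (hv : v < b) : DD a b (gg a b (b - 1 - v)) = -(C (ln a b v) * gg a b (b - 1 - v)) := by
  rw [DD_gg]
  congr 3
  obtain ⟨k, rfl⟩ : ∃ k, b = v + 1 + k := ⟨b - v - 1, by omega⟩
  have : v + 1 + k - 1 - v = k := by omega
  rw [this, ln]
  push_cast
  ring

lemma eval_jac_one (A B : ℝ) (n : ℕ) : (jac A B n).eval 1 = genBinom (n + A) n := by
  simp only [jac, eval_mul, eval_C, eval_finsetSum, eval_pow, eval_sub, eval_X]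
  rw [sum_range_succ, sum_eq_zero]
  · simp [genBinom_zero]
    have h : (1 + 1 : ℝ) = 2 := by norm_num
    rw [h]
    field_simp
  · intro j hj
    have : n - j ≠ 0 := by have := mem_range.1 hj; omega
    simp [this]

lemma eval_jac_neg_one (A B : ℝ) (n : ℕ) : (jac A B n).eval (-1) = (-1) ^ n * genBinom (n + B) n := by
  simp only [jac, eval_mul, eval_C, eval_finsetSum, eval_pow, eval_sub, eval_X]
  rw [sum_range_succ', sum_eq_zero]
  · simp [genBinom_zero]
    have h : (-1 - 1 : ℝ) = -1 * 2 := by norm_num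
    rw [h, mul_pow]
    field_simp
  · intro j hj
    simp

lemma genBinom_neg {n b : ℕ} (h : n < b) : (-1) ^ n * genBinom ((n : ℝ) + -(b : ℝ)) n = ((b - 1).choose n : ℝ) := by
  have h1 : ∀ m ≤ b - 1, ((b - 1).descFactorial m : ℝ) = ∏ i ∈ range m, ((b : ℝ) - 1 - i) := by
    intro m hm
    rw [Nat.descFactorial_eq_prod_range]
    push_cast
    refine prod_congr rfl fun i hi => ?_
    have := mem_range.1 hi
    rw [Nat.cast_sub (by omega), Nat.cast_sub (by omega)]
    simp
  rw [Nat.choose_eq_descFactorial_div_factorial, Nat.cast_div (Nat.factorial_dvd_descFactorial _ _) (by positivity), h1 n (by omega)]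
  rw [genBinom, ← mul_div_assoc]
  congr 1
  rw [← prod_range_reflect (fun i => (n : ℝ) + -(b : ℝ) - i)]
  have h2 : ((-1 : ℝ)) ^ n = ∏ i ∈ range n, (-1 : ℝ) := by simp
  rw [h2, ← prod_mul_distrib]
  refine prod_congr rfl fun i hi => ?_
  have := mem_range.1 hi
  rw [Nat.cast_sub (by omega), Nat.cast_sub (by omega)]
  simp; ring

lemma jacq_neg_one {a b v : ℕ} (hv : v < b) : (jacq a b v).eval (-1) = ((b - 1).choose v : ℝ) := by
  rw [jacq, eval_jac_neg_one, genBinom_neg hv]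

lemma jacq_one {a b v : ℕ} (hv : v < a) : (jacq a b v).eval 1 = (-1) ^ v * ((a - 1).choose v : ℝ) := by
  rw [jacq, eval_jac_one, ← genBinom_neg hv, ← mul_assoc, ← mul_pow]
  simp

lemma gg_neg_one {a b v : ℕ} (hv : v < b) : (gg a b (b - 1 - v)).eval (-1) = ((b - 1).choose v : ℝ) := by
  rw [gg]
  simp only [eval_mul, eval_C, eval_pow, eval_sub, eval_X, eval_one]
  rw [eval_jac_neg_one, genBinom_neg (by omega), Nat.choose_symm (by omega)]
  have h : (1 - -1 : ℝ) = 2 := by norm_num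
  rw [h, ← mul_assoc, ← mul_pow]
  norm_num

lemma dvd_up {a b : ℕ} {y : ℝ[X]} {μ : ℝ} (h0 : y.eval (-1) = 0) (h : DD a b y = -(C μ * y)) :
    (X - C (-1)) ^ b ∣ y := by
  rw [dvd_iff_taylor]
  intro j
  induction j with
  | zero => intro _; simpa using h0
  | succ j ih =>
    intro hj
    have h1 := taylor_coeff (-(a : ℝ)) (-(b : ℝ)) (-1) (-(b : ℝ)) (Or.inr ⟨rfl, rfl⟩) y j
    change (taylor (-1) (DD a b y)).coeff j = _ at h1
    rw [h, map_neg, taylor_mul, taylor_C, coeff_neg, coeff_C_mul, ih (by omega)] at h1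
    have h2 : ((j : ℝ) + 1 + -b) ≠ 0 := by
      have : (j : ℝ) + 1 < b := by exact_mod_cast hj
      linarith
    have h3 : ((j : ℝ) + 1) ≠ 0 := by positivity
    simpa [h2, h3] using h1.symm

lemma dvd_down {a b n : ℕ} {y : ℝ[X]} (hb : b ≤ n) (ha : n < a)
    (h : (X - C (-1)) ^ b ∣ DD a b y + C (ln a b n) * y) :
    (X - C (-1)) ^ b ∣ y := by
  rw [dvd_iff_taylor] at h ⊢
  suffices hs : ∀ k j, j + k + 1 = b → (taylor (-1) y).coeff j = 0 from
    fun j hj => hs (b - 1 - j) j (by omega)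
  intro k
  induction k with
  | zero =>
    intro j hj
    have h1 := taylor_coeff (-(a : ℝ)) (-(b : ℝ)) (-1) (-(b : ℝ)) (Or.inr ⟨rfl, rfl⟩) y j
    change (taylor (-1) (DD a b y)).coeff j = _ at h1
    have h2 := h j (by omega)
    rw [map_add, taylor_mul, taylor_C, coeff_add, coeff_C_mul, h1] at h2
    have h3 : ((j : ℝ) + 1 + -b) = 0 := by
      have : (j : ℝ) + 1 = b := by exact_mod_cast (by omega : j + 1 = b)
      linarith
    rw [h3] at h2
    have h4 : (ln a b n - ln a b j) * (taylor (-1) y).coeff j = 0 := by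
      simp only [ln] at *
      linear_combination h2
    refine (mul_eq_zero.1 h4).resolve_left ?_
    rw [ln_sub]
    have h5 : (j : ℝ) < n := by exact_mod_cast (by omega : j < n)
    have h6 : (n : ℝ) + j + 2 ≤ a + b := by exact_mod_cast (by omega : n + j + 2 ≤ a + b)
    exact mul_ne_zero (by linarith) (by linarith)
  | succ k ih =>
    intro j hj
    have h1 := taylor_coeff (-(a : ℝ)) (-(b : ℝ)) (-1) (-(b : ℝ)) (Or.inr ⟨rfl, rfl⟩) y j
    change (taylor (-1) (DD a b y)).coeff j = _ at h1
    have h2 := h j (by omega)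
    rw [map_add, taylor_mul, taylor_C, coeff_add, coeff_C_mul, h1, ih (j + 1) (by omega)] at h2
    have h4 : (ln a b n - ln a b j) * (taylor (-1) y).coeff j = 0 := by
      simp only [ln] at *
      linear_combination h2
    refine (mul_eq_zero.1 h4).resolve_left ?_
    rw [ln_sub]
    have h5 : (j : ℝ) < n := by exact_mod_cast (by omega : j < n)
    have h6 : (n : ℝ) + j + 2 ≤ a + b := by exact_mod_cast (by omega : n + j + 2 ≤ a + b)
    exact mul_ne_zero (by linarith) (by linarith)

lemma uniq {a b : ℕ} {y : ℝ[X]} {μ : ℝ} (h0 : y.eval 1 = 0) (h : DD a b y = -(C μ * y))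
    (hdeg : ∀ j, a ≤ j → (taylor 1 y).coeff j = 0) : y = 0 := by
  have hz : ∀ j, (taylor 1 y).coeff j = 0 := by
    intro j
    induction j with
    | zero => simpa using h0
    | succ j ih =>
      by_cases hj : a ≤ j + 1
      · exact hdeg _ hj
      · have h1 := taylor_coeff (-(a : ℝ)) (-(b : ℝ)) 1 (-(a : ℝ)) (Or.inl ⟨rfl, rfl⟩) y j
        change (taylor 1 (DD a b y)).coeff j = _ at h1
        rw [h, map_neg, taylor_mul, taylor_C, coeff_neg, coeff_C_mul, ih] at h1
        have h2 : ((j : ℝ) + 1 + -a) ≠ 0 := by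
          have : (j : ℝ) + 1 < a := by exact_mod_cast (by omega : j + 1 < a)
          linarith
        have h3 : ((j : ℝ) + 1) ≠ 0 := by positivity
        simpa [h2, h3] using h1.symm
  have : taylor 1 y = 0 := by ext j; simp [hz]
  exact taylor_injective 1 (by rw [this, map_zero])

lemma jac_natDegree (A B : ℝ) (n : ℕ) : (jac A B n).natDegree ≤ n := by
  refine (natDegree_C_mul_le _ _).trans (natDegree_sum_le_of_forall_le _ _ fun j hj => ?_)
  refine (natDegree_C_mul_le _ _).trans ?_
  refine (natDegree_mul_le).trans ?_
  rw [natDegree_pow, natDegree_pow, natDegree_X_sub_C, natDegree_X_sub_C]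
  have := mem_range.1 hj
  omega

lemma genBinom_nat_zero {m k : ℕ} (h : m < k) : genBinom (m : ℝ) k = 0 := by
  rw [genBinom, prod_eq_zero (mem_range.2 h) (sub_self _), zero_div]

lemma jacq_dvd_neg {a b n : ℕ} (h : b ≤ n) : (X - C (-1)) ^ b ∣ jacq a b n := by
  refine Dvd.dvd.mul_left (dvd_sum fun j hj => ?_) _
  by_cases hjb : b ≤ j
  · exact ((pow_dvd_pow _ hjb).mul_left _).mul_left _
  · have h1 : ((n : ℝ) + -(b : ℝ)) = ((n - b : ℕ) : ℝ) := by rw [Nat.cast_sub h]; ring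
    rw [h1, genBinom_nat_zero (by have := mem_range.1 hj; omega : n - b < n - j)]
    simp

lemma jacq_big {a b n : ℕ} (h : a + b ≤ n) :
    ∃ Q : ℝ[X], Q ≠ 0 ∧ jacq a b n = (X - C 1) ^ a * (X - C (-1)) ^ b * Q := by
  have hdvd : (X - C 1) ^ a * (X - C (-1)) ^ b ∣ jacq a b n := by
    refine Dvd.dvd.mul_left (dvd_sum fun j hj => ?_) _
    have hjn := mem_range.1 hj
    have h1 : ((n : ℝ) + -(b : ℝ)) = ((n - b : ℕ) : ℝ) := by rw [Nat.cast_sub (by omega)]; ring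
    have h2 : ((n : ℝ) + -(a : ℝ)) = ((n - a : ℕ) : ℝ) := by rw [Nat.cast_sub (by omega)]; ring
    by_cases hjb : b ≤ j
    · by_cases hja : a ≤ n - j
      · exact (mul_dvd_mul (pow_dvd_pow _ hja) (pow_dvd_pow _ hjb)).mul_left _
      · rw [h2, genBinom_nat_zero (by omega : n - a < j)]
        simp
    · rw [h1, genBinom_nat_zero (by omega : n - b < n - j)]
      simp
  obtain ⟨Q, hQ⟩ := hdvd
  refine ⟨Q, ?_, hQ⟩
  rintro rfl
  rw [mul_zero] at hQ
  -- nonvanishing of the coefficient at `-1`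
  have hk : ∀ j ∈ range (n + 1), C (genBinom ((n : ℝ) + -(a : ℝ)) j * genBinom ((n : ℝ) + -(b : ℝ)) (n - j)) *
      ((X - C 1) ^ (n - j) * (X - C (-1)) ^ j) = (X - C (-1)) ^ b * (C (genBinom ((n : ℝ) + -(a : ℝ)) j * genBinom ((n : ℝ) + -(b : ℝ)) (n - j)) *
      ((X - C 1) ^ (n - j) * (X - C (-1)) ^ (j - b))) := by
    intro j hj
    have hjn := mem_range.1 hj
    by_cases hjb : b ≤ j
    · have : (X - C (-1 : ℝ)) ^ j = (X - C (-1)) ^ b * (X - C (-1)) ^ (j - b) := by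
        rw [← pow_add]; congr 1; omega
      rw [this]; ring
    · have h1 : ((n : ℝ) + -(b : ℝ)) = ((n - b : ℕ) : ℝ) := by rw [Nat.cast_sub (by omega)]; ring
      rw [h1, genBinom_nat_zero (by omega : n - b < n - j)]
      simp
  rw [jacq, jac, sum_congr rfl hk, ← mul_sum] at hQ
  have hC : C ((2 : ℝ)⁻¹ ^ n) ≠ 0 := by simp
  have h3 := (mul_eq_zero.1 ((mul_eq_zero.1 hQ).resolve_left hC)).resolve_left (pow_ne_zero _ (X_sub_C_ne_zero _))
  have h4 := congrArg (eval (-1)) h3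
  simp only [eval_finsetSum, eval_mul, eval_C, eval_pow, eval_sub, eval_X, eval_zero] at h4
  rw [sum_eq_single_of_mem b (by simp; omega)] at h4
  · simp only [Nat.sub_self, pow_zero, mul_one, mul_eq_zero] at h4
    have hg : ∀ m k : ℕ, k ≤ m → genBinom (m : ℝ) k ≠ 0 := by
      intro m k hkm
      refine div_ne_zero (prod_ne_zero_iff.2 fun i hi => ?_) (by positivity)
      have : (i : ℝ) < m := by exact_mod_cast (by have := mem_range.1 hi; omega : i < m)
      linarith
    have h1 : ((n : ℝ) + -(b : ℝ)) = ((n - b : ℕ) : ℝ) := by rw [Nat.cast_sub (by omega)]; ring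
    have h2 : ((n : ℝ) + -(a : ℝ)) = ((n - a : ℕ) : ℝ) := by rw [Nat.cast_sub (by omega)]; ring
    rw [h1, h2] at h4
    rcases h4 with (h4 | h4) | h4
    · exact hg _ _ (by omega) h4
    · exact hg _ _ (by omega) h4
    · exact pow_ne_zero _ (by norm_num) h4
  · intro j hj hjb
    by_cases hjb' : b ≤ j
    · have : j - b ≠ 0 := by omega
      simp [this]
    · have h1 : ((n : ℝ) + -(b : ℝ)) = ((n - b : ℕ) : ℝ) := by rw [Nat.cast_sub (by omega)]; ring
      have hjn := mem_range.1 hj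
      rw [h1, genBinom_nat_zero (by omega : n - b < n - j)]
      simp

lemma hh_dvd {a b v : ℕ} (hv : v < b) :
    (X - C (-1)) ^ b ∣ jacq a b v - gg a b (b - 1 - v) := by
  apply dvd_up (a := a) (μ := ln a b v)
  · rw [eval_sub, jacq_neg_one hv, gg_neg_one hv, sub_self]
  · rw [DD, Dp_sub]
    have h1 := DD_jacq a b v
    have h2 := DD_gg' (a := a) hv
    rw [DD] at h1 h2
    rw [h1, h2]; ring

lemma gg_dvd (a b i : ℕ) : (X - C 1) ^ a ∣ gg a b i := by
  refine Dvd.dvd.mul_left (Dvd.dvd.mul_right ?_ _) _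
  have : (1 - X : ℝ[X]) = -(X - C 1) := by rw [C_1]; ring
  rw [this, neg_pow]
  exact dvd_mul_left _ _

end
end EHJ

open Finset MeasureTheory

namespace EHJ
open Polynomial
noncomputable section

/-- coefficient of the hypergeometric function. -/
def fJ (a b u j : ℕ) (s : ℝ) : ℝ :=
  poch (-(u : ℝ)) j * poch ((u : ℝ) - s + -(a : ℝ) + -(b : ℝ) + 1) j /
    (poch (-(a : ℝ) - s + 1) j * (j.factorial : ℝ))

lemma poch_succ (z : ℝ) (j : ℕ) : poch z (j + 1) = poch z j * (z + j) := by
  simp [poch, prod_range_succ]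

lemma fJ_succ (a b u j : ℕ) (s : ℝ) : fJ a b u (j + 1) s =
    fJ a b u j s * (((j : ℝ) - u) / (j + 1) * (((u : ℝ) + j + 1 - a - b - s) / ((j : ℝ) + 1 - a - s))) := by
  simp only [fJ, poch_succ, Nat.factorial_succ]
  rw [div_mul_div_comm, div_mul_div_comm]
  congr 1
  · ring
  · push_cast; ring

lemma fJ_zero (a b u : ℕ) (s : ℝ) : fJ a b u 0 s = 1 := by simp [fJ, poch]

lemma fJ_big {a b u j : ℕ} (h : u < j) : fJ a b u j = fun _ => 0 := by
  ext s
  have : poch (-(u : ℝ)) j = 0 := prod_eq_zero (mem_range.2 h) (by simp)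
  simp [fJ, this]

lemma q_ne {a j : ℕ} (h : j + 1 < a) : ((j : ℝ) + 1 - a) ≠ 0 := by
  have : (j : ℝ) + 1 < a := by exact_mod_cast h
  linarith

lemma ratio_deriv (p q : ℝ) (hq : q ≠ 0) : HasDerivAt (fun s => (p - s) / (q - s)) ((p - q) / q ^ 2) 0 := by
  have h1 : HasDerivAt (fun s : ℝ => p - s) (-1) 0 := by simpa using (hasDerivAt_id (0 : ℝ)).const_sub p
  have h2 : HasDerivAt (fun s : ℝ => q - s) (-1) 0 := by simpa using (hasDerivAt_id (0 : ℝ)).const_sub q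
  have := h1.fun_div h2 (by simpa using hq)
  have e : (p - q) / q ^ 2 = (-1 * (q - 0) - (p - 0) * -1) / (q - 0) ^ 2 := by
    rw [sub_zero, sub_zero]; congr 1; ring
  rw [e]; exact this

lemma fJ_step {a b u j : ℕ} (h : j + 1 < a) {E : ℝ} (hE : HasDerivAt (fJ a b u j) E 0) :
    HasDerivAt (fJ a b u (j + 1)) (E * (((j : ℝ) - u) / (j + 1) * (((u : ℝ) + j + 1 - a - b) / ((j : ℝ) + 1 - a))) +
      fJ a b u j 0 * (((j : ℝ) - u) / (j + 1) * (((u : ℝ) - b) / ((j : ℝ) + 1 - a) ^ 2))) 0 := by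
  have h1 := (ratio_deriv ((u : ℝ) + j + 1 - a - b) _ (q_ne h)).const_mul (((j : ℝ) - u) / (j + 1))
  have h2 := hE.fun_mul h1
  have : fJ a b u (j + 1) = fun s => fJ a b u j s * (((j : ℝ) - u) / (j + 1) * (((u : ℝ) + j + 1 - a - b - s) / ((j : ℝ) + 1 - a - s))) := by
    ext s; rw [fJ_succ]
  rw [this]
  have e : E * (((j : ℝ) - u) / (j + 1) * (((u : ℝ) + j + 1 - a - b) / ((j : ℝ) + 1 - a))) +
      fJ a b u j 0 * (((j : ℝ) - u) / (j + 1) * (((u : ℝ) - b) / ((j : ℝ) + 1 - a) ^ 2)) =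
      E * (((j : ℝ) - u) / (j + 1) * (((u : ℝ) + j + 1 - a - b - 0) / ((j : ℝ) + 1 - a - 0))) +
      fJ a b u j 0 * (((j : ℝ) - u) / (j + 1) * (((u : ℝ) + j + 1 - a - b - (j + 1 - a)) / ((j : ℝ) + 1 - a) ^ 2)) := by
    simp only [sub_zero]
    rw [show (u : ℝ) + j + 1 - a - b - (j + 1 - a) = u - b by ring]
  rw [e]; exact h2

lemma fJ_hasDeriv (a b u : ℕ) : ∀ j, j < a → HasDerivAt (fJ a b u j) (deriv (fJ a b u j) 0) 0
  | 0, _ => by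
    have : fJ a b u 0 = fun _ => 1 := by ext s; rw [fJ_zero]
    rw [this]; simpa using hasDerivAt_const (0 : ℝ) (1 : ℝ)
  | j + 1, h => (fJ_step h (fJ_hasDeriv a b u j (by omega))).differentiableAt.hasDerivAt

/-- coefficients -/
def ec (a b n j : ℕ) : ℝ := deriv (fJ a b n j) 0 - deriv (fJ a b (a + b - 1 - n) j) 0

lemma fJ_symm {a b n : ℕ} (h : n ≤ a + b - 1) (hab : 0 < a + b) (j : ℕ) : fJ a b (a + b - 1 - n) j 0 = fJ a b n j 0 := by
  simp only [fJ]
  have h1 : ((a + b - 1 - n : ℕ) : ℝ) = (a : ℝ) + b - 1 - n := by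
    rw [Nat.cast_sub h, Nat.cast_sub (by omega)]; push_cast; ring
  rw [h1]
  congr 1
  rw [mul_comm]
  congr 2 <;> ring

lemma ec_rec {a b n j : ℕ} (h : j + 1 < a) (hn : n < a) (hb : 0 < b) :
    ec a b n (j + 1) * ((j + 1) * (j + 1 - a)) =
      ec a b n j * ((j - n) * (j + n + 1 - a - b)) + (2 * n + 1 - a - b) * fJ a b n j 0 := by
  have h1 := (fJ_step h (fJ_hasDeriv a b n j (by omega))).deriv
  have h2 := (fJ_step h (fJ_hasDeriv a b (a + b - 1 - n) j (by omega))).deriv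
  rw [fJ_symm (by omega) (by omega)] at h2
  have h3 : ((a + b - 1 - n : ℕ) : ℝ) = (a : ℝ) + b - 1 - n := by
    rw [Nat.cast_sub (by omega), Nat.cast_sub (by omega)]; push_cast; ring
  rw [h3] at h2
  simp only [ec]
  rw [h1, h2]
  have h4 := q_ne h
  have h5 : (j : ℝ) + 1 ≠ 0 := by positivity
  field_simp
  ring

lemma fJ_rec {a b n j : ℕ} (h : j + 1 < a) :
    fJ a b n (j + 1) 0 * ((j + 1) * (j + 1 - a)) = fJ a b n j 0 * ((j - n) * (j + n + 1 - a - b)) := by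
  rw [fJ_succ]
  have h4 := q_ne h
  have h5 : (j : ℝ) + 1 ≠ 0 := by positivity
  simp only [sub_zero]
  field_simp
  ring

/-- normalisation -/
def cc (a n m : ℕ) : ℝ := poch (-(a : ℝ) + 1) (max n m) / ((max n.factorial m.factorial : ℕ) : ℝ)

/-- polynomial with given coefficients -/
def polyOf (a : ℕ) (c : ℕ → ℝ) : ℝ[X] := ∑ j ∈ range a, C (c j * (-1 / 2) ^ j) * (X - C 1) ^ j

lemma polyOf_coeff (a : ℕ) (c : ℕ → ℝ) (j : ℕ) :
    (taylor 1 (polyOf a c)).coeff j = if j < a then c j * (-1 / 2) ^ j else 0 := by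
  have : taylor 1 (polyOf a c) = ∑ i ∈ range a, C (c i * (-1 / 2) ^ i) * X ^ i := by
    simp [polyOf, taylor_apply]
  rw [this, finsetSum_coeff]
  simp only [coeff_C_mul_X_pow]
  simp

lemma polyOf_eval (a : ℕ) (c : ℕ → ℝ) (x : ℝ) :
    (polyOf a c).eval x = ∑ j ∈ range a, c j * ((1 - x) / 2) ^ j := by
  simp only [polyOf, eval_finsetSum, eval_mul, eval_C, eval_pow, eval_sub, eval_X]
  refine sum_congr rfl fun j _ => ?_
  rw [mul_assoc, ← mul_pow]
  congr 2
  ring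

lemma polyOf_ode {a b n : ℕ} {c d : ℕ → ℝ} {k : ℝ}
    (h : ∀ j, j + 1 < a → c (j + 1) * ((j + 1) * (j + 1 - a)) = c j * ((j - n) * (j + n + 1 - a - b)) + k * d j)
    (h' : ∀ j, j + 1 = a → c j * ((j - n) * (j + n + 1 - a - b)) + k * d j = 0) :
    DD a b (polyOf a c) = -(C (ln a b n) * polyOf a c) + C k * polyOf a d := by
  apply taylor_injective 1
  ext j
  have h1 := taylor_coeff (-(a : ℝ)) (-(b : ℝ)) 1 (-(a : ℝ)) (Or.inl ⟨rfl, rfl⟩) (polyOf a c) j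
  rw [DD, h1, map_add, map_neg, taylor_mul, taylor_C, coeff_add, coeff_neg, coeff_C_mul, taylor_mul, taylor_C, coeff_C_mul]
  rw [polyOf_coeff, polyOf_coeff, polyOf_coeff, ln]
  rcases lt_trichotomy (j + 1) a with hj | hj | hj
  · rw [if_pos hj, if_pos (by omega), if_pos (by omega)]
    have := h j hj
    rw [pow_succ]
    linear_combination (-1 / 2) ^ j * this
  · rw [if_neg (by omega), if_pos (by omega), if_pos (by omega)]
    have := h' j hj
    linear_combination -(-1 / 2) ^ j * this
  · rw [if_neg (by omega), if_neg (by omega), if_neg (by omega)]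
    ring

/-- the derivative polynomial -/
def php (a b n : ℕ) : ℝ[X] := C (cc a n (a + b - 1 - n)) * polyOf a (ec a b n)

lemma php_ode {a b n : ℕ} (hb : 0 < b) (h2 : a + b ≤ 2 * n) (hn : n < a) :
    ∃ d : ℝ, DD a b (php a b n) = -(C (ln a b n) * php a b n) + C d * jacq a b (a + b - 1 - n) := by
  set m := a + b - 1 - n with hm
  have hmcast : (m : ℝ) = (a : ℝ) + b - 1 - n := by
    rw [hm, Nat.cast_sub (by omega), Nat.cast_sub (by omega)]; push_cast; ring
  have hbig : ∀ j, m < j → fJ a b n j 0 = 0 := fun j hj => by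
    rw [← fJ_symm (by omega) (by omega), ← hm, fJ_big hj]
  have e1 : DD a b (polyOf a (ec a b n)) = -(C (ln a b n) * polyOf a (ec a b n)) +
      C (2 * n + 1 - a - b : ℝ) * polyOf a (fun j => fJ a b n j 0) := by
    apply polyOf_ode
    · intro j hj
      exact ec_rec hj hn hb
    · intro j hj
      rw [hbig j (by omega)]
      by_cases hjn : j = n
      · simp [hjn]
      · rw [ec, fJ_big (show n < j by omega), ← hm, fJ_big (show m < j by omega)]
        simp
  have e2 : DD a b (polyOf a (fun j => fJ a b n j 0)) = -(C (ln a b m) * polyOf a (fun j => fJ a b n j 0)) := by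
    have := polyOf_ode (a := a) (b := b) (n := n) (c := fun j => fJ a b n j 0) (d := 0) (k := 0)
      (fun j hj => by rw [fJ_rec hj]; simp)
      (fun j hj => by simp only [hbig j (by omega)]; simp)
    rw [this]
    have : ln a b n = ln a b m := by simp only [ln, hmcast]; ring
    rw [this]; simp
  have hq1 : (jacq a b m).eval 1 ≠ 0 := by
    rw [jacq_one (by omega)]
    have : 0 < (a - 1).choose m := Nat.choose_pos (by omega)
    have : ((a - 1).choose m : ℝ) ≠ 0 := by positivity
    simp [this]
  set Q := polyOf a (fun j => fJ a b n j 0) with hQ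
  have e3 : Q = C (Q.eval 1 / (jacq a b m).eval 1) * jacq a b m := by
    rw [← sub_eq_zero]
    apply uniq (a := a) (b := b) (μ := ln a b m)
    · rw [eval_sub, eval_mul, eval_C, div_mul_cancel₀ _ hq1, sub_self]
    · have h1 := DD_jacq a b m
      rw [DD] at e2 h1 ⊢
      rw [Dp_sub, Dp_C_mul, e2, h1]; ring
    · intro j hj
      rw [map_sub, coeff_sub, hQ, polyOf_coeff, if_neg (by omega), taylor_mul, taylor_C, coeff_C_mul,
        coeff_eq_zero_of_natDegree_lt]
      · simp
      · rw [natDegree_taylor]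
        exact (jac_natDegree _ _ _).trans_lt (by omega)
  refine ⟨cc a n m * ((2 * n + 1 - a - b : ℝ) * (Q.eval 1 / (jacq a b m).eval 1)), ?_⟩
  rw [php, DD, Dp_C_mul]
  rw [DD] at e1
  rw [e1]
  nth_rewrite 1 [e3]
  simp only [C_mul]
  ring

lemma php_eval {a b n : ℕ} (hb : 0 < b) (h2 : a + b ≤ 2 * n) (hn : n < a) (x : ℝ) :
    (php a b n).eval x = deriv (fun s => phiJ (-(a : ℤ)) (-(b : ℤ)) n s x) 0 -
      deriv (fun s => phiJ (-(a : ℤ)) (-(b : ℤ)) (a + b - 1 - n) s x) 0 := by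
  have key : ∀ u, u < a → HasDerivAt (fun s => phiJ (-(a : ℤ)) (-(b : ℤ)) u s x)
      (cc a u (a + b - 1 - u) * ∑ j ∈ range a, deriv (fJ a b u j) 0 * ((1 - x) / 2) ^ j) 0 := by
    intro u hu
    have h1 : (fun s => phiJ (-(a : ℤ)) (-(b : ℤ)) u s x) =
        fun s => cc a u (a + b - 1 - u) * ∑ j ∈ range a, fJ a b u j s * ((1 - x) / 2) ^ j := by
      ext s
      have h2 : (-(-(a : ℤ)) - -(b : ℤ) - (u : ℤ) - 1).toNat = a + b - 1 - u := by omega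
      simp only [phiJ, h2, cc]
      push_cast
      congr 1
      rw [← sum_subset (range_mono (show u + 1 ≤ a by omega))]
      · rfl
      · intro j _ hj
        rw [fJ_big (by simpa using hj)]; simp
    rw [h1]
    exact (HasDerivAt.fun_sum fun j hj => (fJ_hasDeriv a b u j (mem_range.1 hj)).mul_const _).const_mul _
  rw [(key n hn).deriv, (key (a + b - 1 - n) (by omega)).deriv]
  have h3 : cc a (a + b - 1 - n) (a + b - 1 - (a + b - 1 - n)) = cc a n (a + b - 1 - n) := by
    have : a + b - 1 - (a + b - 1 - n) = n := by omega
    rw [this, cc, cc, max_comm, max_comm (Nat.factorial _)]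
  rw [h3, php, eval_mul, eval_C, polyOf_eval, ← mul_sub, ← sum_sub_distrib]
  congr 1
  refine sum_congr rfl fun j _ => ?_
  rw [ec, sub_mul]

/-- middle polynomials -/
def mid (a b n : ℕ) : ℝ[X] := if a + b ≤ 2 * n then php a b n else jacq a b n

/-- combination -/
def yy (a b : ℕ) (M : ℕ → ℝ) (f : ℕ) : ℝ[X] := C ((M (b - 1 - f) - 1)⁻¹) * jacq a b f + gg a b (b - 1 - f)

/-- constant -/
def kap (a b n : ℕ) : ℝ := (-1 : ℝ) ^ (-(b : ℤ) + (n : ℤ)) *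
      ((((n : ℤ) + -(a : ℤ)).toNat.factorial : ℝ) * (((n : ℤ) + -(b : ℤ)).toNat.factorial : ℝ) *
        ((-(-(a : ℤ)) - -(b : ℤ) - (n : ℤ) - 1).toNat.factorial : ℝ)) / (n.factorial : ℝ)

/-- Phat polynomial -/
def PP (a b : ℕ) (M : ℕ → ℝ) (n : ℕ) : ℝ[X] :=
  if n < b then jacq a b n else if n < a then mid a b n else
    if n < a + b then C (kap a b n) * yy a b M (a + b - 1 - n) else jacq a b n

lemma PP_eval {a b : ℕ} (hb : 0 < b) (hba : b ≤ a) (M : ℕ → ℝ) (n : ℕ) (x : ℝ) :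
    Phat (-(a : ℤ)) (-(b : ℤ)) M n x = (PP a b M n).eval x := by
  have hceil : (⌈((-(-(a : ℤ)) - -(b : ℤ) : ℤ) : ℚ) / 2⌉ ≤ (n : ℤ)) ↔ a + b ≤ 2 * n := by
    rw [Int.ceil_le, div_le_iff₀ (by norm_num)]
    push_cast
    rw [← Nat.cast_le (α := ℚ)]
    push_cast
    constructor <;> intro h <;> linarith
  have hj : ∀ n, jacobiP ((-(a : ℤ) : ℤ) : ℝ) ((-(b : ℤ) : ℤ) : ℝ) n x = (jacq a b n).eval x := by
    intro n
    rw [jacq, eval_jac]; push_cast; rfl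
  simp only [Phat, hceil, hj]
  unfold PP mid
  by_cases h1 : a + b ≤ 2 * n ∧ n < a
  · rw [if_pos ⟨h1.1, by omega⟩, if_neg (by omega), if_pos h1.2, if_pos h1.1, php_eval hb h1.1 h1.2]
    have h2 : (-(-(a : ℤ)) - -(b : ℤ) - (n : ℤ) - 1).toNat = a + b - 1 - n := by omega
    rw [h2]
  · rw [if_neg (by omega)]
    by_cases h2 : a ≤ n ∧ n < a + b
    · rw [if_pos (by omega), if_neg (by omega), if_neg (by omega), if_pos (by omega)]
      rw [eval_mul, eval_C, kap, yy]
      congr 1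
      have e1 : (-(-(a : ℤ)) - -(b : ℤ) - (n : ℤ) - 1).toNat = a + b - 1 - n := by omega
      have e2 : (-(a : ℤ) + (n : ℤ)).toNat = b - 1 - (a + b - 1 - n) := by omega
      have e3 : (-(-(a : ℤ))).toNat = a := by omega
      rw [e1, e2, e3]
      simp only [eval_add, eval_mul, eval_C, gg, eval_pow, eval_sub, eval_one, eval_X, eval_jac]
      congr 1
      push_cast
      rw [neg_neg, div_pow, inv_pow]
      ring
    · rw [if_neg (by omega)]
      split_ifs <;> first | rfl | omega

end
end EHJ

open Finset MeasureTheory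

namespace EHJ
open Polynomial
noncomputable section

lemma Wr_comb {n : ℕ} (e P : Fin n → ℝ[X]) (h : ∀ i, P i ∈ Submodule.span ℝ (Set.range e)) :
    ∃ d : ℝ, Wr (derivative : ℝ[X] → ℝ[X]) P = C d * Wr (derivative : ℝ[X] → ℝ[X]) e := by
  have h' : ∀ i, ∃ c : Fin n → ℝ, ∑ j, c j • e j = P i := fun i =>
    (Submodule.mem_span_range_iff_exists_fun ℝ).1 (h i)
  choose c hc using h'
  refine ⟨Matrix.det (Matrix.of c), ?_⟩
  rw [Wr, Wr, RingHom.map_det, ← Matrix.det_mul]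
  congr 1
  ext1 i j
  rw [Matrix.mul_apply, Matrix.of_apply, ← hc i, iterate_derivative_sum]
  refine sum_congr rfl fun k _ => ?_
  rw [iterate_derivative_smul, smul_eq_C_mul]
  rfl

lemma elemOf_mem (F : Finset ℕ) (i : Fin F.card) : elemOf F i ∈ F := (F.orderIsoOfFin rfl i).2

lemma elemOf_lt {F : Finset ℕ} {i j : Fin F.card} : elemOf F i < elemOf F j ↔ i < j :=
  (F.orderIsoOfFin rfl).lt_iff_lt

lemma elemOf_surj {F : Finset ℕ} {f : ℕ} (hf : f ∈ F) : ∃ i, elemOf F i = f := by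
  obtain ⟨i, hi⟩ := (F.orderIsoOfFin rfl).surjective ⟨f, hf⟩
  exact ⟨i, by rw [elemOf, hi]⟩

lemma elemOf_inj {F : Finset ℕ} {i j : Fin F.card} (h : elemOf F i = elemOf F j) : i = j :=
  (F.orderIsoOfFin rfl).injective (Subtype.ext h)

lemma prod_elemOf (F : Finset ℕ) (φ : ℕ → ℝ) : ∏ i, φ (elemOf F i) = ∏ f ∈ F, φ f := by
  refine prod_bij (fun i _ => elemOf F i) (fun i _ => elemOf_mem F i) (fun i _ j _ h => elemOf_inj h)
    (fun f hf => ?_) (fun _ _ => rfl)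
  obtain ⟨i, hi⟩ := elemOf_surj hf
  exact ⟨i, mem_univ _, hi⟩

lemma iterDeriv_eval (q : ℝ[X]) (j : ℕ) : iteratedDeriv j (fun x => q.eval x) = fun x => (derivative^[j] q).eval x := by
  induction j with
  | zero => simp
  | succ j ih =>
    rw [iteratedDeriv_succ, ih]
    ext x
    rw [Polynomial.deriv, Function.iterate_succ_apply']

lemma omega_eq {a b : ℕ} (hb : 0 < b) (hba : b ≤ a) (M : ℕ → ℝ) (F : Finset ℕ) (n : ℕ) (h : F.card = n)
    (e : Fin n → ℝ[X]) (he : ∀ f ∈ F, PP a b M f ∈ Submodule.span ℝ (Set.range e)) :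
    ∃ d : ℝ, ∀ x, OmegaJ (-(a : ℤ)) (-(b : ℤ)) M F x = d * (Wr (derivative : ℝ[X] → ℝ[X]) e).eval x := by
  subst h
  obtain ⟨d, hd⟩ := Wr_comb e (fun i => PP a b M (elemOf F i)) (fun i => he _ (elemOf_mem F i))
  refine ⟨d, fun x => ?_⟩
  rw [← eval_C (a := d) (x := x), ← eval_mul, ← hd, OmegaJ, Wr, ← coe_evalRingHom, RingHom.map_det]
  congr 1
  ext1 i j
  have : Phat (-(a : ℤ)) (-(b : ℤ)) M (elemOf F i) = fun x => (PP a b M (elemOf F i)).eval x := by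
    ext x; exact PP_eval hb hba M _ x
  rw [Matrix.of_apply, this, iterDeriv_eval]
  rfl

/-- modified family -/
def uu (a b : ℕ) (M : ℕ → ℝ) (F : Finset ℕ) (n : ℕ) : ℝ[X] :=
  if n < b then jacq a b n - gg a b (b - 1 - n) else if n < a then mid a b n else
    if n < a + b then (if a + b - 1 - n ∈ F then gg a b (b - 1 - (a + b - 1 - n)) else yy a b M (a + b - 1 - n))
    else jacq a b n

lemma ln_symm {a b n : ℕ} (h : n < a + b) : ln a b (a + b - 1 - n) = ln a b n := by
  obtain ⟨k, hk⟩ : ∃ k, a + b = n + 1 + k := ⟨a + b - n - 1, by omega⟩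
  have : a + b - 1 - n = k := by omega
  rw [this]
  have hc : (a : ℝ) + b = n + 1 + k := by exact_mod_cast hk
  simp only [ln]
  linear_combination (n - k : ℝ) * hc

lemma DD_sub (a b : ℕ) (x y : ℝ[X]) : DD a b (x - y) = DD a b x - DD a b y := Dp_sub _ _ _ _
lemma DD_add (a b : ℕ) (x y : ℝ[X]) : DD a b (x + y) = DD a b x + DD a b y := Dp_add _ _ _ _
lemma DD_C_mul (a b : ℕ) (r : ℝ) (y : ℝ[X]) : DD a b (C r * y) = C r * DD a b y := Dp_C_mul _ _ _ _

lemma DD_yy {a b f : ℕ} (M : ℕ → ℝ) (hf : f < b) : DD a b (yy a b M f) = -(C (ln a b f) * yy a b M f) := by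
  rw [yy, DD_add, DD_C_mul, DD_jacq, DD_gg' hf]; ring

lemma uu_ode {a b : ℕ} (hb : 0 < b) (hba : b ≤ a) (M : ℕ → ℝ) (F : Finset ℕ) (n : ℕ) :
    DD a b (uu a b M F n) = -(C (ln a b n) * uu a b M F n) ∨
    (b ≤ a + b - 1 - n ∧ a + b - 1 - n < n ∧ n < a ∧ ∃ d : ℝ, DD a b (uu a b M F n) =
      -(C (ln a b n) * uu a b M F n) + C d * uu a b M F (a + b - 1 - n)) := by
  by_cases h1 : n < b
  · left
    rw [uu, if_pos h1, DD_sub, DD_jacq, DD_gg' h1]; ring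
  by_cases h2 : n < a
  · have e : uu a b M F n = mid a b n := by rw [uu, if_neg h1, if_pos h2]
    rw [e, mid]
    split_ifs with h3
    · right
      refine ⟨by omega, by omega, by omega, ?_⟩
      obtain ⟨d, hd⟩ := php_ode hb h3 h2
      refine ⟨d, ?_⟩
      rw [hd, uu, if_neg (by omega), if_pos (by omega), mid, if_neg (by omega)]
    · left; exact DD_jacq _ _ _
  by_cases h3 : n < a + b
  · left
    rw [uu, if_neg h1, if_neg h2, if_pos h3]
    rw [← ln_symm h3]
    split_ifs
    · exact DD_gg' (by omega)
    · exact DD_yy M (by omega)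
  · left
    rw [uu, if_neg h1, if_neg h2, if_neg h3]
    exact DD_jacq _ _ _

lemma uu_span {a b : ℕ} (hba : b ≤ a) (M : ℕ → ℝ) (F : Finset ℕ)
    (hF : ∀ n, b ≤ n → n < a + b → n ∈ F) (S : Submodule ℝ ℝ[X]) (f : ℕ) (hf : f ∈ F)
    (hS : uu a b M F f ∈ S)
    (hS1 : f < b → uu a b M F (a + b - 1 - f) ∈ S)
    (hS2 : a ≤ f → f < a + b → a + b - 1 - f ∈ F → uu a b M F (a + b - 1 - f) ∈ S) : PP a b M f ∈ S := by
  rw [PP]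
  split_ifs with h1 h2 h3
  · have h := hS1 h1
    rw [uu, if_neg (by omega), if_neg (by omega), if_pos (by omega),
      if_pos (by rwa [show a + b - 1 - (a + b - 1 - f) = f by omega]),
      show a + b - 1 - (a + b - 1 - f) = f by omega] at h
    rw [uu, if_pos h1] at hS
    simpa using S.add_mem hS h
  · rwa [uu, if_neg h1, if_pos h2] at hS
  · rw [← smul_eq_C_mul]
    apply S.smul_mem
    rw [uu, if_neg h1, if_neg h2, if_pos h3] at hS
    split_ifs at hS with h4
    · have h := hS2 (by omega) h3 h4
      rw [uu, if_pos (by omega)] at h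
      have h5 := S.add_mem hS h
      rw [add_sub_cancel] at h5
      rw [yy, ← smul_eq_C_mul]
      exact S.add_mem (S.smul_mem _ h5) hS
    · exact hS
  · rwa [uu, if_neg h1, if_neg h2, if_neg h3] at hS

/-- coefficient -/
def pK : KK := ι (1 - X ^ 2)
/-- coefficient -/
def gK (a b : ℕ) : KK := ι (C (-(b : ℝ) - -(a : ℝ)) - C (-(a : ℝ) + -(b : ℝ) + 2) * X)
/-- denominator -/
def EE (a b : ℕ) : ℝ[X] := (1 - X) ^ a * (1 + X) ^ b
/-- weight -/
def wK (a b : ℕ) : KK := 1 / ι (EE a b)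

lemma EE_ne (a b : ℕ) : EE a b ≠ 0 := by
  intro h
  have := congrArg (eval 0) h
  simp [EE] at this

lemma ιEE_ne (a b : ℕ) : ι (EE a b) ≠ 0 := fun h => EE_ne a b (ι_eq_zero.1 h)

lemma der_EE (a b : ℕ) : (1 - X ^ 2) * derivative (EE a b) = (C ((b : ℝ) - a) - C ((a : ℝ) + b) * X) * EE a b := by
  have h1 : (1 - X) * derivative ((1 - X : ℝ[X]) ^ a) = -(C (a : ℝ) * (1 - X) ^ a) := by
    cases a with
    | zero => simp
    | succ a => rw [derivative_pow_succ]; simp; ring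
  have h2 : (1 + X) * derivative ((1 + X : ℝ[X]) ^ b) = (C (b : ℝ) * (1 + X) ^ b) := by
    cases b with
    | zero => simp
    | succ a => rw [derivative_pow_succ]; simp; ring
  rw [EE, derivative_mul, C_sub, C_add]
  linear_combination (1 + X) * (1 + X) ^ b * h1 + (1 - X) * (1 - X) ^ a * h2

lemma wK_eq (a b : ℕ) : δ (pK * wK a b) = gK a b * wK a b := by
  have hE := ιEE_ne a b
  rw [pK, wK, gK, mul_one_div, mul_one_div, ddiv _ _ _ hE, δ_ι, δ_ι]
  rw [div_eq_div_iff (pow_ne_zero _ hE) hE]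
  simp only [← map_mul, ← map_sub, ← map_pow]
  rw [ι_inj]
  have h := der_EE a b
  have h2 : derivative (1 - X ^ 2 : ℝ[X]) = - C 2 * X := by
    simp
    rw [show (2 : ℝ) = 1 + 1 by norm_num, C_add, C_1]
  rw [h2]
  simp only [C_sub, C_add, C_neg] at *
  linear_combination (- EE a b) * h

lemma Dop_ι (a b : ℕ) (y : ℝ[X]) : Dop δ pK (gK a b) 0 (ι y) = ι (DD a b y) := by
  simp only [Dop, δ_ι, pK, gK, DD, Dp, map_add, map_mul, zero_mul, add_zero]

/-- polynomial Wronskian of the family -/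
def WG (a b : ℕ) (M : ℕ → ℝ) (F G : Finset ℕ) : ℝ[X] :=
  Wr (derivative : ℝ[X] → ℝ[X]) (fun i : Fin G.card => uu a b M F (elemOf G i))

/-- polynomial Wronskian of the family plus one -/
def WGy (a b : ℕ) (M : ℕ → ℝ) (F G : Finset ℕ) (y : ℝ[X]) : ℝ[X] :=
  Wr (derivative : ℝ[X] → ℝ[X]) (Fin.snoc (fun i : Fin G.card => uu a b M F (elemOf G i)) y : Fin (G.card + 1) → ℝ[X])

lemma ι_snoc {n : ℕ} (u : Fin n → ℝ[X]) (y : ℝ[X]) :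
    (Fin.snoc (fun i => ι (u i)) (ι y) : Fin (n + 1) → KK) = fun i => ι ((Fin.snoc u y : Fin (n + 1) → ℝ[X]) i) := by
  ext i
  refine Fin.lastCases ?_ (fun i => ?_) i
  · simp
  · simp

lemma WGy_ne {a b : ℕ} {M : ℕ → ℝ} {F G : Finset ℕ} {y : ℝ[X]} (h : WGy a b M F G y ≠ 0) : WG a b M F G ≠ 0 := by
  have h1 : Wr δ (Fin.snoc (fun i : Fin G.card => ι (uu a b M F (elemOf G i))) (ι y) : Fin (G.card + 1) → KK) ≠ 0 := by
    rw [ι_snoc, Wr_ι]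
    exact fun h2 => h (ι_eq_zero.1 h2)
  have h2 := Wr_ne_of_snoc δ _ _ h1
  rw [Wr_ι] at h2
  exact fun h3 => h2 (ι_eq_zero.2 h3)

theorem chainG {a b : ℕ} (hb : 0 < b) (hba : b ≤ a) (M : ℕ → ℝ) (F G : Finset ℕ)
    (hG : ∀ n, b ≤ n → n < a → n ∈ G) (hW : WG a b M F G ≠ 0) :
    ∃ (T : KK →ₗ[ℝ] KK) (V' : KK),
      (∀ y, T (Dop δ pK (gK a b) 0 y) = Dop δ pK (gK a b + (G.card : KK) * δ pK) V' (T y)) ∧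
      (∀ y, ι (WGy a b M F G y) = ι (WG a b M F G) * T (ι y)) ∧
      (∀ z v, DD a b z = -(C (ln a b v) * z) → ∃ R : KK → KK, IsDO δ R ∧
        ∀ y, pK ^ G.card * wK a b * T y * T (ι z) = (∏ f ∈ G, (ln a b v - ln a b f)) • (wK a b * y * ι z) + δ (R y)) ∧
      (∀ y z v, DD a b y = -(C (ln a b v) * y) → DD a b z = -(C (ln a b v) * z) →
        pK * (pK ^ G.card * wK a b) * (T (ι y) * δ (T (ι z)) - δ (T (ι y)) * T (ι z)) =
          (∏ f ∈ G, (ln a b v - ln a b f)) • (pK * wK a b * (ι y * δ (ι z) - δ (ι y) * ι z))) := by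
  have key : ∀ y (r : ℝ), DD a b y = -(C r * y) → Dop δ pK (gK a b) 0 (ι y) = (-r) • ι y := by
    intro y r h
    rw [Dop_ι, h, rsmul, map_neg, map_mul, ι_C, map_neg, neg_mul]
  obtain ⟨T, V', h1, h2, h3, h4⟩ := chain δ pK G.card (fun i : Fin G.card => ι (uu a b M F (elemOf G i)))
    (fun i => -ln a b (elemOf G i)) (gK a b) 0 (wK a b) (wK_eq a b) (fun i => by
      rcases uu_ode hb hba M F (elemOf G i) with h | ⟨h5, h6, h7, d, hd⟩
      · left; exact key _ _ h
      · right
        obtain ⟨j, hj⟩ := elemOf_surj (hG _ h5 (by omega))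
        refine ⟨j, elemOf_lt.1 (by omega), d, ?_⟩
        rw [hj, Dop_ι, hd, rsmul, rsmul, map_add, map_neg, map_mul, map_mul, ι_C, ι_C, map_neg, neg_mul])
    (by rw [Wr_ι]; exact fun h => hW (ι_eq_zero.1 h))
  have hprod : ∀ v, ∏ i : Fin G.card, (-ln a b (elemOf G i) - -ln a b v) = ∏ f ∈ G, (ln a b v - ln a b f) := by
    intro v
    rw [← prod_elemOf]
    exact prod_congr rfl fun i _ => by ring
  refine ⟨T, V', h1, fun y => ?_, fun z v hz => ?_, fun y z v hy hz => ?_⟩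
  · have := h2 (ι y)
    rw [ι_snoc, Wr_ι, Wr_ι] at this
    exact this
  · have := h3 (ι z) _ (key _ _ hz)
    rwa [hprod] at this
  · have := h4 _ _ _ (key _ _ hy) (key _ _ hz)
    rwa [hprod] at this

end
end EHJ

open Finset MeasureTheory

namespace EHJ
open Polynomial
noncomputable section

lemma DD_st (a b i j : ℕ) : DD a b ((X - C 1) ^ (i + 1) * (X - C (-1)) ^ (j + 1)) =
    -((X - C 1) ^ i * (X - C (-1)) ^ j * (C (((i : ℝ) + 1) * (i + 1 - a)) * (X - C (-1)) ^ 2 +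
      C (((j : ℝ) + 1) * (j + 1 - b)) * (X - C 1) ^ 2 +
      C (2 * ((i : ℝ) + 1) * (j + 1) + (-(a : ℝ) + 1) * (j + 1) + (-(b : ℝ) + 1) * (i + 1)) * ((X - C 1) * (X - C (-1))))) := by
  have h := Dp_st (-(a : ℝ)) (-(b : ℝ)) (i + 1) (j + 1)
  have hs : (X - C (1 : ℝ)) * (X - C (-1)) ≠ 0 := mul_ne_zero (X_sub_C_ne_zero _) (X_sub_C_ne_zero _)
  apply mul_left_cancel₀ hs
  rw [DD, h]
  push_cast
  simp only [← sub_eq_add_neg]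
  ring

lemma step_s {a b i j : ℕ} (hi : a ≤ i) (lam : ℝ) {P : ℝ[X]} (hP : (X - C 1) ^ i * (X - C (-1)) ^ j ∣ P) :
    ∃ z, (X - C 1) ^ i * (X - C (-1)) ^ j ∣ z ∧
      (X - C 1) ^ (i + 1) * (X - C (-1)) ^ j ∣ P - (DD a b z + C lam * z) := by
  obtain ⟨P', rfl⟩ := hP
  have hi' : (a : ℝ) ≤ i := by exact_mod_cast hi
  have hn : -4 * ((i : ℝ) + 1) * (i + 1 - a) ≠ 0 := by
    have : 0 < ((i : ℝ) + 1) * (i + 1 - a) := by apply mul_pos <;> [positivity; linarith]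
    linarith
  set c := P'.eval 1 / (-4 * ((i : ℝ) + 1) * (i + 1 - a)) with hc
  refine ⟨C c * ((X - C 1) ^ (i + 1) * (X - C (-1)) ^ (j + 1)), ⟨C c * (X - C 1) * (X - C (-1)), by ring⟩, ?_⟩
  rw [DD_C_mul, DD_st]
  have h0 : (X - C 1) ∣ P' + C c * (C (((i : ℝ) + 1) * (i + 1 - a)) * (X - C (-1)) ^ 2 +
      C (((j : ℝ) + 1) * (j + 1 - b)) * (X - C 1) ^ 2 +
      C (2 * ((i : ℝ) + 1) * (j + 1) + (-(a : ℝ) + 1) * (j + 1) + (-(b : ℝ) + 1) * (i + 1)) * ((X - C 1) * (X - C (-1)))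
      - C lam * ((X - C 1) * (X - C (-1)))) := by
    rw [dvd_iff_isRoot, IsRoot.def]
    simp only [eval_add, eval_mul, eval_sub, eval_C, eval_X, eval_pow]
    have : c * (-4 * ((i : ℝ) + 1) * (i + 1 - a)) = P'.eval 1 := by rw [hc, div_mul_cancel₀ _ hn]
    rw [← this]; ring
  obtain ⟨r, hr⟩ := h0
  refine ⟨r, ?_⟩
  linear_combination ((X - C 1) ^ i * (X - C (-1)) ^ j) * hr

lemma step_t {a b i j : ℕ} (hj : b ≤ j) (lam : ℝ) {P : ℝ[X]} (hP : (X - C 1) ^ i * (X - C (-1)) ^ j ∣ P) :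
    ∃ z, (X - C 1) ^ i * (X - C (-1)) ^ j ∣ z ∧
      (X - C 1) ^ i * (X - C (-1)) ^ (j + 1) ∣ P - (DD a b z + C lam * z) := by
  obtain ⟨P', rfl⟩ := hP
  have hi' : (b : ℝ) ≤ j := by exact_mod_cast hj
  have hn : -4 * ((j : ℝ) + 1) * (j + 1 - b) ≠ 0 := by
    have : 0 < ((j : ℝ) + 1) * (j + 1 - b) := by apply mul_pos <;> [positivity; linarith]
    linarith
  set c := P'.eval (-1) / (-4 * ((j : ℝ) + 1) * (j + 1 - b)) with hc
  refine ⟨C c * ((X - C 1) ^ (i + 1) * (X - C (-1)) ^ (j + 1)), ⟨C c * (X - C 1) * (X - C (-1)), by ring⟩, ?_⟩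
  rw [DD_C_mul, DD_st]
  have h0 : (X - C (-1)) ∣ P' + C c * (C (((i : ℝ) + 1) * (i + 1 - a)) * (X - C (-1)) ^ 2 +
      C (((j : ℝ) + 1) * (j + 1 - b)) * (X - C 1) ^ 2 +
      C (2 * ((i : ℝ) + 1) * (j + 1) + (-(a : ℝ) + 1) * (j + 1) + (-(b : ℝ) + 1) * (i + 1)) * ((X - C 1) * (X - C (-1)))
      - C lam * ((X - C 1) * (X - C (-1)))) := by
    rw [dvd_iff_isRoot, IsRoot.def]
    simp only [eval_add, eval_mul, eval_sub, eval_C, eval_X, eval_pow]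
    have : c * (-4 * ((j : ℝ) + 1) * (j + 1 - b)) = P'.eval (-1) := by rw [hc, div_mul_cancel₀ _ hn]
    rw [← this]; ring
  obtain ⟨r, hr⟩ := h0
  refine ⟨r, ?_⟩
  linear_combination ((X - C 1) ^ i * (X - C (-1)) ^ j) * hr

lemma approx {a b : ℕ} (lam : ℝ) {q : ℝ[X]} (hq : (X - C 1) ^ a * (X - C (-1)) ^ b ∣ q) (m : ℕ) :
    ∃ z, (X - C 1) ^ a * (X - C (-1)) ^ b ∣ z ∧
      (X - C 1) ^ (a + m) * (X - C (-1)) ^ (b + m) ∣ q - (DD a b z + C lam * z) := by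
  induction m with
  | zero => exact ⟨0, dvd_zero _, by simpa [DD, Dp] using hq⟩
  | succ m ih =>
    obtain ⟨z, hz, hd⟩ := ih
    obtain ⟨z1, hz1, hd1⟩ := step_s (b := b) (Nat.le_add_right a m) lam hd
    obtain ⟨z2, hz2, hd2⟩ := step_t (a := a) (Nat.le_add_right b m) lam hd1
    have l1 : (X - C (1 : ℝ)) ^ a * (X - C (-1)) ^ b ∣ (X - C 1) ^ (a + m) * (X - C (-1)) ^ (b + m) :=
      mul_dvd_mul (pow_dvd_pow _ (by omega)) (pow_dvd_pow _ (by omega))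
    have l2 : (X - C (1 : ℝ)) ^ a * (X - C (-1)) ^ b ∣ (X - C 1) ^ (a + m + 1) * (X - C (-1)) ^ (b + m) :=
      mul_dvd_mul (pow_dvd_pow _ (by omega)) (pow_dvd_pow _ (by omega))
    refine ⟨z + z1 + z2, dvd_add (dvd_add hz (l1.trans hz1)) (l2.trans hz2), ?_⟩
    rw [DD_add, DD_add]
    have e : q - (DD a b z + DD a b z1 + DD a b z2 + C lam * (z + z1 + z2)) =
      q - (DD a b z + C lam * z) - (DD a b z1 + C lam * z1) - (DD a b z2 + C lam * z2) := by ring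
    rw [e]; exact hd2

lemma Val_div {x0 : ℝ} (N : ℝ[X]) {d : ℝ[X]} (hd : d.eval x0 ≠ 0) : Val x0 0 (ι N / ι d) := by
  have hd0 : ι d ≠ 0 := by
    intro h; rw [ι_eq_zero] at h; simp [h] at hd
  exact ⟨d, N, hd, by rw [mul_div_cancel₀ _ hd0]; simp⟩

lemma Val_div_der {x0 : ℝ} (N : ℝ[X]) {d : ℝ[X]} (hd : d.eval x0 ≠ 0) : Val x0 0 (δ (ι N / ι d)) := by
  have hd0 : ι d ≠ 0 := by
    intro h; rw [ι_eq_zero] at h; simp [h] at hd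
  rw [ddiv _ _ _ hd0, δ_ι, δ_ι]
  simp only [← map_mul, ← map_sub, ← map_pow]
  exact Val_div _ (by simpa using hd)

lemma lagrange {p g V w : KK} (hw : δ (p * w) = g * w) (x y : KK) :
    w * (x * Dop δ p g V y - y * Dop δ p g V x) = δ (p * w * (x * δ y - y * δ x)) := by
  rw [dmul, map_sub, dmul, dmul, hw, Dop, Dop]; ring

lemma wk_eq (a b k : ℕ) : δ (pK * (pK ^ k * wK a b)) = (gK a b + (k : KK) * δ pK) * (pK ^ k * wK a b) := by
  have h : pK * (pK ^ k * wK a b) = pK ^ k * (pK * wK a b) := by ring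
  rw [h, dmul, wK_eq, Derivation.leibniz_pow]
  cases k with
  | zero => simp
  | succ k => simp only [smul_eq_mul, nsmul_eq_mul, Nat.add_sub_cancel]; ring

lemma wk_poly {a b k : ℕ} (ha : a ≤ k) (hb : b ≤ k) : pK ^ k * wK a b = ι (EE (k - a) (k - b)) := by
  rw [wK, mul_one_div, div_eq_iff (ιEE_ne a b), ← map_mul, pK, ← map_pow, ι_inj, EE, EE]
  have h1 : (1 - X : ℝ[X]) ^ k = (1 - X) ^ (k - a) * (1 - X) ^ a := by rw [← pow_add, Nat.sub_add_cancel ha]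
  have h2 : (1 + X : ℝ[X]) ^ k = (1 + X) ^ (k - b) * (1 + X) ^ b := by rw [← pow_add, Nat.sub_add_cancel hb]
  rw [show (1 - X ^ 2 : ℝ[X]) = (1 - X) * (1 + X) by ring, mul_pow, h1, h2]
  ring

lemma EE_st (a b : ℕ) : EE a b = C ((-1) ^ a) * ((X - C 1) ^ a * (X - C (-1)) ^ b) := by
  have h1 : (1 - X : ℝ[X]) = C (-1) * (X - C 1) := by simp
  have h2 : (1 + X : ℝ[X]) = X - C (-1) := by simp [add_comm]
  rw [EE, h2, h1, mul_pow, C_pow, mul_assoc]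

lemma wK_mul (a b : ℕ) (Q : ℝ[X]) : wK a b * ι ((X - C 1) ^ a * (X - C (-1)) ^ b * Q) = ι (C ((-1) ^ a) * Q) := by
  rw [wK, one_div_mul_eq_div, div_eq_iff (ιEE_ne a b), ← map_mul, ι_inj, EE_st]
  have : (C ((-1) ^ a) * C ((-1) ^ a) : ℝ[X]) = 1 := by
    rw [← C_mul, ← mul_pow]; simp
  linear_combination (-((X - C 1) ^ a * (X - C (-1)) ^ b * Q)) * this

lemma EE_nonneg (a b : ℕ) {x : ℝ} (hx : x ∈ Set.Icc (-1 : ℝ) 1) : 0 ≤ (EE a b).eval x := by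
  simp only [EE, eval_mul, eval_pow, eval_sub, eval_add, eval_one, eval_X]
  exact mul_nonneg (pow_nonneg (by linarith [hx.2]) _) (pow_nonneg (by linarith [hx.1]) _)

lemma EE_pos (a b : ℕ) {x : ℝ} (hx : x ∈ Set.Ioo (-1 : ℝ) 1) : 0 < (EE a b).eval x := by
  simp only [EE, eval_mul, eval_pow, eval_sub, eval_add, eval_one, eval_X]
  exact mul_pos (pow_pos (by linarith [hx.2]) _) (pow_pos (by linarith [hx.1]) _)

set_option maxHeartbeats 2000000 in
theorem cond2_core {a b : ℕ} (hb : 0 < b) (hba : b ≤ a) (M : ℕ → ℝ) (F : Finset ℕ)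
    (hF : ∀ n, b ≤ n → n < a → n ∈ F) (hk : a ≤ F.card)
    (hW : ∀ x ∈ Set.Icc (-1 : ℝ) 1, (WG a b M F F).eval x ≠ 0) {v : ℕ} (hv : a + b ≤ v) :
    0 ≤ ∏ f ∈ F, (ln a b v - ln a b f) := by
  by_contra hneg
  push Not at hneg
  set Pr := ∏ f ∈ F, (ln a b v - ln a b f) with hPr
  set W := WG a b M F F with hWdef
  have hW1 := hW 1 (by norm_num)
  have hW2 := hW (-1) (by norm_num)
  have hW0 : W ≠ 0 := by intro h; simp [h] at hW1
  have hιW : ι W ≠ 0 := fun h => hW0 (ι_eq_zero.1 h)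
  obtain ⟨T, V', h1, h2, h3, -⟩ := chainG hb hba M F F hF hW0
  obtain ⟨Q, hQ, hqQ⟩ := jacq_big hv
  set q := jacq a b v with hq
  have hDq := DD_jacq a b v
  rw [← hq] at hDq
  obtain ⟨R, hR, hc⟩ := h3 q v hDq
  obtain ⟨k1, hk1⟩ := Val.isDO hR 1
  obtain ⟨k2, hk2⟩ := Val.isDO hR (-1)
  obtain ⟨z, ⟨Z, hZ⟩, hP⟩ := approx (a := a) (b := b) (ln a b v) ⟨Q, hqQ⟩ (1 + k1 + k2)
  set P := q - (DD a b z + C (ln a b v) * z) with hPdef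
  have hTform : ∀ y, T (ι y) = ι (WGy a b M F F y) / ι W := fun y => by
    rw [h2, mul_div_cancel_left₀ _ hιW]
  set k := F.card with hkdef
  set g' := gK a b + (k : KK) * δ pK with hg'
  set wk := pK ^ k * wK a b with hwk
  have hwkp : wk = ι (EE (k - a) (k - b)) := wk_poly hk (hba.trans hk)
  have e1 : Dop δ pK g' V' (T (ι q)) = -(algebraMap ℝ KK (ln a b v) * T (ι q)) := by
    rw [← h1, Dop_ι, hDq, map_neg, map_neg, map_mul, ι_C, ← rsmul, map_smul, rsmul]
  have e2 : T (ι P) = T (ι q) - (Dop δ pK g' V' (T (ι z)) + algebraMap ℝ KK (ln a b v) * T (ι z)) := by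
    rw [← h1, Dop_ι, hPdef, map_sub, map_sub, map_add, map_add, map_mul, ι_C, ← rsmul, map_smul, rsmul]
  have e3 := lagrange (V := V') (wk_eq a b k) (T (ι q)) (T (ι z))
  have e4 := lagrange (V := 0) (wK_eq a b) (ι q) (ι z)
  rw [Dop_ι, Dop_ι, hDq] at e4
  rw [← hg', ← hwk, e1] at e3
  have e5 := hc (ι P)
  rw [rsmul] at e5
  have hP' : ι P = ι q - (ι (DD a b z) + algebraMap ℝ KK (ln a b v) * ι z) := by
    rw [hPdef, map_sub, map_add, map_mul, ι_C]
  have e6 : δ (R (ι P) + pK * wk * (T (ι q) * δ (T (ι z)) - T (ι z) * δ (T (ι q))) -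
      Pr • (pK * wK a b * (ι q * δ (ι z) - ι z * δ (ι q)))) =
      wk * T (ι q) ^ 2 - algebraMap ℝ KK Pr * (wK a b * ι q ^ 2) := by
    rw [map_sub, map_add, Derivation.map_smul, rsmul, ← e3, ← e4]
    rw [e2, ← hPr] at e5
    simp only [map_neg, map_mul, ι_C]
    linear_combination (-1 : KK) * e5 - algebraMap ℝ KK Pr * wK a b * ι q * hP'
  have hwq : wK a b * ι q = ι (C ((-1) ^ a) * Q) := by rw [hqQ, wK_mul]
  have hwz : wK a b * ι z = ι (C ((-1) ^ a) * Z) := by rw [hZ, wK_mul]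
  have hwqq : wK a b * ι q ^ 2 = ι (EE a b * Q ^ 2) := by
    rw [pow_two, ← mul_assoc, hwq, ← map_mul, ι_inj, EE_st, hqQ]; ring
  have hval : ∀ x0 : ℝ, W.eval x0 ≠ 0 → Val x0 1 pK → Val x0 1 (R (ι P)) →
      Val x0 1 (R (ι P) + pK * wk * (T (ι q) * δ (T (ι z)) - T (ι z) * δ (T (ι q))) -
      Pr • (pK * wK a b * (ι q * δ (ι z) - ι z * δ (ι q)))) := by
    intro x0 hx0 hp hRP
    refine (hRP.add ?_).sub (Val.smul _ ?_)
    · rw [hTform, hTform, hwkp]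
      have v1 := (Val_div (WGy a b M F F q) hx0).mul (Val_div_der (WGy a b M F F z) hx0)
      have v2 := (Val_div (WGy a b M F F z) hx0).mul (Val_div_der (WGy a b M F F q) hx0)
      exact ((hp.mul (Val.poly0 (EE (k - a) (k - b)))).mul (v1.sub v2)).mono' (by omega)
    · have : pK * wK a b * (ι q * δ (ι z) - ι z * δ (ι q)) =
          pK * ((wK a b * ι q) * δ (ι z) - (wK a b * ι z) * δ (ι q)) := by ring
      rw [this, hwq, hwz, δ_ι, δ_ι, ← map_mul, ← map_mul, ← map_sub]
      exact (hp.mul (Val.poly0 _)).mono' (by omega)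
  have hzero := mono_zero (c := EE (k - a) (k - b) * WGy a b M F F q ^ 2 + C (-Pr) * (EE a b * Q ^ 2 * W ^ 2)) (d := W) hW
    (fun x hx => ?_) (by
      rw [e6, hwkp, hwqq, hTform]
      simp only [map_add, map_mul, map_pow, ι_C, map_neg]
      field_simp
      ring) (hval 1 hW1 ?_ (hk1 1 _ ?_)) (hval (-1) hW2 ?_ (hk2 1 _ ?_))
  · apply hQ
    apply eq_zero_of_infinite_isRoot
    refine (Set.Ioo_infinite (show (-1 : ℝ) < 1 by norm_num)).mono fun x hx => ?_
    have h := congrArg (eval x) hzero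
    simp only [eval_add, eval_mul, eval_pow, eval_C, eval_zero] at h
    have hx' := Set.Ioo_subset_Icc_self hx
    have p1 := mul_nonneg (EE_nonneg (k - a) (k - b) hx') (sq_nonneg ((WGy a b M F F q).eval x))
    have p2 := mul_nonneg (mul_nonneg (EE_nonneg a b hx') (sq_nonneg (Q.eval x))) (sq_nonneg (W.eval x))
    have p3 : eval x (EE a b) * eval x Q ^ 2 * eval x W ^ 2 = 0 := by nlinarith
    have h5 := (EE_pos a b hx).ne'
    have h6 := hW x hx'
    rcases mul_eq_zero.1 p3 with h | h
    · rcases mul_eq_zero.1 h with h | h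
      · exact absurd h h5
      · exact pow_eq_zero_iff two_ne_zero |>.1 h
    · exact absurd (pow_eq_zero_iff two_ne_zero |>.1 h) h6
  · simp only [eval_add, eval_mul, eval_pow, eval_C]
    have p1 := mul_nonneg (EE_nonneg (k - a) (k - b) hx) (sq_nonneg ((WGy a b M F F q).eval x))
    have p2 := mul_nonneg (mul_nonneg (EE_nonneg a b hx) (sq_nonneg (Q.eval x))) (sq_nonneg (W.eval x))
    have : 0 ≤ -Pr := by linarith
    positivity
  · refine Val.poly ⟨-(1 + X), ?_⟩
    rw [pow_one, C_1]; ring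
  · exact Val.poly (((pow_dvd_pow _ (by omega)).trans (Dvd.intro _ rfl)).trans hP)
  · refine Val.poly ⟨1 - X, ?_⟩
    rw [pow_one, C_neg, C_1]; ring
  · exact Val.poly (((pow_dvd_pow _ (by omega)).trans (Dvd.intro_left _ rfl)).trans hP)

end
end EHJ

open Finset MeasureTheory

namespace EHJ
open Polynomial
noncomputable section

lemma det_zero {n : ℕ} (A : Matrix (Fin n) (Fin n) ℝ) (S : Finset (Fin n)) (c : ℕ) (hc : c ≤ n)
    (hS : n < S.card + c) (h : ∀ i ∈ S, ∀ j : Fin n, (j : ℕ) < c → A i j = 0) : A.det = 0 := by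
  rw [Matrix.det_apply]
  refine sum_eq_zero fun σ _ => ?_
  set T : Finset (Fin n) := univ.filter (fun j : Fin n => (j : ℕ) < c) with hT
  have hTc : T.card = c := by
    rw [hT, Fin.card_filter_val_lt]; omega
  have : ∃ j ∈ T, σ j ∈ S := by
    by_contra hno
    push Not at hno
    have hdis : Disjoint (T.map σ.toEmbedding) S := by
      rw [disjoint_left]
      intro x hx
      obtain ⟨j, hj, rfl⟩ := mem_map.1 hx
      exact hno j hj
    have := card_le_univ (T.map σ.toEmbedding ∪ S)
    rw [card_union_of_disjoint hdis, card_map, hTc, Fintype.card_fin] at this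
    omega
  obtain ⟨j, hj, hjS⟩ := this
  have h0 : ∏ i, A (σ i) i = 0 := prod_eq_zero (i := j) (mem_univ j) (h _ hjS _ (mem_filter.1 hj).2)
  rw [h0, smul_zero]

lemma der_vanish {x0 : ℝ} {c j : ℕ} {y : ℝ[X]} (h : (X - C x0) ^ c ∣ y) (hj : j < c) :
    (derivative^[j] y).eval x0 = 0 := by
  have h1 := pow_sub_dvd_iterate_derivative_of_pow_dvd j h
  have h2 : (X - C x0) ∣ derivative^[j] y := (dvd_pow_self _ (by omega)).trans h1
  exact dvd_iff_isRoot.1 h2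

lemma WGy_zero {a b : ℕ} (M : ℕ → ℝ) (F G S : Finset ℕ) {y : ℝ[X]} {x0 : ℝ} {c : ℕ} (hSG : S ⊆ G)
    (hc : c ≤ G.card + 1) (hcard : G.card < S.card + c)
    (hS : ∀ f ∈ S, (X - C x0) ^ c ∣ uu a b M F f) (hy : (X - C x0) ^ c ∣ y) :
    (WGy a b M F G y).eval x0 = 0 := by
  rw [WGy, Wr, ← coe_evalRingHom, RingHom.map_det]
  set S1 : Finset (Fin G.card) := univ.filter (fun i => elemOf G i ∈ S) with hS1
  have hS1c : S1.card = S.card := by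
    refine card_bij (fun i _ => elemOf G i) (fun i hi => (mem_filter.1 hi).2) (fun i _ j _ h => elemOf_inj h) ?_
    intro f hf
    obtain ⟨i, hi⟩ := elemOf_surj (hSG hf)
    exact ⟨i, by rw [hS1, mem_filter]; exact ⟨mem_univ _, by rwa [hi]⟩, hi⟩
  refine det_zero _ (insert (Fin.last _) (S1.map Fin.castSuccEmb)) c hc ?_ ?_
  · rw [card_insert_of_notMem, card_map]
    · omega
    · simp [Fin.castSucc_ne_last]
  · intro i hi j hj
    simp only [RingHom.mapMatrix_apply, Matrix.map_apply, Matrix.of_apply, coe_evalRingHom]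
    apply der_vanish _ hj
    rcases mem_insert.1 hi with rfl | hi
    · simpa using hy
    · obtain ⟨i', hi', rfl⟩ := mem_map.1 hi
      simpa using hS _ (mem_filter.1 hi').2

lemma mid_dvd {a b n : ℕ} (hb : 0 < b) (h1 : b ≤ n) (h2 : n < a) : (X - C (-1)) ^ b ∣ mid a b n := by
  rw [mid]
  split_ifs with h
  · obtain ⟨d, hd⟩ := php_ode hb h h2
    apply dvd_down h1 h2
    rw [hd]
    have : (X - C (-1)) ^ b ∣ C d * jacq a b (a + b - 1 - n) := (jacq_dvd_neg (by omega)).mul_left _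
    have e : -(C (ln a b n) * php a b n) + C d * jacq a b (a + b - 1 - n) + C (ln a b n) * php a b n =
      C d * jacq a b (a + b - 1 - n) := by ring
    rwa [e]
  · exact jacq_dvd_neg h1

lemma euler {H : ℝ[X]} {m : ℕ} (h : (1 + X) * derivative H = C (m : ℝ) * H) :
    ∃ r : ℝ, H = C r * (1 + X) ^ m := by
  set H2 := H.comp (X - 1) with hH2
  have h2 : X * derivative H2 = C (m : ℝ) * H2 := by
    have := congrArg (fun p => p.comp (X - 1 : ℝ[X])) h
    simp only [mul_comp, add_comp, one_comp, X_comp, C_comp] at this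
    rw [hH2, derivative_comp, ← this]
    simp
  have hco : ∀ n, n ≠ m → H2.coeff n = 0 := by
    intro n hn
    have h3 := congrArg (fun p => p.coeff n) h2
    simp only [coeff_C_mul] at h3
    have h4 : (X * derivative H2).coeff n = n * H2.coeff n := by
      cases n with
      | zero => simp
      | succ n => rw [coeff_X_mul, coeff_derivative]; push_cast; ring
    rw [h4] at h3
    have h5 : ((n : ℝ) - m) * H2.coeff n = 0 := by linarith
    rcases mul_eq_zero.1 h5 with h6 | h6
    · exact absurd (by exact_mod_cast sub_eq_zero.1 h6) hn
    · exact h6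
  have h6 : H2 = C (H2.coeff m) * X ^ m := by
    ext n
    rw [coeff_C_mul, coeff_X_pow]
    split_ifs with hn
    · rw [hn, mul_one]
    · rw [hco n hn, mul_zero]
  refine ⟨H2.coeff m, ?_⟩
  have h7 : H = H2.comp (1 + X) := by
    rw [hH2, comp_assoc]; simp
  conv_lhs => rw [h7, h6]
  simp

lemma genBinom_pos {x : ℝ} {k : ℕ} (h : (k : ℝ) - 1 < x) : 0 < genBinom x k := by
  rw [genBinom]
  refine div_pos (prod_pos fun i hi => ?_) (by exact_mod_cast Nat.factorial_pos k)
  have : (i : ℝ) + 1 ≤ k := by exact_mod_cast mem_range.1 hi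
  linarith

lemma wr0 {a b v : ℕ} (hba : b ≤ a) (hv : v < b) : ∃ c0 : ℝ, 0 < c0 ∧
    gg a b (b - 1 - v) * derivative (jacq a b v) - derivative (gg a b (b - 1 - v)) * jacq a b v =
      C ((-1) ^ v * c0) * ((1 - X) ^ (a - 1) * (1 + X) ^ (b - 1)) := by
  obtain ⟨a', rfl⟩ : ∃ a', a = a' + 1 := ⟨a - 1, by omega⟩
  obtain ⟨b', rfl⟩ : ∃ b', b = b' + 1 := ⟨b - 1, by omega⟩
  simp only [Nat.add_sub_cancel]
  have hg := DD_gg' (a := a' + 1) hv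
  have hq := DD_jacq (a' + 1) (b' + 1) v
  simp only [Nat.add_sub_cancel] at hg
  set q := jacq (a' + 1) (b' + 1) v with hqd
  set g := gg (a' + 1) (b' + 1) (b' - v) with hgd
  set G := jac ((a' + 1 : ℕ) : ℝ) (-((b' + 1 : ℕ) : ℝ)) (b' - v) with hG
  set H := (1 - X) * (G * derivative q - derivative G * q) + C ((a' : ℝ) + 1) * G * q with hH
  have hgG : g = C ((2 : ℝ)⁻¹ ^ (a' + 1)) * ((1 - X) ^ (a' + 1) * G) := rfl
  have hWr : g * derivative q - derivative g * q = C ((2 : ℝ)⁻¹ ^ (a' + 1)) * ((1 - X) ^ a' * H) := by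
    rw [hgG, hH, derivative_C_mul, derivative_mul, derivative_pow_succ]
    simp
    ring
  have hode : (1 - X ^ 2) * derivative (g * derivative q - derivative g * q) =
      -((C ((a' : ℝ) - b') + C ((a' : ℝ) + b') * X) * (g * derivative q - derivative g * q)) := by
    simp only [DD, Dp] at hg hq
    rw [derivative_sub, derivative_mul, derivative_mul]
    push_cast at hg hq
    simp only [C_sub, C_add, C_neg, C_1] at *
    have e2 : (C 2 : ℝ[X]) = 2 := rfl
    linear_combination g * hq - q * hg + (g * derivative q - derivative g * q) * X * e2
  have hEul : (1 + X) * derivative H = C (b' : ℝ) * H := by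
    rw [hWr, derivative_C_mul, derivative_mul] at hode
    have hC : (C ((2 : ℝ)⁻¹ ^ (a' + 1)) : ℝ[X]) ≠ 0 := by
      rw [Ne, C_eq_zero]; positivity
    have hX : (1 - X : ℝ[X]) ≠ 0 := by
      intro h; have := congrArg (eval 0) h; simp at this
    have hp : (1 - X) * derivative ((1 - X : ℝ[X]) ^ a') = -(C (a' : ℝ) * (1 - X) ^ a') := by
      cases a' with
      | zero => simp
      | succ a => rw [derivative_pow_succ]; simp; ring
    apply mul_left_cancel₀ (mul_ne_zero hC (mul_ne_zero (pow_ne_zero a' hX) hX))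
    simp only [C_sub, C_add] at *
    linear_combination hode - C ((2 : ℝ)⁻¹ ^ (a' + 1)) * (1 + X) * H * hp
  obtain ⟨r, hr⟩ := euler hEul
  have hH1 : H.eval 1 = ((a' : ℝ) + 1) * G.eval 1 * q.eval 1 := by
    rw [hH]; simp
  have hr1 : H.eval 1 = r * 2 ^ b' := by
    rw [hr]; simp; left; norm_num
  have hG1 : 0 < G.eval 1 := by
    rw [hG, eval_jac_one]
    apply genBinom_pos
    push_cast
    have : (0 : ℝ) ≤ a' := Nat.cast_nonneg _
    linarith
  have hq1 : q.eval 1 = (-1) ^ v * (a'.choose v : ℝ) := by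
    rw [hqd, jacq_one (by omega), Nat.add_sub_cancel]
  have hch : (0 : ℝ) < a'.choose v := by
    exact_mod_cast Nat.choose_pos (by omega)
  refine ⟨(2 : ℝ)⁻¹ ^ (a' + 1) * (((a' : ℝ) + 1) * G.eval 1 * (a'.choose v : ℝ) / 2 ^ b'), by positivity, ?_⟩
  have hrr : r = (-1) ^ v * (((a' : ℝ) + 1) * G.eval 1 * (a'.choose v : ℝ) / 2 ^ b') := by
    rw [hH1, hq1] at hr1
    rw [← mul_div_assoc, eq_div_iff (by positivity), ← hr1]; ring
  rw [hWr, hr, hrr]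
  simp only [C_mul]
  ring

end
end EHJ

open Finset MeasureTheory

namespace EHJ
open Polynomial
noncomputable section

lemma WGy_lin {a b : ℕ} (hb : 0 < b) (hba : b ≤ a) (M : ℕ → ℝ) (F G : Finset ℕ)
    (hG : ∀ n, b ≤ n → n < a → n ∈ G) (hW : WG a b M F G ≠ 0) (r s : ℝ) (y z : ℝ[X]) :
    WGy a b M F G (C r * y + C s * z) = C r * WGy a b M F G y + C s * WGy a b M F G z := by
  obtain ⟨T, V', -, h2, -, -⟩ := chainG hb hba M F G hG hW
  rw [← ι_inj, h2]
  simp only [map_add, map_mul, h2, ι_C]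
  rw [← rsmul, ← rsmul, map_smul, map_smul, rsmul, rsmul]
  ring

theorem wr_rel {a b v : ℕ} (hba : b ≤ a) (hv : v < b) (M : ℕ → ℝ) (F G : Finset ℕ)
    (hG : ∀ n, b ≤ n → n < a → n ∈ G) (hk : a ≤ G.card + 1) (hW : WG a b M F G ≠ 0) :
    ∃ c0 : ℝ, 0 < c0 ∧
    EE (G.card + 1 - a) (G.card + 1 - b) *
      (WGy a b M F G (yy a b M v) * derivative (WGy a b M F G (jacq a b v)) -
        derivative (WGy a b M F G (yy a b M v)) * WGy a b M F G (jacq a b v)) =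
      C ((∏ f ∈ G, (ln a b v - ln a b f)) * ((-1) ^ v * c0)) * WG a b M F G ^ 2 := by
  have hb : 0 < b := by omega
  obtain ⟨T, V', -, h2, -, h4⟩ := chainG hb hba M F G hG hW
  obtain ⟨c0, hc0, hwr⟩ := wr0 hba hv
  refine ⟨c0, hc0, ?_⟩
  have h5 := h4 _ _ v (DD_yy M hv) (DD_jacq a b v)
  set Pr := ∏ f ∈ G, (ln a b v - ln a b f) with hPr
  set W := WG a b M F G with hWdef
  have hιW : ι W ≠ 0 := fun h => hW (ι_eq_zero.1 h)
  have hTform : ∀ y, T (ι y) = ι (WGy a b M F G y) / ι W := fun y => by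
    rw [h2, mul_div_cancel_left₀ _ hιW]
  have h6 : pK * wK a b * (ι (yy a b M v) * δ (ι (jacq a b v)) - δ (ι (yy a b M v)) * ι (jacq a b v)) =
      algebraMap ℝ KK ((-1) ^ v * c0) := by
    rw [← ι_C, δ_ι, δ_ι, ← map_mul, ← map_mul, ← map_sub]
    have e : yy a b M v * derivative (jacq a b v) - derivative (yy a b M v) * jacq a b v =
        C ((-1) ^ v * c0) * ((1 - X) ^ (a - 1) * (1 + X) ^ (b - 1)) := by
      rw [← hwr, yy, derivative_add, derivative_C_mul]; ring
    rw [e, wK, pK, mul_one_div, div_mul_eq_mul_div, div_eq_iff (ιEE_ne a b), ← map_mul, ← map_mul, ι_inj, EE]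
    obtain ⟨a', rfl⟩ : ∃ a', a = a' + 1 := ⟨a - 1, by omega⟩
    obtain ⟨b', rfl⟩ : ∃ b', b = b' + 1 := ⟨b - 1, by omega⟩
    simp only [Nat.add_sub_cancel]
    ring
  rw [h6, rsmul] at h5
  have h7 : pK * (pK ^ G.card * wK a b) = ι (EE (G.card + 1 - a) (G.card + 1 - b)) := by
    rw [← wk_poly hk (hba.trans hk)]; ring
  rw [h7, hTform, hTform, ddiv _ _ _ hιW, ddiv _ _ _ hιW, δ_ι, δ_ι, δ_ι] at h5
  rw [← ι_inj]
  simp only [map_mul, map_sub, map_pow, ι_C] at h5 ⊢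
  field_simp at h5
  apply mul_left_cancel₀ hιW
  linear_combination h5

theorem cond1 {a b v : ℕ} (hba : b ≤ a) (hv : v < b) (M : ℕ → ℝ) (F : Finset ℕ)
    (hF : ∀ n, b ≤ n → n < a + b → n ∈ F) (hvF : v ∉ F)
    (hM0 : M (b - 1 - v) ≠ 0) (hM1 : M (b - 1 - v) ≠ 1)
    (hΩ : ∀ x ∈ Set.Icc (-1 : ℝ) 1, OmegaJ (-(a : ℤ)) (-(b : ℤ)) M F x ≠ 0) :
    Real.sign (M (b - 1 - v)) = Real.sign (∏ f ∈ F.filter (fun f => f < b ∨ a + b ≤ f), (ln a b v - ln a b f)) := by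
  have hb : 0 < b := by omega
  set v' := a + b - 1 - v with hv'
  have hv'F : v' ∈ F := hF _ (by omega) (by omega)
  set G := F.erase v' with hG
  have hGc : G.card + 1 = F.card := card_erase_add_one hv'F
  have hGmem : ∀ n, n ∈ F → n ≠ v' → n ∈ G := fun n h1 h2 => mem_erase.2 ⟨h2, h1⟩
  have hGF : ∀ n, b ≤ n → n < a → n ∈ G := fun n h1 h2 => hGmem n (hF n h1 (by omega)) (by omega)
  -- cardinalities
  set L := F.filter (fun f => f < b) with hL
  set U := F.filter (fun f => a + b ≤ f) with hU
  have hFU : F = L ∪ Ico b (a + b) ∪ U := by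
    ext f
    simp only [mem_union, hL, hU, mem_filter, mem_Ico]
    constructor
    · intro h
      by_cases h1 : f < b
      · exact Or.inl (Or.inl ⟨h, h1⟩)
      by_cases h2 : f < a + b
      · exact Or.inl (Or.inr ⟨by omega, h2⟩)
      · exact Or.inr ⟨h, by omega⟩
    · rintro ((⟨h, -⟩ | ⟨h, h'⟩) | ⟨h, -⟩)
      · exact h
      · exact hF f h h'
      · exact h
  have hFc : F.card = L.card + a + U.card := by
    conv_lhs => rw [hFU]
    rw [card_union_of_disjoint, card_union_of_disjoint, Nat.card_Ico]
    · omega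
    · rw [disjoint_left]; intro f h1 h2
      have := (mem_filter.1 h1).2; have := mem_Ico.1 h2; omega
    · rw [disjoint_left]; intro f h1 h2
      have := (mem_filter.1 h2).2
      rcases mem_union.1 h1 with h | h
      · have := (mem_filter.1 h).2; omega
      · have := mem_Ico.1 h; omega
  -- nonvanishing
  have hspan : ∀ f ∈ F, PP a b M f ∈ Submodule.span ℝ (Set.range
      (Fin.snoc (fun i : Fin G.card => uu a b M F (elemOf G i)) (yy a b M v) : Fin (G.card + 1) → ℝ[X])) := by
    have hmemG : ∀ f ∈ G, uu a b M F f ∈ Submodule.span ℝ (Set.range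
      (Fin.snoc (fun i : Fin G.card => uu a b M F (elemOf G i)) (yy a b M v) : Fin (G.card + 1) → ℝ[X])) := by
      intro f hf
      obtain ⟨i, hi⟩ := elemOf_surj hf
      exact Submodule.subset_span ⟨i.castSucc, by simp [hi]⟩
    intro f hf
    by_cases hfv : f = v'
    · rw [hfv, PP, if_neg (by omega), if_neg (by omega), if_pos (by omega),
        show a + b - 1 - v' = v by omega, ← smul_eq_C_mul]
      exact Submodule.smul_mem _ _ (Submodule.subset_span ⟨Fin.last _, by simp⟩)
    · have hfv2 : f ≠ v := fun h => hvF (h ▸ hf)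
      refine uu_span hba M F hF _ f hf (hmemG f (hGmem f hf hfv)) (fun h => hmemG _ (hGmem _ (hF _ (by omega) (by omega)) (by omega)))
        (fun h1 h2 h3 => hmemG _ (hGmem _ h3 (by omega)))
  obtain ⟨dd, hdd⟩ := omega_eq hb hba M F (G.card + 1) hGc.symm _ hspan
  have hd : ∀ x ∈ Set.Icc (-1 : ℝ) 1, (WGy a b M F G (yy a b M v)).eval x ≠ 0 := by
    intro x hx h
    apply hΩ x hx
    rw [hdd x]
    have h' : eval x (Wr (derivative : ℝ[X] → ℝ[X]) (Fin.snoc (fun i : Fin G.card => uu a b M F (elemOf G i)) (yy a b M v) : Fin (G.card + 1) → ℝ[X])) = 0 := h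
    rw [h', mul_zero]
  have hd1 := hd 1 (by norm_num)
  have hd2 := hd (-1) (by norm_num)
  have hW : WG a b M F G ≠ 0 := WGy_ne (y := yy a b M v) (by intro h; simp [h] at hd1)
  have hlin := WGy_lin hb hba M F G hGF hW
  obtain ⟨c0, hc0, hrel⟩ := wr_rel hba hv M F G hGF (by omega) hW
  set N := WGy a b M F G (jacq a b v) with hN
  set d := WGy a b M F G (yy a b M v) with hdef
  set m := M (b - 1 - v) with hm
  have hm1 : m - 1 ≠ 0 := sub_ne_zero.2 hM1
  -- values at the end points
  have z1 : (WGy a b M F G (gg a b (b - 1 - v))).eval 1 = 0 := by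
    refine WGy_zero M F G (U ∪ L.image (fun f => a + b - 1 - f)) (c := a) ?_ (by omega) ?_ ?_ (gg_dvd _ _ _)
    · intro f hf
      rcases mem_union.1 hf with h | h
      · obtain ⟨h1, h2⟩ := mem_filter.1 h
        exact hGmem f h1 (by omega)
      · obtain ⟨f', h1, rfl⟩ := mem_image.1 h
        obtain ⟨h1, h2⟩ := mem_filter.1 h1
        have : f' ≠ v := fun h => hvF (h ▸ h1)
        exact hGmem _ (hF _ (by omega) (by omega)) (by omega)
    · rw [card_union_of_disjoint, card_image_of_injOn]
      · omega
      · intro f hf f' hf' h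
        have h1 := (mem_filter.1 hf).2
        have h2 := (mem_filter.1 hf').2
        simp only at h
        omega
      · rw [disjoint_left]; intro f h1 h2
        have := (mem_filter.1 h1).2
        obtain ⟨f', h3, rfl⟩ := mem_image.1 h2
        omega
    · intro f hf
      rcases mem_union.1 hf with h | h
      · obtain ⟨h1, h2⟩ := mem_filter.1 h
        rw [uu, if_neg (by omega), if_neg (by omega), if_neg (by omega)]
        obtain ⟨Q, -, hQ⟩ := jacq_big h2
        rw [hQ, mul_assoc]; exact Dvd.intro _ rfl
      · obtain ⟨f', h1, rfl⟩ := mem_image.1 h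
        obtain ⟨h1, h2⟩ := mem_filter.1 h1
        rw [uu, if_neg (by omega), if_neg (by omega), if_pos (by omega), if_pos]
        · exact gg_dvd _ _ _
        · rwa [show a + b - 1 - (a + b - 1 - f') = f' by omega]
  have z2 : (WGy a b M F G (jacq a b v - gg a b (b - 1 - v))).eval (-1) = 0 := by
    refine WGy_zero M F G (U ∪ (L ∪ Ico b a)) (c := b) ?_ (by omega) ?_ ?_ (hh_dvd hv)
    · intro f hf
      rcases mem_union.1 hf with h | h
      · obtain ⟨h1, h2⟩ := mem_filter.1 h
        exact hGmem f h1 (by omega)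
      · rcases mem_union.1 h with h | h
        · obtain ⟨h1, h2⟩ := mem_filter.1 h
          exact hGmem f h1 (by omega)
        · have := mem_Ico.1 h
          exact hGF f this.1 this.2
    · rw [card_union_of_disjoint, card_union_of_disjoint, Nat.card_Ico]
      · omega
      · rw [disjoint_left]; intro f h1 h2
        have := (mem_filter.1 h1).2
        have := mem_Ico.1 h2
        omega
      · rw [disjoint_left]; intro f h1 h2
        have := (mem_filter.1 h1).2
        rcases mem_union.1 h2 with h | h
        · have := (mem_filter.1 h).2; omega
        · have := mem_Ico.1 h; omega
    · intro f hf
      rcases mem_union.1 hf with h | h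
      · obtain ⟨h1, h2⟩ := mem_filter.1 h
        rw [uu, if_neg (by omega), if_neg (by omega), if_neg (by omega)]
        exact jacq_dvd_neg (by omega)
      · rcases mem_union.1 h with h | h
        · have h2 := (mem_filter.1 h).2
          rw [uu, if_pos h2]; exact hh_dvd h2
        · have := mem_Ico.1 h
          rw [uu, if_neg (by omega), if_pos this.2]
          exact mid_dvd hb this.1 this.2
  have r1 : d.eval 1 = (m - 1)⁻¹ * N.eval 1 := by
    have e : yy a b M v = C ((m - 1)⁻¹) * jacq a b v + C 1 * gg a b (b - 1 - v) := by
      rw [yy, C_1, one_mul]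
    rw [hdef, e, hlin]
    simp [z1, hN]
  have r2 : d.eval (-1) = m / (m - 1) * N.eval (-1) := by
    have e : yy a b M v = C (m / (m - 1)) * jacq a b v + C (-1) * (jacq a b v - gg a b (b - 1 - v)) := by
      have : m / (m - 1) = (m - 1)⁻¹ + 1 := by field_simp; ring
      rw [yy, this, C_add, C_neg, C_1]; ring
    rw [hdef, e, hlin]
    simp only [eval_add, eval_mul, eval_C, z2, hN]; ring
  set Cc := (∏ f ∈ G, (ln a b v - ln a b f)) * ((-1) ^ v * c0) with hCc
  have hmono := mono_ratio (N := C Cc * N) hd (fun x hx => by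
    have h := congrArg (eval x) hrel
    have hE := EE_pos (G.card + 1 - a) (G.card + 1 - b) hx
    have e : d * derivative (C Cc * N) - derivative d * (C Cc * N) = C Cc * (d * derivative N - derivative d * N) := by
      rw [derivative_C_mul]; ring
    rw [e]
    rw [eval_mul, eval_mul, eval_C, eval_pow] at h
    rw [eval_mul, eval_C]
    have h2 : eval x (EE (G.card + 1 - a) (G.card + 1 - b)) * (Cc * eval x (d * derivative N - derivative d * N)) =
      (Cc * eval x (WG a b M F G)) ^ 2 := by linear_combination Cc * h
    have h3 := sq_nonneg (Cc * eval x (WG a b M F G))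
    rw [← h2] at h3
    exact nonneg_of_mul_nonneg_right h3 hE)
  have hle := hmono (show (-1 : ℝ) ∈ Set.Icc (-1 : ℝ) 1 by norm_num) (show (1 : ℝ) ∈ Set.Icc (-1 : ℝ) 1 by norm_num) (by norm_num)
  simp only [eval_mul, eval_C] at hle
  have q1 : Cc * N.eval 1 / d.eval 1 = Cc * (m - 1) := by
    rw [div_eq_iff hd1, r1]; field_simp
  have q2 : Cc * N.eval (-1) / d.eval (-1) = Cc * ((m - 1) / m) := by
    rw [div_eq_iff hd2, r2]; field_simp
  rw [q1, q2] at hle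
  -- sign bookkeeping
  set E := F.filter (fun f => f < b ∨ a + b ≤ f) with hE
  have hGE : G = E ∪ (Ico b v' ∪ Ico (v' + 1) (a + b)) := by
    ext f
    simp only [mem_union, hE, hG, mem_filter, mem_Ico, mem_erase]
    constructor
    · rintro ⟨h1, h2⟩
      by_cases h3 : f < b ∨ a + b ≤ f
      · exact Or.inl ⟨h2, h3⟩
      · right; omega
    · rintro (⟨h1, h2⟩ | h | h)
      · exact ⟨by omega, h1⟩
      · exact ⟨by omega, hF f (by omega) (by omega)⟩
      · exact ⟨by omega, hF f (by omega) (by omega)⟩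
  have hfac : ∀ f, ln a b v - ln a b f = ((f : ℝ) - v) * ((v' : ℝ) - f) := by
    intro f
    have : (v' : ℝ) + v + 1 = a + b := by
      have : v' + v + 1 = a + b := by omega
      exact_mod_cast this
    rw [ln_sub]
    linear_combination (-((f : ℝ) - v)) * this
  have hsplit : ∏ f ∈ G, (ln a b v - ln a b f) = (∏ f ∈ E, (ln a b v - ln a b f)) *
      ((∏ f ∈ Ico b v', (ln a b v - ln a b f)) * ∏ f ∈ Ico (v' + 1) (a + b), (ln a b v - ln a b f)) := by
    rw [hGE, prod_union, prod_union]
    · rw [disjoint_left]; intro f h1 h2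
      have := mem_Ico.1 h1
      have := mem_Ico.1 h2
      omega
    · rw [disjoint_left]; intro f h1 h2
      have := (mem_filter.1 h1).2
      rcases mem_union.1 h2 with h | h
      · have := mem_Ico.1 h; omega
      · have := mem_Ico.1 h; omega
  have p1 : 0 < ∏ f ∈ Ico b v', (ln a b v - ln a b f) := by
    refine prod_pos fun f hf => ?_
    have := mem_Ico.1 hf
    rw [hfac]
    have h1 : (v : ℝ) < f := by exact_mod_cast (by omega : v < f)
    have h2 : (f : ℝ) < v' := by exact_mod_cast this.2
    exact mul_pos (by linarith) (by linarith)
  have p2 : 0 < (-1) ^ v * ∏ f ∈ Ico (v' + 1) (a + b), (ln a b v - ln a b f) := by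
    have hcard : (Ico (v' + 1) (a + b)).card = v := by rw [Nat.card_Ico]; omega
    have := prod_neg (s := Ico (v' + 1) (a + b)) (f := fun f => (ln a b v - ln a b f))
    rw [hcard] at this
    rw [← this]
    refine prod_pos fun f hf => ?_
    have := mem_Ico.1 hf
    rw [hfac]
    have h1 : (v : ℝ) < f := by exact_mod_cast (by omega : v < f)
    have h2 : (v' : ℝ) < f := by exact_mod_cast (by omega : v' < f)
    have : 0 < ((f : ℝ) - v) * (f - v') := mul_pos (by linarith) (by linarith)
    linarith
  set PE := ∏ f ∈ E, (ln a b v - ln a b f) with hPE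
  have hPE0 : PE ≠ 0 := by
    rw [hPE, prod_ne_zero_iff]
    intro f hf
    obtain ⟨h1, h2⟩ := mem_filter.1 hf
    rw [hfac]
    have h3 : f ≠ v := fun h => hvF (h ▸ h1)
    have h4 : f ≠ v' := by omega
    exact mul_ne_zero (sub_ne_zero.2 (by exact_mod_cast h3)) (sub_ne_zero.2 (by exact_mod_cast h4.symm))
  obtain ⟨κ, hκ, hCκ⟩ : ∃ κ : ℝ, 0 < κ ∧ Cc = PE * κ := by
    refine ⟨_, mul_pos (mul_pos p1 p2) hc0, ?_⟩
    rw [hCc, hsplit]; ring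
  have hfin : 0 ≤ PE * m := by
    have h1 : 0 ≤ Cc * ((m - 1) ^ 2 / m) := by
      have : (m - 1) ^ 2 / m = (m - 1) - (m - 1) / m := by field_simp
      rw [this]; linarith
    have h2 : Cc * ((m - 1) ^ 2 / m) = (PE * m) * (κ * (m - 1) ^ 2 / m ^ 2) := by
      rw [hCκ]; field_simp
    rw [h2] at h1
    exact nonneg_of_mul_nonneg_left h1 (by positivity)
  rcases lt_or_gt_of_ne hM0 with h | h
  · have : PE < 0 := by
      rcases lt_or_gt_of_ne hPE0 with h' | h'
      · exact h'
      · exact absurd hfin (by push Not; exact mul_neg_of_pos_of_neg h' h)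
    rw [Real.sign_of_neg h, Real.sign_of_neg this]
  · have : 0 < PE := by
      rcases lt_or_gt_of_ne hPE0 with h' | h'
      · exact absurd hfin (by push Not; exact mul_neg_of_neg_of_pos h' h)
      · exact h'
    rw [Real.sign_of_pos h, Real.sign_of_pos this]

theorem cond2 {a b : ℕ} (hb : 0 < b) (hba : b ≤ a) (M : ℕ → ℝ) (F : Finset ℕ)
    (hF : ∀ n, b ≤ n → n < a + b → n ∈ F)
    (hΩ : ∀ x ∈ Set.Icc (-1 : ℝ) 1, OmegaJ (-(a : ℤ)) (-(b : ℤ)) M F x ≠ 0) (x : ℕ) :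
    0 ≤ ∏ f ∈ F.filter (fun f => a + b ≤ f), ((x : ℤ) + a + b - f) := by
  have hmem : ∀ f ∈ F, uu a b M F f ∈ Submodule.span ℝ (Set.range (fun i : Fin F.card => uu a b M F (elemOf F i))) := by
    intro f hf
    obtain ⟨i, hi⟩ := elemOf_surj hf
    exact Submodule.subset_span ⟨i, by simp [hi]⟩
  obtain ⟨dd, hdd⟩ := omega_eq hb hba M F F.card rfl (fun i => uu a b M F (elemOf F i)) (fun f hf =>
    uu_span hba M F hF _ f hf (hmem f hf) (fun h => hmem _ (hF _ (by omega) (by omega))) (fun _ _ h => hmem _ h))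
  have hW : ∀ x ∈ Set.Icc (-1 : ℝ) 1, (WG a b M F F).eval x ≠ 0 := by
    intro x hx h
    apply hΩ x hx
    rw [hdd x]
    have h' : eval x (Wr (derivative : ℝ[X] → ℝ[X]) (fun i : Fin F.card => uu a b M F (elemOf F i))) = 0 := h
    rw [h', mul_zero]
  have hk : a ≤ F.card := by
    have := card_le_card (show Ico b (a + b) ⊆ F from fun n hn => hF n (mem_Ico.1 hn).1 (mem_Ico.1 hn).2)
    rw [Nat.card_Ico] at this; omega
  have h := cond2_core hb hba M F (fun n h1 h2 => hF n h1 (by omega)) hk hW (v := x + a + b) (by omega)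
  have hfac : ∀ f, ln a b (x + a + b) - ln a b f = (((x : ℤ) + a + b - f : ℤ) : ℝ) * (x + f + 1) := by
    intro f
    rw [ln_sub]; push_cast; ring
  rw [← prod_filter_mul_prod_filter_not F (fun f => a + b ≤ f)] at h
  have h2 : 0 < ∏ f ∈ F.filter (fun f => ¬ a + b ≤ f), (ln a b (x + a + b) - ln a b f) := by
    refine prod_pos fun f hf => ?_
    have := (mem_filter.1 hf).2
    rw [hfac]
    apply mul_pos
    · exact_mod_cast (by omega : (0 : ℤ) < (x : ℤ) + a + b - f)
    · positivity
  have h3 := nonneg_of_mul_nonneg_left h h2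
  simp only [hfac] at h3
  rw [prod_mul_distrib] at h3
  have h4 : 0 < ∏ f ∈ F.filter (fun f => a + b ≤ f), ((x : ℝ) + f + 1) := prod_pos fun f _ => by positivity
  have h5 := nonneg_of_mul_nonneg_left h3 h4
  exact_mod_cast h5

end
end EHJ

open Finset MeasureTheory
/-- nonvanishing of `Ω_{M,F}^{α,β}` on `[-1,1]` implies admissibility. -/
theorem omega_nonvanishing_implies_admissible
    (α β : ℤ) (M : ℕ → ℝ) (F : Finset ℕ)
    (hαβ : α ≤ β) (hβ : β ≤ -1)
    (hM : ∀ i, M i ≠ 0 ∧ M i ≠ 1)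
    (hFpos : ∀ f ∈ F, 0 < f)
    (hFc : ∀ k : ℕ, -β ≤ (k : ℤ) → (k : ℤ) ≤ -α - β - 1 → k ∈ F)
    (hΩ : ∀ x ∈ Set.Icc (-1 : ℝ) 1, OmegaJ α β M F x ≠ 0) :
    IsAdmissible α β M F := by
  obtain ⟨a, rfl⟩ : ∃ a : ℕ, α = -(a : ℤ) := ⟨(-α).toNat, by omega⟩
  obtain ⟨b, rfl⟩ : ∃ b : ℕ, β = -(b : ℤ) := ⟨(-β).toNat, by omega⟩
  have hb : 0 < b := by omega
  have hba : b ≤ a := by omega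
  have hF : ∀ n, b ≤ n → n < a + b → n ∈ F := fun n h1 h2 => hFc n (by omega) (by omega)
  refine ⟨?_, ?_⟩
  · intro i hi hif
    have hi' : i < b := by omega
    have hv : b - 1 - i < b := by omega
    have hvi : b - 1 - (b - 1 - i) = i := by omega
    have hvF : b - 1 - i ∉ F := fun h => hif _ h (by omega)
    have key := EHJ.cond1 (v := b - 1 - i) hba hv M F hF hvF (hM _).1 (hM _).2 hΩ
    rw [hvi] at key
    rw [key]
    congr 1
    have hfil : Fext (-(a : ℤ)) (-(b : ℤ)) F = F.filter (fun f => f < b ∨ a + b ≤ f) := by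
      unfold Fext
      apply Finset.filter_congr
      intro f _
      omega
    rw [hfil]
    apply Finset.prod_congr rfl
    intro f _
    have hc : ((b - 1 - i : ℕ) : ℝ) = b - 1 - i := by
      have : (b - 1 - i) + 1 + i = b := by omega
      have : (((b - 1 - i) + 1 + i : ℕ) : ℝ) = b := by rw [this]
      push_cast at this ⊢
      linarith
    rw [EHJ.ln_sub, hc]
    push_cast
    ring
  · intro x hx _
    lift x to ℕ using hx
    have hfil : F.filter (fun f : ℕ => -(-(a : ℤ)) - (-(b : ℤ)) ≤ (f : ℤ)) = F.filter (fun f => a + b ≤ f) := by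
      apply Finset.filter_congr
      intro f _
      omega
    rw [hfil]
    have := EHJ.cond2 hb hba M F hF hΩ x
    convert this using 2
    ring
end

section
/- Let g be a positive integer, let (p_N)_{N∈ℕ} be a sequence of real polynomials of degree g and let q be a polynomial of degree g such that lim_{N→∞} p_N((1−x)N/2)/N^g = q(x) uniformly on compact subsets of ℂ. Define r_N(x) = p_N(x+1) − p_N(x). Then lim_{N→∞} r_N((1−x)N/2)/N^{g−1} = −2 q′(x), uniformly on compact subsets of ℂ. -/
/-- if `p_N((1-x)N/2)/N^g → q(x)` uniformly on compact subsets of `ℂ`, then for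
the difference `r_N(x) = p_N(x+1) - p_N(x)` one has `r_N((1-x)N/2)/N^{g-1} → -2 q'(x)`,
uniformly on compact subsets of `ℂ`. -/
theorem difference_quotient_uniform_limit
    (g : ℕ) (hg : 0 < g) (p : ℕ → Polynomial ℝ) (q : Polynomial ℝ)
    (hdeg : ∀ N, (p N).degree = (g : WithBot ℕ)) (hq : q.degree = (g : WithBot ℕ))
    (hlim : ∀ K : Set ℂ, IsCompact K →
      TendstoUniformlyOn
        (fun (N : ℕ) (x : ℂ) => Polynomial.aeval ((1 - x) * (N : ℂ) / 2) (p N) / (N : ℂ) ^ g)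
        (fun x : ℂ => Polynomial.aeval x q) Filter.atTop K)
    (K : Set ℂ) (hK : IsCompact K) :
    TendstoUniformlyOn
      (fun (N : ℕ) (x : ℂ) =>
        (Polynomial.aeval ((1 - x) * (N : ℂ) / 2 + 1) (p N) -
            Polynomial.aeval ((1 - x) * (N : ℂ) / 2) (p N)) / (N : ℂ) ^ (g - 1))
      (fun x : ℂ => -2 * Polynomial.aeval x q.derivative) Filter.atTop K := by
  classical
  set f : ℕ → ℂ → ℂ := fun N x =>
    Polynomial.aeval ((1 - x) * (N : ℂ) / 2) (p N) / (N : ℂ) ^ g with hf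
  have hfd : ∀ N, Differentiable ℂ (f N) := by
    intro N
    have h1 : Differentiable ℂ (fun z : ℂ => Polynomial.aeval z (p N)) :=
      Polynomial.differentiable_aeval (p N)
    have h2 : Differentiable ℂ (fun x : ℂ => (1 - x) * (N : ℂ) / 2) := by fun_prop
    exact (h1.comp h2).div_const _
  have hloc : TendstoLocallyUniformlyOn f (fun x : ℂ => Polynomial.aeval x q)
      Filter.atTop Set.univ := by
    rw [tendstoLocallyUniformlyOn_iff_forall_isCompact isOpen_univ]
    intro K _ hK
    exact hlim K hK
  have hder := hloc.deriv (Filter.Eventually.of_forall fun N => (hfd N).differentiableOn)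
    isOpen_univ
  rw [tendstoLocallyUniformlyOn_iff_forall_isCompact isOpen_univ] at hder
  obtain ⟨R, hR⟩ := hK.isBounded.subset_closedBall (0 : ℂ)
  have hB : IsCompact (Metric.closedBall (0 : ℂ) (R + 2)) := isCompact_closedBall _ _
  have hd := hder _ (Set.subset_univ _) hB
  have hq' : Continuous (fun x : ℂ => Polynomial.aeval x q.derivative) :=
    Polynomial.continuous_aeval _
  have huc := hB.uniformContinuousOn_of_continuous hq'.continuousOn
  rw [Metric.tendstoUniformlyOn_iff] at hd ⊢
  rw [Metric.uniformContinuousOn_iff] at huc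
  intro ε hε
  obtain ⟨δ, hδ, huc⟩ := huc (ε / 8) (by positivity)
  have hN : ∀ᶠ N : ℕ in Filter.atTop, 2 / δ < (N : ℝ) :=
    tendsto_natCast_atTop_atTop.eventually_gt_atTop _
  filter_upwards [hd (ε / 8) (by positivity), hN, Filter.eventually_ge_atTop 1] with N h1 h2 h3 x hx
  have hN0 : (0 : ℝ) < N := by exact_mod_cast h3
  have hNc : (N : ℂ) ≠ 0 := by exact_mod_cast hN0.ne'
  have hN1 : (1 : ℝ) ≤ N := by exact_mod_cast h3
  have hsm : 2 / (N : ℝ) < δ := by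
    rw [div_lt_iff₀ hδ] at h2
    rw [div_lt_iff₀ hN0]; linarith
  have hle2 : 2 / (N : ℝ) ≤ 2 := by
    rw [div_le_iff₀ hN0]; linarith
  have hxR : ‖x‖ ≤ R := by simpa using hR hx
  have hxB : x ∈ Metric.closedBall (0 : ℂ) (R + 2) := by
    simp; linarith
  set c : ℂ := Polynomial.aeval x q.derivative with hc
  have hmem : x - 2 / (N : ℂ) ∈ Metric.closedBall x (2 / (N : ℝ)) := by
    simp [dist_eq_norm]
  have key := (convex_closedBall x (2 / (N : ℝ))).norm_image_sub_le_of_norm_hasDerivWithin_le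
    (f := fun y => f N y - y * c) (f' := fun y => deriv (f N) y - c) (C := ε / 4)
    (𝕜 := ℂ)
    (fun y _ => by
      have := ((hfd N y).hasDerivAt.sub ((hasDerivAt_id y).mul_const c)).hasDerivWithinAt
        (s := Metric.closedBall x (2 / (N : ℝ)))
      rw [one_mul] at this
      exact this)
    (fun y hy => by
      have hyx : dist y x ≤ 2 / (N : ℝ) := hy
      have hyB : y ∈ Metric.closedBall (0 : ℂ) (R + 2) := by
        have := norm_le_norm_add_norm_sub' y x
        rw [dist_eq_norm] at hyx
        simp; linarith
      have e1 := h1 y hyB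
      have e2 := huc y hyB x hxB (by linarith)
      rw [Polynomial.deriv_aeval, dist_comm, Function.comp_apply] at e1
      have e3 := dist_triangle (deriv (f N) y) (Polynomial.aeval y q.derivative) c
      rw [← dist_eq_norm]
      linarith)
    (Metric.mem_closedBall_self (by positivity)) hmem
  have hshift : (1 - (x - 2 / (N : ℂ))) * (N : ℂ) / 2 = (1 - x) * (N : ℂ) / 2 + 1 := by
    field_simp; ring
  have hpow : (N : ℂ) ^ g = (N : ℂ) ^ (g - 1) * N := by
    rw [← pow_succ, Nat.sub_add_cancel hg]
  have heq : (Polynomial.aeval ((1 - x) * (N : ℂ) / 2 + 1) (p N) -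
            Polynomial.aeval ((1 - x) * (N : ℂ) / 2) (p N)) / (N : ℂ) ^ (g - 1) - (-2 * c)
      = N * ((f N (x - 2 / (N : ℂ)) - (x - 2 / (N : ℂ)) * c) - (f N x - x * c)) := by
    simp only [hf, hshift, hpow]
    field_simp
    ring
  rw [dist_comm, dist_eq_norm, heq, norm_mul]
  have hn : ‖x - 2 / (N : ℂ) - x‖ = 2 / N := by simp
  rw [hn] at key
  calc _ ≤ (N : ℝ) * (ε / 4 * (2 / N)) := by
        rw [Complex.norm_natCast]
        exact mul_le_mul_of_nonneg_left key hN0.le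
    _ = ε / 2 := by field_simp; norm_num
    _ < ε := by linarith
end

section
/- Let α ≤ β ≤ −1 be negative integers and let M = (M_i)_{i≥0} be real parameters with M_i ∉ {0,1}. Then for every n ∈ ℕ, lim_{N→+∞} Ĥ_n^{α,β,N;M}((1−x)N/2) / N^n = (−1)^n · n! · P̂_n^{α,β;M}(x), uniformly on compact subsets of ℂ. -/
open Finset

noncomputable section ExceptionalHahnJacobiComplex

/-- Pochhammer symbol `(z)_m = z (z+1) ⋯ (z+m-1)` (complex variable). -/
def pochC (z : ℂ) (m : ℕ) : ℂ := ∏ i ∈ Finset.range m, (z + (i : ℂ))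

/-- Generalized binomial coefficient `C(z, k)` (complex variable). -/
def genBinomC (z : ℂ) (k : ℕ) : ℂ := (∏ i ∈ Finset.range k, (z - (i : ℂ))) / (k.factorial : ℂ)

/-- Hahn polynomial `h_n^{a,b,N}(x)` (complex variable). -/
def hahnC (a b N : ℂ) (n : ℕ) (x : ℂ) : ℂ :=
  ∑ j ∈ Finset.range (n + 1),
    pochC (-(n : ℂ)) j * pochC (a + b + (n : ℂ) + 1) j * pochC (-N + (j : ℂ)) (n - j) *
      pochC (a + (j : ℂ) + 1) (n - j) * pochC (-x) j / (j.factorial : ℂ)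

/-- Jacobi polynomial `P_n^{a,b}(x)` (complex variable). -/
def jacobiC (a b : ℂ) (n : ℕ) (x : ℂ) : ℂ :=
  (2 : ℂ)⁻¹ ^ n * ∑ j ∈ Finset.range (n + 1),
    genBinomC ((n : ℂ) + a) j * genBinomC ((n : ℂ) + b) (n - j) * (x - 1) ^ (n - j) * (x + 1) ^ j

/-- The function `φ_u^{α,β,N}(s,x)` (complex variables). -/
def phiHC (α β : ℤ) (N : ℂ) (u : ℕ) (s x : ℂ) : ℂ :=
  pochC ((α : ℂ) + 1) (max u (-α - β - (u : ℤ) - 1).toNat) *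
    pochC (-N) (max u (-α - β - (u : ℤ) - 1).toNat) *
    ∑ j ∈ Finset.range (u + 1),
      pochC (-(u : ℂ)) j * pochC ((u : ℂ) - s + (α : ℂ) + (β : ℂ) + 1) j * pochC (-x) j /
        (pochC ((α : ℂ) - s + 1) j * pochC (-N) j * (j.factorial : ℂ))

/-- The polynomials `Ĥ_n^{α,β,N;M}(x)` (complex variable). -/
def HhatC (α β : ℤ) (N : ℂ) (M : ℕ → ℝ) (n : ℕ) (x : ℂ) : ℂ :=
  if ⌈((-α - β : ℤ) : ℚ) / 2⌉ ≤ (n : ℤ) ∧ (n : ℤ) ≤ -α - 1 then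
    deriv (fun s : ℂ => phiHC α β N n s x) 0 -
      deriv (fun s : ℂ => phiHC α β N (-α - β - (n : ℤ) - 1).toNat s x) 0
  else if -α ≤ (n : ℤ) ∧ (n : ℤ) ≤ -α - β - 1 then
    (-1 : ℂ) ^ ((β : ℤ) + (n : ℤ)) * ((β + (n : ℤ)).toNat.factorial : ℂ) *
      (((-α - β - (n : ℤ) - 1).toNat.factorial : ℂ) * pochC (-x) (-α).toNat *
          hahnC (-(α : ℂ)) (β : ℂ) ((α : ℂ) + N) ((α + (n : ℤ)).toNat) (x + (α : ℂ)) +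
        (((α + (n : ℤ)).toNat.factorial : ℂ)) *
            pochC (-N - (α : ℂ) - (β : ℂ) - (n : ℂ) - 1) (2 * (n : ℤ) + α + β + 1).toNat /
            ((M ((α + (n : ℤ)).toNat) : ℂ) - 1) *
          hahnC (α : ℂ) (β : ℂ) N ((-α - β - (n : ℤ) - 1).toNat) x)
  else hahnC (α : ℂ) (β : ℂ) N n x

/-- The function `φ_u^{α,β}(s,x)` (complex variables). -/
def phiJC (α β : ℤ) (u : ℕ) (s x : ℂ) : ℂ :=
  pochC ((α : ℂ) + 1) (max u (-α - β - (u : ℤ) - 1).toNat) /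
      ((max u.factorial (-α - β - (u : ℤ) - 1).toNat.factorial : ℕ) : ℂ) *
    ∑ j ∈ Finset.range (u + 1),
      pochC (-(u : ℂ)) j * pochC ((u : ℂ) - s + (α : ℂ) + (β : ℂ) + 1) j /
          (pochC ((α : ℂ) - s + 1) j * (j.factorial : ℂ)) * ((1 - x) / 2) ^ j

/-- The polynomials `P̂_n^{α,β;M}(x)` (complex variable). -/
def PhatC (α β : ℤ) (M : ℕ → ℝ) (n : ℕ) (x : ℂ) : ℂ :=
  if ⌈((-α - β : ℤ) : ℚ) / 2⌉ ≤ (n : ℤ) ∧ (n : ℤ) ≤ -α - 1 then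
    deriv (fun s : ℂ => phiJC α β n s x) 0 -
      deriv (fun s : ℂ => phiJC α β (-α - β - (n : ℤ) - 1).toNat s x) 0
  else if -α ≤ (n : ℤ) ∧ (n : ℤ) ≤ -α - β - 1 then
    (-1 : ℂ) ^ ((β : ℤ) + (n : ℤ)) *
      ((((n : ℤ) + α).toNat.factorial : ℂ) * (((n : ℤ) + β).toNat.factorial : ℂ) *
        ((-α - β - (n : ℤ) - 1).toNat.factorial : ℂ)) / (n.factorial : ℂ) *
      (((M ((α + (n : ℤ)).toNat) : ℂ) - 1)⁻¹ *
          jacobiC (α : ℂ) (β : ℂ) ((-α - β - (n : ℤ) - 1).toNat) x +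
        ((1 - x) / 2) ^ (-α).toNat * jacobiC (-(α : ℂ)) (β : ℂ) ((α + (n : ℤ)).toNat) x)
  else jacobiC (α : ℂ) (β : ℂ) n x

/-- Exceptional Hahn polynomial `h_n^{α,β,N;M,F}(x)` (complex variable). -/
def exHahnC (α β : ℤ) (N : ℂ) (M : ℕ → ℝ) (F : Finset ℕ) (n : ℕ) (x : ℂ) : ℂ :=
  Matrix.det (Matrix.of fun i j : Fin (F.card + 1) =>
    Fin.cases (HhatC α β N M (n - uF F) (x + ((j : ℕ) : ℂ)))
      (fun k => HhatC α β N M (elemOf F k) (x + ((j : ℕ) : ℂ))) i)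

/-- Exceptional Jacobi polynomial `P_n^{α,β;M,F}(x)` (complex variable). -/
def exJacobiC (α β : ℤ) (M : ℕ → ℝ) (F : Finset ℕ) (n : ℕ) (x : ℂ) : ℂ :=
  Matrix.det (Matrix.of fun i j : Fin (F.card + 1) =>
    Fin.cases (iteratedDeriv (j : ℕ) (PhatC α β M (n - uF F)) x)
      (fun k => iteratedDeriv (j : ℕ) (PhatC α β M (elemOf F k)) x) i)

end ExceptionalHahnJacobiComplex

theorem hh_genBinom (z : ℂ) (k : ℕ) : genBinomC z k = Ring.choose z k := by
  rw [Ring.choose_eq_smul, genBinomC, ← descPochhammer_eval_eq_prod_range, div_eq_inv_mul, smul_eq_mul,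
    ← Polynomial.aeval_eq_smeval, ← descPochhammer_map (Int.castRingHom ℂ), Polynomial.eval_map,
    Polynomial.aeval_def]
  rfl

theorem hh_genBinom_prod (z : ℂ) (k : ℕ) :
    ∏ i ∈ Finset.range k, (z - (i : ℂ)) = (k.factorial : ℂ) * genBinomC z k := by
  rw [genBinomC, mul_div_cancel₀]
  exact_mod_cast k.factorial_ne_zero

theorem hh_poch_binom (z : ℂ) (m : ℕ) :
    pochC (z + 1) m = (m.factorial : ℂ) * genBinomC (z + m) m := by
  rw [← hh_genBinom_prod, pochC, ← Finset.prod_range_reflect]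
  refine Finset.prod_congr rfl fun i hi => ?_
  have : i + 1 ≤ m := Finset.mem_range.1 hi
  rw [Nat.sub_sub, Nat.cast_sub (by omega)]
  push_cast
  ring

theorem hh_poch_neg (n j : ℕ) (h : j ≤ n) :
    pochC (-(n : ℂ)) j * ((n - j).factorial : ℂ) = (-1) ^ j * (n.factorial : ℂ) := by
  have h1 : pochC (-(n : ℂ)) j = (-1) ^ j * (n.descFactorial j : ℂ) := by
    have hc : (-1 : ℂ) ^ j = ∏ _i ∈ Finset.range j, (-1 : ℂ) := by simp
    rw [← descPochhammer_eval_eq_descFactorial, descPochhammer_eval_eq_prod_range, pochC, hc,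
      ← Finset.prod_mul_distrib]
    refine Finset.prod_congr rfl fun i _ => ?_
    ring
  rw [h1, ← Nat.factorial_mul_descFactorial h]
  push_cast
  ring

theorem hh_trinom (z : ℂ) (p q : ℕ) :
    genBinomC z (p + q) * ((p + q).choose p : ℂ) = genBinomC z p * genBinomC (z - p) q := by
  have h := hh_genBinom_prod z (p + q)
  rw [Finset.prod_range_add, hh_genBinom_prod] at h
  have h2 : ∏ x ∈ Finset.range q, (z - ((p + x : ℕ) : ℂ)) = (q.factorial : ℂ) * genBinomC (z - p) q := by
    rw [← hh_genBinom_prod]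
    refine Finset.prod_congr rfl fun i _ => ?_
    push_cast; ring
  rw [h2] at h
  have h3 : ((p+q).choose p : ℂ) * p.factorial * q.factorial = (p+q).factorial := by
    have := Nat.add_choose_mul_factorial_mul_factorial p q
    rw [Nat.choose_symm_add] at *
    exact_mod_cast this
  have hp : (p.factorial : ℂ) ≠ 0 := by exact_mod_cast p.factorial_ne_zero
  have hq : (q.factorial : ℂ) ≠ 0 := by exact_mod_cast q.factorial_ne_zero
  apply mul_left_cancel₀ (mul_ne_zero hp hq)
  rw [← h3] at h
  linear_combination -h

theorem hh_vander (r s : ℂ) (k : ℕ) :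
    ∑ x ∈ Finset.HasAntidiagonal.antidiagonal k, genBinomC r x.1 * genBinomC s x.2 = genBinomC (r + s) k := by
  simp only [hh_genBinom]
  rw [Ring.add_choose_eq k (Commute.all r s)]

theorem hh_jacobi_sum (a b t : ℂ) (n : ℕ) :
    ∑ j ∈ Finset.range (n + 1), genBinomC (n + a) j * genBinomC (n + b) (n - j) *
        (-t) ^ (n - j) * (1 - t) ^ j =
    ∑ k ∈ Finset.range (n + 1), genBinomC (n + a) (n - k) * genBinomC (n + k + a + b) k * (-t) ^ k := by
  rw [← Finset.Nat.sum_antidiagonal_eq_sum_range_succ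
    (fun j i => genBinomC (n + a) j * genBinomC (n + b) i * (-t) ^ i * (1 - t) ^ j)]
  have h2 := Finset.Nat.sum_antidiagonal_eq_sum_range_succ
    (fun k p => genBinomC (n + a) p * genBinomC (n + k + a + b) k * (-t) ^ k) n
  rw [← h2]
  have e1 : ∀ x ∈ Finset.HasAntidiagonal.antidiagonal n,
      genBinomC (n + a) x.1 * genBinomC (n + b) x.2 * (-t) ^ x.2 * (1 - t) ^ x.1 =
      ∑ y ∈ Finset.HasAntidiagonal.antidiagonal x.1, genBinomC (n + a) y.1 * genBinomC (n + a - y.1) y.2 *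
        genBinomC (n + b) x.2 * (-t) ^ (y.2 + x.2) := by
    intro x _
    rw [sub_eq_add_neg, (Commute.all (1:ℂ) (-t)).add_pow', Finset.mul_sum]
    refine Finset.sum_congr rfl fun y hy => ?_
    have hy' : y.1 + y.2 = x.1 := Finset.HasAntidiagonal.mem_antidiagonal.1 hy
    rw [← hh_trinom, hy', nsmul_eq_mul, one_pow, pow_add]
    ring
  have e2 : ∀ x ∈ Finset.HasAntidiagonal.antidiagonal n,
      genBinomC (n + a) x.2 * genBinomC (n + x.1 + a + b) x.1 * (-t) ^ x.1 =
      ∑ y ∈ Finset.HasAntidiagonal.antidiagonal x.1, genBinomC (n + a) x.2 * genBinomC (n + a - x.2) y.1 *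
        genBinomC (n + b) y.2 * (-t) ^ (y.1 + y.2) := by
    intro x hx
    have hx' : x.1 + x.2 = n := Finset.HasAntidiagonal.mem_antidiagonal.1 hx
    have : (n : ℂ) + x.1 + a + b = (n + a - x.2) + (n + b) := by
      rw [← hx']; push_cast; ring
    rw [this, ← hh_vander (n + a - x.2) (n + b), Finset.mul_sum, Finset.sum_mul]
    refine Finset.sum_congr rfl fun y hy => ?_
    have hy' : y.1 + y.2 = x.1 := Finset.HasAntidiagonal.mem_antidiagonal.1 hy
    rw [hy']
    ring
  rw [Finset.sum_congr rfl e1, Finset.sum_congr rfl e2, Finset.sum_sigma', Finset.sum_sigma']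
  refine Finset.sum_bij' (fun x _ => ⟨(x.2.2 + x.1.2, x.2.1), (x.2.2, x.1.2)⟩)
    (fun x _ => ⟨(x.1.2 + x.2.1, x.2.2), (x.1.2, x.2.1)⟩) ?_ ?_ ?_ ?_ ?_
  · rintro ⟨⟨j, i⟩, ⟨p, q⟩⟩ h
    simp at h ⊢; omega
  · rintro ⟨⟨j, i⟩, ⟨p, q⟩⟩ h
    simp at h ⊢; omega
  · rintro ⟨⟨j, i⟩, ⟨p, q⟩⟩ h
    simp at h ⊢; omega
  · rintro ⟨⟨j, i⟩, ⟨p, q⟩⟩ h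
    simp at h ⊢; omega
  · rintro ⟨⟨j, i⟩, ⟨p, q⟩⟩ h
    rfl

theorem hh_jacobi_eq (a b x : ℂ) (n : ℕ) :
    ∑ j ∈ Finset.range (n + 1), pochC (-(n : ℂ)) j * pochC (a + b + (n : ℂ) + 1) j *
      pochC (a + (j : ℂ) + 1) (n - j) / (j.factorial : ℂ) * ((1 - x) / 2) ^ j =
    (n.factorial : ℂ) * jacobiC a b n x := by
  have h : jacobiC a b n x = ∑ j ∈ Finset.range (n + 1), genBinomC (n + a) j *
      genBinomC (n + b) (n - j) * (-((1 - x) / 2)) ^ (n - j) * (1 - (1 - x) / 2) ^ j := by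
    rw [jacobiC, Finset.mul_sum]
    refine Finset.sum_congr rfl fun j hj => ?_
    have hj' : j ≤ n := Nat.lt_succ_iff.1 (Finset.mem_range.1 hj)
    rw [show -((1 - x) / 2) = (2:ℂ)⁻¹ * (x - 1) by ring, show 1 - (1 - x) / 2 = (2:ℂ)⁻¹ * (x + 1) by ring,
      mul_pow, mul_pow]
    have : (2:ℂ)⁻¹ ^ n = 2⁻¹ ^ (n - j) * 2⁻¹ ^ j := by rw [← pow_add, Nat.sub_add_cancel hj']
    rw [this]; ring
  rw [h, hh_jacobi_sum, Finset.mul_sum]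
  refine Finset.sum_congr rfl fun j hj => ?_
  have hj' : j ≤ n := Nat.lt_succ_iff.1 (Finset.mem_range.1 hj)
  rw [hh_poch_binom, hh_poch_binom]
  have h1 := hh_poch_neg n j hj'
  have e1 : a + (j:ℂ) + ((n - j : ℕ) : ℂ) = n + a := by push_cast [Nat.cast_sub hj']; ring
  have e2 : a + b + (n:ℂ) + j = n + j + a + b := by ring
  rw [e1, e2, neg_pow]
  have hjf : (j.factorial : ℂ) ≠ 0 := by exact_mod_cast j.factorial_ne_zero
  field_simp
  linear_combination (genBinomC (n + j + a + b) j * genBinomC (n + a) (n - j) * ((1 - x) / 2) ^ j) * h1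

noncomputable def hp (z ε c : ℂ) (m : ℕ) : ℂ := ∏ i ∈ Finset.range m, (z + ε * (c + i))

theorem hp_zero (z c : ℂ) (m : ℕ) : hp z 0 c m = z ^ m := by simp [hp]

theorem hp_poch (z N c : ℂ) (m : ℕ) (hN : N ≠ 0) : pochC (z * N + c) m = N ^ m * hp z N⁻¹ c m := by
  rw [hp, pochC, ← Finset.card_range m, ← Finset.prod_const, Finset.card_range, ← Finset.prod_mul_distrib]
  refine Finset.prod_congr rfl fun i _ => ?_
  field_simp
  ring

theorem hp_poch' (w z N c : ℂ) (m : ℕ) (hN : N ≠ 0) (h : w = z * N + c) :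
    pochC w m = N ^ m * hp z N⁻¹ c m := by rw [h, hp_poch _ _ _ _ hN]

theorem hp_cont {X : Type*} [TopologicalSpace X] (z e : X → ℂ) (c : ℂ) (m : ℕ) (hz : Continuous z)
    (he : Continuous e) :
    Continuous (fun p => hp (z p) (e p) c m) := by
  unfold hp
  fun_prop

noncomputable def hahnG (a b d e : ℂ) (n : ℕ) (ε x : ℂ) : ℂ :=
  ∑ j ∈ Finset.range (n + 1),
    pochC (-(n : ℂ)) j * pochC (a + b + (n : ℂ) + 1) j * hp (-1) ε (-d + (j : ℂ)) (n - j) *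
      pochC (a + (j : ℂ) + 1) (n - j) * hp (-((1 - x) / 2)) ε (-e) j / (j.factorial : ℂ)

theorem hahnG_cont {X : Type*} [TopologicalSpace X] (ε x : X → ℂ) (a b d e : ℂ) (n : ℕ) (he : Continuous ε)
    (hx : Continuous x) :
    Continuous (fun p => hahnG a b d e n (ε p) (x p)) := by
  unfold hahnG
  refine continuous_finsetSum _ fun j _ => ?_
  have h1 := hp_cont (fun _ => (-1 : ℂ)) ε (-d + j) (n - j) continuous_const he
  have h2 := hp_cont (fun p => (-((1 - x p) / 2) : ℂ)) ε (-e) j (by fun_prop) he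
  fun_prop

theorem hahnG_zero (a b d e : ℂ) (n : ℕ) (x : ℂ) :
    hahnG a b d e n 0 x = (-1) ^ n * n.factorial * jacobiC a b n x := by
  rw [mul_assoc, ← hh_jacobi_eq, Finset.mul_sum, hahnG]
  refine Finset.sum_congr rfl fun j hj => ?_
  have hj' : j ≤ n := Nat.lt_succ_iff.1 (Finset.mem_range.1 hj)
  have : (-1:ℂ) ^ n = (-1) ^ (n - j) * (-1) ^ j := by rw [← pow_add, Nat.sub_add_cancel hj']
  rw [hp_zero, hp_zero, this, neg_pow ((1 - x) / 2)]
  ring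

theorem hahnG_eq (a b d e : ℂ) (n : ℕ) (N N' x y : ℂ) (hN : N ≠ 0) (h1 : N' = N + d)
    (h2 : y = (1 - x) * N / 2 + e) :
    hahnC a b N' n y = N ^ n * hahnG a b d e n N⁻¹ x := by
  rw [hahnC, hahnG, Finset.mul_sum]
  refine Finset.sum_congr rfl fun j hj => ?_
  have hj' : j ≤ n := Nat.lt_succ_iff.1 (Finset.mem_range.1 hj)
  have : N ^ n = N ^ (n - j) * N ^ j := by rw [← pow_add, Nat.sub_add_cancel hj']
  rw [hp_poch' (-N' + j) (-1) N (-d + j) _ hN (by rw [h1]; ring),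
    hp_poch' (-y) (-((1 - x) / 2)) N (-e) _ hN (by rw [h2]; ring), this]
  ring

theorem glue (f : ℝ → ℂ → ℂ) (g : ℂ → ℂ) (K : Set ℂ) (hK : IsCompact K) (G : ℂ → ℂ → ℂ)
    (hG : Continuous (fun p : ℂ × ℂ => G p.1 p.2))
    (h : ∀ᶠ N : ℝ in Filter.atTop, ∀ x, f N x = G (N : ℂ)⁻¹ x) (h0 : ∀ x, G 0 x = g x) :
    TendstoUniformlyOn f g Filter.atTop K := by
  intro u hu
  obtain ⟨v, hv, hv2⟩ := hK.mem_uniformity_of_prod (f := G) (s := Set.univ) (q := 0)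
    (by exact hG.continuousOn) (Set.mem_univ _) (symm_le_uniformity hu)
  rw [nhdsWithin_univ] at hv
  have ht : Filter.Tendsto (fun N : ℝ => ((N : ℂ))⁻¹) Filter.atTop (nhds 0) := by
    have := (Complex.continuous_ofReal.tendsto 0).comp tendsto_inv_atTop_zero
    simpa [Function.comp_def] using this
  filter_upwards [h, ht hv] with N hN hNv x hx
  have := hv2 _ hNv x hx
  rw [h0, ← hN] at this
  exact this

noncomputable def cJ (α β : ℤ) (u j : ℕ) : ℂ :=
  pochC (-(u : ℂ)) j * deriv (fun s : ℂ => pochC ((u : ℂ) - s + (α : ℂ) + (β : ℂ) + 1) j /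
    pochC ((α : ℂ) - s + 1) j) 0 / (j.factorial : ℂ)

theorem cJ_diff (α β : ℤ) (u j : ℕ) (hj : (j : ℤ) ≤ -α - 1) :
    DifferentiableAt ℂ (fun s : ℂ => pochC ((u : ℂ) - s + (α : ℂ) + (β : ℂ) + 1) j /
      pochC ((α : ℂ) - s + 1) j) 0 := by
  have h : pochC ((α : ℂ) - 0 + 1) j ≠ 0 := by
    rw [pochC, Finset.prod_ne_zero_iff]
    intro i hi h
    have hi' := Finset.mem_range.1 hi
    have : ((α + 1 + i : ℤ) : ℂ) = 0 := by push_cast; linear_combination h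
    rw [Int.cast_eq_zero] at this
    omega
  refine DifferentiableAt.div ?_ ?_ h
  · unfold pochC; fun_prop
  · unfold pochC; fun_prop

theorem deriv_gen (C : ℂ) (k : ℕ → ℂ) (g : ℕ → ℂ → ℂ) (n : ℕ)
    (h : ∀ j ∈ Finset.range n, DifferentiableAt ℂ (g j) 0) (f : ℂ → ℂ)
    (hf : ∀ s, f s = C * ∑ j ∈ Finset.range n, k j * g j s) :
    deriv f 0 = C * ∑ j ∈ Finset.range n, k j * deriv (g j) 0 := by
  have : HasDerivAt f (C * ∑ j ∈ Finset.range n, k j * deriv (g j) 0) 0 := by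
    rw [funext hf]
    refine HasDerivAt.const_mul _ ?_
    refine HasDerivAt.fun_sum fun j hj => ?_
    exact (h j hj).hasDerivAt.const_mul _
  exact this.deriv

noncomputable def phiG (α β : ℤ) (u m : ℕ) (ε x : ℂ) : ℂ :=
  pochC ((α : ℂ) + 1) m * ∑ j ∈ Finset.range (u + 1),
    cJ α β u j * hp (-1) ε j (m - j) * hp (-((1 - x) / 2)) ε 0 j

theorem phiG_cont {X : Type*} [TopologicalSpace X] (ε x : X → ℂ) (α β : ℤ) (u m : ℕ) (he : Continuous ε)
    (hx : Continuous x) :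
    Continuous (fun p => phiG α β u m (ε p) (x p)) := by
  unfold phiG
  refine continuous_const.mul (continuous_finsetSum _ fun j _ => ?_)
  have h1 := hp_cont (fun _ => (-1 : ℂ)) ε j (m - j) continuous_const he
  have h2 := hp_cont (fun p => (-((1 - x p) / 2) : ℂ)) ε 0 j (by fun_prop) he
  fun_prop

theorem phiG_zero (α β : ℤ) (u m : ℕ) (x : ℂ) (hu : (u : ℤ) ≤ -α - 1)
    (hm : max u (-α - β - (u : ℤ) - 1).toNat = m) :
    phiG α β u m 0 x = (-1) ^ m * (m.factorial : ℂ) * deriv (fun s : ℂ => phiJC α β u s x) 0 := by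
  have hmf : max u.factorial (-α - β - (u : ℤ) - 1).toNat.factorial = m.factorial := by
    rw [← hm, Monotone.map_max (f := Nat.factorial) (fun a b h => Nat.factorial_le h)]
  rw [deriv_gen (pochC ((α : ℂ) + 1) m / (m.factorial : ℂ))
    (fun j => pochC (-(u : ℂ)) j / (j.factorial : ℂ) * ((1 - x) / 2) ^ j)
    (fun j s => pochC ((u : ℂ) - s + (α : ℂ) + (β : ℂ) + 1) j / pochC ((α : ℂ) - s + 1) j) (u + 1)]
  · have hf : (m.factorial : ℂ) ≠ 0 := by exact_mod_cast m.factorial_ne_zero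
    have : (-1) ^ m * (m.factorial : ℂ) * (pochC ((α : ℂ) + 1) m / (m.factorial : ℂ)) =
      pochC ((α : ℂ) + 1) m * (-1) ^ m := by field_simp
    rw [← mul_assoc, this, mul_assoc, phiG]
    congr 1
    rw [Finset.mul_sum]
    refine Finset.sum_congr rfl fun j hj => ?_
    have hj' : j ≤ u := Nat.lt_succ_iff.1 (Finset.mem_range.1 hj)
    have hjm : j ≤ m := by rw [← hm]; exact hj'.trans (le_max_left _ _)
    have : (-1:ℂ) ^ m = (-1) ^ (m - j) * (-1) ^ j := by rw [← pow_add, Nat.sub_add_cancel hjm]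
    rw [hp_zero, hp_zero, this, neg_pow ((1 - x) / 2), cJ]
    ring
  · intro j hj
    have hj' : j ≤ u := Nat.lt_succ_iff.1 (Finset.mem_range.1 hj)
    exact cJ_diff α β u j (by omega)
  · intro s
    rw [phiJC, hm, hmf]
    congr 1
    refine Finset.sum_congr rfl fun j hj => ?_
    simp only [div_eq_mul_inv, mul_inv]
    ring

theorem phiG_eq (α β : ℤ) (u m : ℕ) (N : ℝ) (x : ℂ) (hu : (u : ℤ) ≤ -α - 1)
    (hm : max u (-α - β - (u : ℤ) - 1).toNat = m) (hN : (m : ℝ) < N) :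
    deriv (fun s : ℂ => phiHC α β N u s ((1 - x) * N / 2)) 0 =
      (N : ℂ) ^ m * phiG α β u m (N : ℂ)⁻¹ x := by
  have hN0 : (N : ℂ) ≠ 0 := by
    have : (0:ℝ) ≤ m := Nat.cast_nonneg m
    exact_mod_cast (by linarith : (0:ℝ) < N).ne'
  rw [deriv_gen (pochC ((α : ℂ) + 1) m)
    (fun j => pochC (-(u : ℂ)) j / (j.factorial : ℂ) * (pochC (-N) m / pochC (-N) j) *
      pochC (-((1 - x) * N / 2)) j)
    (fun j s => pochC ((u : ℂ) - s + (α : ℂ) + (β : ℂ) + 1) j / pochC ((α : ℂ) - s + 1) j) (u + 1)]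
  · rw [phiG, mul_left_comm]
    congr 1
    rw [Finset.mul_sum]
    refine Finset.sum_congr rfl fun j hj => ?_
    have hj' : j ≤ u := Nat.lt_succ_iff.1 (Finset.mem_range.1 hj)
    have hjm : j ≤ m := by rw [← hm]; exact hj'.trans (le_max_left _ _)
    have e : (N:ℂ) ^ m = N ^ (m - j) * N ^ j := by rw [← pow_add, Nat.sub_add_cancel hjm]
    have hne : pochC (-(N:ℂ)) j ≠ 0 := by
      rw [pochC, Finset.prod_ne_zero_iff]
      intro i hi h
      have hi' := Finset.mem_range.1 hi
      have h2 : ((i : ℝ) : ℂ) = (N : ℂ) := by push_cast; linear_combination h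
      rw [Complex.ofReal_inj] at h2
      have : (i : ℝ) ≤ m := by exact_mod_cast (by omega : i ≤ m)
      linarith
    have hsplit : pochC (-(N:ℂ)) m = pochC (-N) j * pochC (-N + j) (m - j) := by
      conv_lhs => rw [← Nat.add_sub_cancel' hjm]
      rw [pochC, Finset.prod_range_add, pochC, pochC]
      congr 1
      refine Finset.prod_congr rfl fun i _ => ?_
      push_cast; ring
    rw [hsplit, mul_div_cancel_left₀ _ hne,
      hp_poch' (-(N:ℂ) + j) (-1) N j _ hN0 (by ring),
      hp_poch' (-((1 - x) * (N:ℂ) / 2)) (-((1 - x) / 2)) N 0 _ hN0 (by ring), e, cJ]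
    ring
  · intro j hj
    have hj' : j ≤ u := Nat.lt_succ_iff.1 (Finset.mem_range.1 hj)
    exact cJ_diff α β u j (by omega)
  · intro s
    rw [phiHC, hm, mul_assoc, Finset.mul_sum]
    congr 1
    refine Finset.sum_congr rfl fun j hj => ?_
    simp only [div_eq_mul_inv, mul_inv]
    ring

/-- the polynomials `P̂_n^{α,β;M}` as limits of the polynomials `Ĥ_n^{α,β,N;M}`,
uniformly on compact subsets of `ℂ`. -/
theorem Hhat_to_Phat_limit
    (α β : ℤ) (M : ℕ → ℝ)
    (hαβ : α ≤ β) (hβ : β ≤ -1)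
    (hM : ∀ i, M i ≠ 0 ∧ M i ≠ 1)
    (n : ℕ) (K : Set ℂ) (hK : IsCompact K) :
    TendstoUniformlyOn
      (fun (N : ℝ) (x : ℂ) => HhatC α β (N : ℂ) M n ((1 - x) * (N : ℂ) / 2) / (N : ℂ) ^ n)
      (fun x : ℂ => (-1 : ℂ) ^ n * (n.factorial : ℂ) * PhatC α β M n x)
      Filter.atTop K := by
  by_cases c1 : ⌈((-α - β : ℤ) : ℚ) / 2⌉ ≤ (n : ℤ) ∧ (n : ℤ) ≤ -α - 1
  · have h2n : -α - β ≤ 2 * (n : ℤ) := by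
      have := Int.ceil_le.1 c1.1
      rw [div_le_iff₀ (by norm_num)] at this
      have h : (-α - β : ℤ) ≤ (n : ℤ) * 2 := by exact_mod_cast this
      linarith
    have c12 := c1.2
    simp only [HhatC, PhatC, if_pos c1]
    obtain ⟨v, hv⟩ : ∃ v : ℕ, v = (-α - β - (n : ℤ) - 1).toNat := ⟨_, rfl⟩
    rw [← hv]
    have m1 : max n (-α - β - (n : ℤ) - 1).toNat = n := by omega
    have m2 : max v (-α - β - (v : ℤ) - 1).toNat = n := by omega
    have u2 : (v : ℤ) ≤ -α - 1 := by omega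
    refine glue _ _ K hK (fun ε x => phiG α β n n ε x - phiG α β v n ε x) ?_ ?_ ?_
    · exact (phiG_cont _ _ _ _ _ _ continuous_fst continuous_snd).sub
        (phiG_cont _ _ _ _ _ _ continuous_fst continuous_snd)
    · filter_upwards [Filter.eventually_gt_atTop (n : ℝ)] with N hN x
      have hN0 : (N : ℂ) ≠ 0 := by
        have : (0:ℝ) ≤ n := Nat.cast_nonneg n
        exact_mod_cast (by linarith : (0:ℝ) < N).ne'
      rw [phiG_eq α β n n N x c12 m1 hN, phiG_eq α β v n N x u2 m2 hN]
      field_simp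
    · intro x
      rw [phiG_zero α β n n x c12 m1, phiG_zero α β v n x u2 m2]
      ring
  · by_cases c2 : -α ≤ (n : ℤ) ∧ (n : ℤ) ≤ -α - β - 1
    · obtain ⟨c21, c22⟩ := c2
      simp only [HhatC, PhatC, if_neg c1, if_pos (And.intro c21 c22)]
      rw [add_comm (n : ℤ) α, add_comm (n : ℤ) β]
      generalize hp' : (-1 : ℂ) ^ (β + (n : ℤ)) = sg
      generalize (β + (n : ℤ)).toNat.factorial = f1
      generalize M (α + (n : ℤ)).toNat = M0
      obtain ⟨v, hv⟩ : ∃ v : ℕ, v = (-α - β - (n : ℤ) - 1).toNat := ⟨_, rfl⟩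
      obtain ⟨w, hw⟩ : ∃ w : ℕ, w = (α + (n : ℤ)).toNat := ⟨_, rfl⟩
      obtain ⟨k, hk⟩ : ∃ k : ℕ, k = (-α).toNat := ⟨_, rfl⟩
      obtain ⟨l, hl⟩ : ∃ l : ℕ, l = (2 * (n : ℤ) + α + β + 1).toNat := ⟨_, rfl⟩
      rw [← hv, ← hw, ← hk, ← hl]
      have n1 : n = k + w := by omega
      have n2 : n = l + v := by omega
      refine glue _ _ K hK (fun ε x => sg * f1 * ((v.factorial : ℂ) * hp (-((1 - x) / 2)) ε 0 k *
        hahnG (-(α : ℂ)) β α α w ε x + (w.factorial : ℂ) *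
          hp (-1) ε (- (α : ℂ) - (β : ℂ) - (n : ℂ) - 1) l / ((M0 : ℂ) - 1) *
          hahnG α β 0 0 v ε x)) ?_ ?_ ?_
      · have h1 := hp_cont (fun p : ℂ × ℂ => (-((1 - p.2) / 2) : ℂ)) Prod.fst 0 k
          (by fun_prop) continuous_fst
        have h2 := hp_cont (fun p : ℂ × ℂ => (-1 : ℂ)) Prod.fst (- (α : ℂ) - (β : ℂ) - (n : ℂ) - 1) l
          (by fun_prop) continuous_fst
        have h3 := hahnG_cont (Prod.fst : ℂ × ℂ → ℂ) Prod.snd (-(α : ℂ)) β α α w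
          continuous_fst continuous_snd
        have h4 := hahnG_cont (Prod.fst : ℂ × ℂ → ℂ) Prod.snd (α : ℂ) β 0 0 v
          continuous_fst continuous_snd
        fun_prop
      · filter_upwards [Filter.eventually_gt_atTop (0 : ℝ)] with N hN x
        have hN0 : (N : ℂ) ≠ 0 := by exact_mod_cast hN.ne'
        rw [div_eq_iff (pow_ne_zero _ hN0),
          hahnG_eq _ _ α α w N _ x _ hN0 (add_comm _ _) rfl,
          hahnG_eq _ _ 0 0 v N _ x _ hN0 (add_zero _).symm (add_zero _).symm,
          hp_poch' (-((1 - x) * (N:ℂ) / 2)) (-((1 - x) / 2)) N 0 _ hN0 (by ring),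
          hp_poch' (-(N:ℂ) - α - β - n - 1) (-1) N (-(α : ℂ) - β - n - 1) _ hN0 (by ring)]
        have e1 : (N:ℂ) ^ n = N ^ k * N ^ w := by rw [← pow_add, ← n1]
        have e2 : (N:ℂ) ^ n = N ^ l * N ^ v := by rw [← pow_add, ← n2]
        rw [mul_add, mul_add (sg * (f1 : ℂ)), add_mul]
        congr 1
        · rw [e1]; ring
        · rw [e2]; ring
      · intro x
        have hf : (n.factorial : ℂ) ≠ 0 := by exact_mod_cast n.factorial_ne_zero
        have e1 : (-1:ℂ) ^ n = (-1) ^ k * (-1) ^ w := by rw [← pow_add, ← n1]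
        have e2 : (-1:ℂ) ^ n = (-1) ^ l * (-1) ^ v := by rw [← pow_add, ← n2]
        simp only [hp_zero, hahnG_zero]
        rw [neg_pow ((1 - x) / 2)]
        have e3 : (-1:ℂ) ^ n * (n.factorial : ℂ) * (sg * ((w.factorial : ℂ) * f1 * v.factorial) /
            (n.factorial : ℂ) * (((M0 : ℂ) - 1)⁻¹ * jacobiC α β v x +
              ((1 - x) / 2) ^ k * jacobiC (-α) β w x)) =
            (-1) ^ n * (sg * ((w.factorial : ℂ) * f1 * v.factorial)) *
              (((1 - x) / 2) ^ k * jacobiC (-α) β w x) +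
            (-1) ^ n * (sg * ((w.factorial : ℂ) * f1 * v.factorial)) *
              (((M0 : ℂ) - 1)⁻¹ * jacobiC α β v x) := by
          rw [mul_div_assoc, mul_comm sg]
          field_simp
          ring
        rw [e3, mul_add]
        congr 1
        · rw [e1]; ring
        · rw [e2]; ring
    · simp only [HhatC, PhatC, if_neg c1, if_neg c2]
      refine glue _ _ K hK (hahnG α β 0 0 n) ?_ ?_ ?_
      · exact hahnG_cont _ _ _ _ _ _ _ continuous_fst continuous_snd
      · filter_upwards [Filter.eventually_gt_atTop (0 : ℝ)] with N hN x
        have hN0 : (N : ℂ) ≠ 0 := by exact_mod_cast hN.ne'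
        rw [hahnG_eq _ _ 0 0 n N _ x _ hN0 (add_zero _).symm (add_zero _).symm,
          mul_div_cancel_left₀ _ (pow_ne_zero _ hN0)]
      · intro x
        rw [hahnG_zero]
end
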